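/- Under the null hypothesis that the latent process exists but is serially independent, the score statistic for serial dependence is asymptotically chi-squared with L degrees of freedom. Precisely: let α̃_t, t = 1,...,n, be i.i.d. standard normal variables, let τ₀ > 0 and β₀ ∈ ℝʳ, set W_t = x_tᵀβ₀ + √τ₀ α̃_t, and let the observations Y_t be conditionally independent given (α̃_t) with Y_t | W_t ~ Binomial(m_t, ḃ(W_t)). Let δ̂⁽¹⁾_n = (β̂⁽¹⁾_n, τ̂⁽¹⁾_n) be a (measurable) maximizer of the marginal log-likelihood l₁(δ) = Σ_{t=1}^n log ∫_ℝ exp(y_t(x_tᵀβ + √τ α) − m_t b(x_tᵀβ + √τ α) + log C(m_t, y_t)) φ(α) dα over the compact parameter space Θ = {β : ‖β − β₀‖ ≤ d₁} ∩ {τ ≥ 0 : |τ − τ₀| ≤ d₂}, and assume (Condition 4) that the pointwise limit Q(δ) of n⁻¹ l₁(δ) exists on Θ and has a unique maximum at δ₀ = (β₀, τ₀). For δ = (β, τ) define the marginal density f(y_t; δ) = ∫_ℝ f(y_t | x_tᵀβ + √τ α) φ(α) dα and the residual u_t(δ) = y_t − f(y_t; δ)⁻¹ ∫_ℝ m_t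 ḃ(x_tᵀβ + √τ α) f(y_t | x_tᵀβ + √τ α) φ(α) dα, the lag-a score S_{ψ_a}(δ) = τ Σ_{t=a+1}^n u_t(δ) u_{t−a}(δ), the estimated variance Ω̂_{aa} = τ̂² Σ_{t=a+1}^n Ê(U_t²) Ê(U_{t−a}²) where Ê(U_t²) = Σ_{y=0}^{m_t} f(y; δ̂⁽¹⁾_n) u_t(y; δ̂⁽¹⁾_n)², and the statistic Q̂_ψ(L) = Σ_{a=1}^L S_{ψ_a}(δ̂⁽¹⁾_n)² / Ω̂_{aa}. Then, as n → ∞, Q̂_ψ(L) converges in distribution to the chi-squared distribution with L degrees of freedom (the law of Z₁² + ... + Z_L² for independent standard normals Z_a). -/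

import Mathlib

/-!
Integrating out the latent variables, the observations at level `n` are independent with the
marginal masses `f(·; δ₀)`, and the residual `u_t(δ)` is a bounded function of `Y_t`, centred when
`δ = δ₀`.

*Limit at the true parameter.* A linear combination over the lags of the sums `∑ u_t u_{t-a}` at
`δ₀` is a sum of bounded martingale differences `u_t ∑ θ_a u_{t-a}`. McLeish's product argument for
characteristic functions, together with a variance bound for sums with finite-range dependence
applied to the squared differences, gives the joint central limit theorem.

*Consistency.* The normalised log-likelihoods are equicontinuous on the compact parameter space, so
convergence to a limit with a unique maximum forces the maximisers to converge to `δ₀`.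

*Replacing `δ₀` by the estimator.* Neither a rate of convergence nor a Taylor expansion is needed.
With `b_t(δ)` the mean of `u_t(δ)` under `δ₀`, the lagged sum at `δ` is a martingale plus
`∑ b_t b_{t-a}`. The martingales, indexed by `δ`, are stochastically equicontinuous at scale `√n` by
Azuma's inequality and chaining. The remainder is at most `∑ b_t²`, hence at most a multiple of the
Kullback–Leibler divergence of `f(·; δ)` from `f(·; δ₀)`. Since the estimator has at least the
likelihood of `δ₀`, that divergence is bounded by the fluctuation of the log-likelihood, which is
`o(√n)` by the same equicontinuity.

*Conclusion.* The estimated variances divided by `n`, without their factor `τ̂²`, are Lipschitz in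
`δ` and bounded away from zero. As `τ̂²` cancels in the statistic, Slutsky's theorem applies.
-/

open MeasureTheory ProbabilityTheory Filter Finset Matrix Topology

noncomputable section

/-- `b(w) = log(1 + e^w)`. -/
def bfun (w : ℝ) : ℝ := Real.log (1 + Real.exp w)

/-- `ḃ(w) = e^w / (1 + e^w)`. -/
def bdot (w : ℝ) : ℝ := Real.exp w / (1 + Real.exp w)

/-- The standard normal density `φ(α) = (2π)^{-1/2} exp(-α²/2)`. -/
def stdNormalPDF (a : ℝ) : ℝ := (Real.sqrt (2 * Real.pi))⁻¹ * Real.exp (-(a ^ 2) / 2)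

/-- The binomial density at state `w`: `f(y | w) = exp(y·w − m·b(w) + log C(m, y))`. -/
def binDens (m y : ℕ) (w : ℝ) : ℝ :=
  Real.exp ((y : ℝ) * w - (m : ℝ) * bfun w + Real.log (Nat.choose m y))

/-! ### Binomial and mixed binomial masses -/

lemma bdot_pos (w : ℝ) : 0 < bdot w := by unfold bdot; positivity

lemma bdot_lt_one (w : ℝ) : bdot w < 1 := by
  unfold bdot
  rw [div_lt_one (by positivity)]
  linarith

lemma one_sub_bdot (w : ℝ) : 1 - bdot w = (1 + Real.exp w)⁻¹ := by
  unfold bdot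
  field_simp
  ring

lemma bfun_le_one_add_abs (w : ℝ) : bfun w ≤ 1 + |w| := by
  have h_two : 2 ≤ Real.exp 1 := by linarith [Real.add_one_le_exp 1]
  have h_exp : Real.exp w ≤ Real.exp |w| := Real.exp_le_exp.2 (le_abs_self w)
  have h_one : 1 ≤ Real.exp |w| := Real.one_le_exp (abs_nonneg w)
  rw [bfun, Real.log_le_iff_le_exp (by positivity), Real.exp_add]
  nlinarith

lemma hasDerivAt_bfun (w : ℝ) : HasDerivAt bfun (bdot w) w :=
  ((Real.hasDerivAt_exp w).const_add 1).log (by positivity)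

lemma binDens_pos (m y : ℕ) (w : ℝ) : 0 < binDens m y w := Real.exp_pos _

lemma binDens_eq_choose_mul {m y : ℕ} (h : y ≤ m) (w : ℝ) :
    binDens m y w = m.choose y * bdot w ^ y * (1 - bdot w) ^ (m - y) := by
  obtain ⟨k, rfl⟩ := Nat.exists_eq_add_of_le h
  have h_choose : (0 : ℝ) < (y + k).choose y := by exact_mod_cast Nat.choose_pos h
  have h_pos : 0 < 1 + Real.exp w := by positivity
  rw [binDens, bfun, Real.exp_add, Real.exp_sub, Real.exp_log h_choose, Real.exp_nat_mul,
    Real.exp_nat_mul, Real.exp_log h_pos, one_sub_bdot, bdot, Nat.add_sub_cancel_left, pow_add,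
    div_pow, inv_pow]
  field_simp

lemma binDens_eq_eval_bernsteinPolynomial {m y : ℕ} (h : y ≤ m) (w : ℝ) :
    binDens m y w = (bernsteinPolynomial ℝ m y).eval (bdot w) := by
  simp [binDens_eq_choose_mul h, bernsteinPolynomial]

lemma sum_binDens (m : ℕ) (w : ℝ) : ∑ y ∈ range (m + 1), binDens m y w = 1 := by
  rw [sum_congr rfl fun y hy => binDens_eq_eval_bernsteinPolynomial (mem_range_succ_iff.1 hy) w,
    ← Polynomial.eval_finsetSum, bernsteinPolynomial.sum, Polynomial.eval_one]

lemma sum_mul_binDens (m : ℕ) (w : ℝ) :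
    ∑ y ∈ range (m + 1), (y : ℝ) * binDens m y w = m * bdot w := by
  have h := congrArg (Polynomial.eval (bdot w)) (bernsteinPolynomial.sum_smul ℝ m)
  simp only [Polynomial.eval_finsetSum, nsmul_eq_mul, Polynomial.eval_mul, Polynomial.eval_natCast,
    Polynomial.eval_X] at h
  rw [← h]
  exact sum_congr rfl fun y hy => by
    rw [binDens_eq_eval_bernsteinPolynomial (mem_range_succ_iff.1 hy)]

lemma binDens_le_one {m y : ℕ} (h : y ≤ m) (w : ℝ) : binDens m y w ≤ 1 :=
  (single_le_sum (f := fun y => binDens m y w) (fun i _ => (binDens_pos m i w).le)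
    (mem_range_succ_iff.2 h)).trans_eq (sum_binDens m w)

lemma bdot_mul_binDens {m y : ℕ} (h : y ≤ m) (w : ℝ) :
    bdot w * binDens m y w = (y + 1) / (m + 1) * binDens (m + 1) (y + 1) w := by
  have h_choose : ((m : ℝ) + 1) * m.choose y = (m + 1).choose (y + 1) * ((y : ℝ) + 1) := by
    exact_mod_cast Nat.add_one_mul_choose_eq m y
  rw [binDens_eq_choose_mul h, binDens_eq_choose_mul (by lia : y + 1 ≤ m + 1),
    Nat.add_sub_add_right, pow_succ, div_mul_eq_mul_div, eq_div_iff (by positivity)]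
  linear_combination bdot w ^ y * bdot w * (1 - bdot w) ^ (m - y) * h_choose

lemma hasDerivAt_binDens (m y : ℕ) (w : ℝ) :
    HasDerivAt (binDens m y) ((y - m * bdot w) * binDens m y w) w := by
  have h_exponent : HasDerivAt (fun w => (y : ℝ) * w - m * bfun w + Real.log (m.choose y))
      (y - m * bdot w) w := by
    simpa using (((hasDerivAt_id w).const_mul (y : ℝ)).sub
      ((hasDerivAt_bfun w).const_mul (m : ℝ))).add_const (Real.log (m.choose y))
  exact h_exponent.exp.congr_deriv (mul_comm _ _)

lemma continuous_binDens (m y : ℕ) : Continuous (binDens m y) :=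
  continuous_iff_continuousAt.2 fun w => (hasDerivAt_binDens m y w).continuousAt

lemma abs_sub_mul_bdot_le {m y : ℕ} (h : y ≤ m) (w : ℝ) : |(y : ℝ) - m * bdot w| ≤ m := by
  have h_cast : (y : ℝ) ≤ m := by exact_mod_cast h
  have h_mean : m * bdot w ≤ m := mul_le_of_le_one_right (Nat.cast_nonneg m) (bdot_lt_one w).le
  have h_nonneg : 0 ≤ m * bdot w := mul_nonneg (Nat.cast_nonneg m) (bdot_pos w).le
  rw [abs_le]
  constructor <;> linarith [(Nat.cast_nonneg y : (0 : ℝ) ≤ y)]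

lemma abs_binDens_sub_le {m y : ℕ} (h : y ≤ m) (v w : ℝ) :
    |binDens m y v - binDens m y w| ≤ m * |v - w| := by
  refine convex_univ.norm_image_sub_le_of_norm_hasDerivWithin_le
    (fun z _ => (hasDerivAt_binDens m y z).hasDerivWithinAt) (fun z _ => ?_)
    (Set.mem_univ w) (Set.mem_univ v)
  rw [Real.norm_eq_abs, abs_mul, abs_of_pos (binDens_pos m y z)]
  exact (mul_le_of_le_one_right (abs_nonneg _) (binDens_le_one h z)).trans
    (abs_sub_mul_bdot_le h z)

lemma exp_neg_le_binDens {m y : ℕ} (h : y ≤ m) (w : ℝ) :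
    Real.exp (-(2 * m * (1 + |w|))) ≤ binDens m y w := by
  refine Real.exp_le_exp.2 ?_
  have h_choose : 0 ≤ Real.log (m.choose y) :=
    Real.log_nonneg (by exact_mod_cast Nat.choose_pos h)
  have h_cast : (y : ℝ) ≤ m := by exact_mod_cast h
  have h_linear : -(m * |w|) ≤ y * w := by
    have h_abs : |y * w| ≤ m * |w| := by
      rw [abs_mul, Nat.abs_cast]
      exact mul_le_mul_of_nonneg_right h_cast (abs_nonneg w)
    exact (abs_le.1 h_abs).1
  have h_log : m * bfun w ≤ m * (1 + |w|) :=
    mul_le_mul_of_nonneg_left (bfun_le_one_add_abs w) (Nat.cast_nonneg m)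
  linarith [(Nat.cast_nonneg m : (0 : ℝ) ≤ m)]

/-- The marginal mass `∫ f(y | w + s α) dν(α)` of a binomial count whose state has linear predictor
`w` and a random effect with law `ν` and scale `s`; the parameter is the pair `p = (w, s)`. -/
def margDens (ν : Measure ℝ) (m : ℕ) (p : ℝ × ℝ) (y : ℕ) : ℝ :=
  ∫ α, binDens m y (p.1 + p.2 * α) ∂ν

/-- The residual of a count `y`: its distance to the posterior mean of `m ḃ(W)` given `y`. -/
def margRes (ν : Measure ℝ) (m : ℕ) (p : ℝ × ℝ) (y : ℕ) : ℝ :=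
  y - (margDens ν m p y)⁻¹ * ∫ α, m * bdot (p.1 + p.2 * α) * binDens m y (p.1 + p.2 * α) ∂ν

lemma integral_mul_stdNormalPDF (g : ℝ → ℝ) :
    ∫ α, g α * stdNormalPDF α = ∫ α, g α ∂(gaussianReal 0 1) := by
  rw [integral_gaussianReal_eq_integral_smul one_ne_zero]
  simp [gaussianPDFReal, stdNormalPDF, mul_comm]

/-- Weighting a binomial mass by the success probability adds a trial and a success, so the
posterior mean is a ratio of marginal masses. -/
lemma margRes_eq_sub_mul_div {m y : ℕ} (h : y ≤ m) (ν : Measure ℝ) (p : ℝ × ℝ) :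
    margRes ν m p y
      = y - m * ((y + 1) / (m + 1)) * (margDens ν (m + 1) p (y + 1) / margDens ν m p y) := by
  simp only [margRes, mul_assoc, bdot_mul_binDens h, integral_const_mul]
  simp only [margDens]
  ring

section Marginal

variable {ν : Measure ℝ} [IsProbabilityMeasure ν] {m y : ℕ}

lemma integrable_binDens (h : y ≤ m) (p : ℝ × ℝ) :
    Integrable (fun α => binDens m y (p.1 + p.2 * α)) ν := by
  refine Integrable.of_bound (C := 1)
    ((continuous_binDens m y).comp (by fun_prop)).aestronglyMeasurable (.of_forall fun α => ?_)
  rw [Real.norm_eq_abs, abs_of_pos (binDens_pos _ _ _)]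
  exact binDens_le_one h _

lemma integrable_mul_bdot_mul_binDens (h : y ≤ m) (p : ℝ × ℝ) :
    Integrable (fun α => m * bdot (p.1 + p.2 * α) * binDens m y (p.1 + p.2 * α)) ν := by
  simp only [mul_assoc, bdot_mul_binDens h]
  exact ((integrable_binDens (Nat.succ_le_succ h) p).const_mul _).const_mul _

lemma margDens_le_one (h : y ≤ m) (p : ℝ × ℝ) : margDens ν m p y ≤ 1 := by
  simpa [margDens] using integral_mono (integrable_binDens h p) (integrable_const (μ := ν) 1)
    fun α => binDens_le_one h (p.1 + p.2 * α)

lemma sum_margDens (m : ℕ) (p : ℝ × ℝ) : ∑ y ∈ range (m + 1), margDens ν m p y = 1 := by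
  simp only [margDens]
  rw [← integral_finsetSum _ fun y hy => integrable_binDens (mem_range_succ_iff.1 hy) p]
  simp [sum_binDens]

lemma exists_forall_le_margDens (ν : Measure ℝ) [IsProbabilityMeasure ν] (M : ℕ) (B : ℝ) :
    ∃ c > 0, ∀ m y : ℕ, y ≤ m → m ≤ M → ∀ p : ℝ × ℝ, ‖p‖ ≤ B → c ≤ margDens ν m p y := by
  let g : ℝ → ℝ := fun α => Real.exp (-(2 * M * (1 + |B| * (1 + |α|))))
  have hg : Integrable g ν := by
    refine Integrable.of_bound (C := 1) (by fun_prop) (.of_forall fun α => ?_)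
    rw [Real.norm_eq_abs, abs_of_pos (Real.exp_pos _), Real.exp_le_one_iff, neg_nonpos]
    positivity
  refine ⟨∫ α, g α ∂ν, integral_exp_pos hg, fun m y h hM p hp =>
    integral_mono hg (integrable_binDens h p) fun α => ?_⟩
  have h_state : |p.1 + p.2 * α| ≤ |B| * (1 + |α|) := by
    have h_fst : |p.1| ≤ |B| := (norm_fst_le p).trans (hp.trans (le_abs_self B))
    have h_snd : |p.2| ≤ |B| := (norm_snd_le p).trans (hp.trans (le_abs_self B))
    calc |p.1 + p.2 * α| ≤ |p.1| + |p.2| * |α| := by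
          rw [← abs_mul]
          exact abs_add_le _ _
      _ ≤ |B| + |B| * |α| := by gcongr
      _ = |B| * (1 + |α|) := by ring
  refine (Real.exp_le_exp.2 (neg_le_neg ?_)).trans (exp_neg_le_binDens h _)
  gcongr

lemma margDens_pos (h : y ≤ m) (p : ℝ × ℝ) : 0 < margDens ν m p y := by
  obtain ⟨c, hc, hle⟩ := exists_forall_le_margDens ν m ‖p‖
  exact hc.trans_le (hle m y h le_rfl p le_rfl)

lemma margDens_mul_margRes (h : y ≤ m) (p : ℝ × ℝ) :
    margDens ν m p y * margRes ν m p y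
      = ∫ α, (y - m * bdot (p.1 + p.2 * α)) * binDens m y (p.1 + p.2 * α) ∂ν := by
  have h_ne := (margDens_pos (ν := ν) h p).ne'
  simp only [sub_mul]
  rw [integral_sub ((integrable_binDens h p).const_mul _) (integrable_mul_bdot_mul_binDens h p),
    integral_const_mul, margRes, mul_sub, mul_inv_cancel_left₀ h_ne, ← margDens]
  ring

lemma sum_margDens_mul_margRes (m : ℕ) (p : ℝ × ℝ) :
    ∑ y ∈ range (m + 1), margDens ν m p y * margRes ν m p y = 0 := by
  have h_score : ∀ w, ∑ y ∈ range (m + 1), (y - m * bdot w) * binDens m y w = 0 := fun w => by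
    simp only [sub_mul, sum_sub_distrib, sum_mul_binDens, ← mul_sum, sum_binDens, mul_one, sub_self]
  rw [sum_congr rfl fun y hy => margDens_mul_margRes (mem_range_succ_iff.1 hy) p,
    ← integral_finsetSum]
  · simp [h_score]
  · intro y hy
    simp only [sub_mul]
    exact ((integrable_binDens (mem_range_succ_iff.1 hy) p).const_mul _).sub
      (integrable_mul_bdot_mul_binDens (mem_range_succ_iff.1 hy) p)

lemma abs_margRes_le (h : y ≤ m) (p : ℝ × ℝ) : |margRes ν m p y| ≤ m := by
  have h_pos := margDens_pos (ν := ν) h p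
  have h_abs : |margDens ν m p y * margRes ν m p y| ≤ m * margDens ν m p y := by
    rw [margDens_mul_margRes h, margDens, ← integral_const_mul]
    refine norm_integral_le_of_norm_le (f := fun α => (y - m * bdot (p.1 + p.2 * α)) *
      binDens m y (p.1 + p.2 * α)) ((integrable_binDens h p).const_mul _) (.of_forall fun α => ?_)
    rw [Real.norm_eq_abs, abs_mul, abs_of_pos (binDens_pos _ _ _)]
    exact mul_le_mul_of_nonneg_right (abs_sub_mul_bdot_le h _) (binDens_pos _ _ _).le
  rw [abs_mul, abs_of_pos h_pos, mul_comm] at h_abs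
  exact le_of_mul_le_mul_right h_abs h_pos

lemma abs_margDens_sub_le (hν : Integrable (fun α => |α|) ν) (h : y ≤ m) (p q : ℝ × ℝ) :
    |margDens ν m p y - margDens ν m q y| ≤ m * (1 + ∫ α, |α| ∂ν) * dist p q := by
  rw [margDens, margDens, ← integral_sub (integrable_binDens h p) (integrable_binDens h q)]
  have h_bound : Integrable (fun α => m * dist p q * (1 + |α|)) ν :=
    ((integrable_const _).add hν).const_mul _
  refine (norm_integral_le_of_norm_le (f := fun α => binDens m y (p.1 + p.2 * α) -
    binDens m y (q.1 + q.2 * α)) h_bound (.of_forall fun α => ?_)).trans_eq ?_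
  · have h_fst : |p.1 - q.1| ≤ dist p q := le_max_left _ _
    have h_snd : |p.2 - q.2| ≤ dist p q := le_max_right _ _
    calc |binDens m y (p.1 + p.2 * α) - binDens m y (q.1 + q.2 * α)|
        ≤ m * |(p.1 + p.2 * α) - (q.1 + q.2 * α)| := abs_binDens_sub_le h _ _
      _ = m * |(p.1 - q.1) + (p.2 - q.2) * α| := by ring_nf
      _ ≤ m * (|p.1 - q.1| + |p.2 - q.2| * |α|) := by
          rw [← abs_mul]
          gcongr
          exact abs_add_le _ _
      _ ≤ m * (dist p q + dist p q * |α|) := by gcongr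
      _ = m * dist p q * (1 + |α|) := by ring
  · rw [integral_const_mul, integral_add (integrable_const _) hν]
    simp only [integral_const, probReal_univ, smul_eq_mul, mul_one]
    ring

lemma continuous_margDens (hν : Integrable (fun α => |α|) ν) (h : y ≤ m) :
    Continuous fun p => margDens ν m p y :=
  (LipschitzWith.of_dist_le' (abs_margDens_sub_le hν h)).continuous

lemma continuous_margRes (hν : Integrable (fun α => |α|) ν) (h : y ≤ m) :
    Continuous fun p => margRes ν m p y := by
  simp only [margRes_eq_sub_mul_div h]
  exact continuous_const.sub (continuous_const.mul
    ((continuous_margDens hν (Nat.succ_le_succ h)).div (continuous_margDens hν h)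
      fun p => (margDens_pos h p).ne'))

end Marginal

/-! ### Regular models -/

lemma abs_log_sub_log_le {c a b : ℝ} (hc : 0 < c) (ha : c ≤ a) (hb : c ≤ b) :
    |Real.log a - Real.log b| ≤ c⁻¹ * |a - b| := by
  refine (convex_Ici c).norm_image_sub_le_of_norm_hasDerivWithin_le
    (fun z hz => (Real.hasDerivAt_log (hc.trans_le hz).ne').hasDerivWithinAt) (fun z hz => ?_) hb ha
  rw [norm_inv, Real.norm_eq_abs, abs_of_pos (hc.trans_le hz)]
  exact inv_anti₀ hc hz

lemma abs_div_sub_div_le {c a b a' b' k : ℝ} (hc : 0 < c) (hb : c ≤ b) (hb' : c ≤ b')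
    (ha' : |a'| ≤ 1) (hb'_one : b' ≤ 1) (h_num : |a - a'| ≤ k) (h_den : |b - b'| ≤ k) :
    |a / b - a' / b'| ≤ 2 * k / c ^ 2 := by
  have hb_pos := hc.trans_le hb
  have hb'_pos := hc.trans_le hb'
  have h_split : a / b - a' / b' = ((a - a') * b' - a' * (b - b')) / (b * b') := by
    field_simp
    ring
  have h_numerator : |(a - a') * b' - a' * (b - b')| ≤ 2 * k := by
    calc |(a - a') * b' - a' * (b - b')| ≤ |a - a'| * b' + |a'| * |b - b'| := by
          rw [← abs_of_pos hb'_pos, ← abs_mul, ← abs_mul, abs_of_pos hb'_pos]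
          exact abs_sub _ _
      _ ≤ k * 1 + 1 * k := by
          gcongr
          exact (abs_nonneg _).trans h_num
      _ = 2 * k := by ring
  rw [h_split, abs_div, abs_of_pos (mul_pos hb_pos hb'_pos), sq]
  exact div_le_div₀ ((abs_nonneg _).trans h_numerator) h_numerator (by positivity)
    (mul_le_mul hb hb' hc.le hb_pos.le)

/-- The regularity of a parametric family of masses `f δ` on `{0, …, m}` with scores `u δ` that the
asymptotic theory relies on: `u δ` is centred under `f δ`, and on the parameter set `B` the
scores are bounded by `K` and log-masses and scores are Lipschitz with constant `K`. -/
structure RegularModel {P : Type*} [PseudoMetricSpace P] (B : Set P) (K : ℝ) (m : ℕ)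
    (f u : P → ℕ → ℝ) : Prop where
  density_pos : ∀ δ, ∀ y ≤ m, 0 < f δ y
  sum_density : ∀ δ, ∑ y ∈ range (m + 1), f δ y = 1
  sum_density_mul_score : ∀ δ, ∑ y ∈ range (m + 1), f δ y * u δ y = 0
  abs_score_le : ∀ δ ∈ B, ∀ y ≤ m, |u δ y| ≤ K
  abs_log_sub_le : ∀ δ ∈ B, ∀ δ' ∈ B, ∀ y ≤ m,
    |Real.log (f δ y) - Real.log (f δ' y)| ≤ K * dist δ δ'
  abs_score_sub_le : ∀ δ ∈ B, ∀ δ' ∈ B, ∀ y ≤ m, |u δ y - u δ' y| ≤ K * dist δ δ'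

/-- The variance of the score `u` under the masses `f` on `{0, …, m}`, for a score centred
under `f`; in the paper `E(U_t²)`. -/
def scoreVar (m : ℕ) (f u : ℕ → ℝ) : ℝ := ∑ y ∈ range (m + 1), f y * u y ^ 2

namespace RegularModel

variable {P : Type*} [PseudoMetricSpace P] {B : Set P} {K : ℝ} {m : ℕ} {f u : P → ℕ → ℝ}

lemma comp {P' : Type*} [PseudoMetricSpace P'] (h : RegularModel B K m f u) (hK : 0 ≤ K)
    {B' : Set P'} {g : P' → P} {Λ : ℝ} (hΛ : 1 ≤ Λ) (hg : Set.MapsTo g B' B)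
    (hg_lip : ∀ δ ∈ B', ∀ δ' ∈ B', dist (g δ) (g δ') ≤ Λ * dist δ δ') :
    RegularModel B' (K * Λ) m (fun δ => f (g δ)) (fun δ => u (g δ)) where
  density_pos δ := h.density_pos (g δ)
  sum_density δ := h.sum_density (g δ)
  sum_density_mul_score δ := h.sum_density_mul_score (g δ)
  abs_score_le δ hδ y hy :=
    (h.abs_score_le _ (hg hδ) y hy).trans (le_mul_of_one_le_right hK hΛ)
  abs_log_sub_le δ hδ δ' hδ' y hy := (h.abs_log_sub_le _ (hg hδ) _ (hg hδ') y hy).trans <| by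
    rw [mul_assoc]
    exact mul_le_mul_of_nonneg_left (hg_lip δ hδ δ' hδ') hK
  abs_score_sub_le δ hδ δ' hδ' y hy := (h.abs_score_sub_le _ (hg hδ) _ (hg hδ') y hy).trans <| by
    rw [mul_assoc]
    exact mul_le_mul_of_nonneg_left (hg_lip δ hδ δ' hδ') hK

end RegularModel

section Marginal

variable {ν : Measure ℝ} [IsProbabilityMeasure ν] {m y : ℕ} {p q : ℝ × ℝ} {c k : ℝ}

lemma abs_margRes_sub_le (hy : y ≤ m) (hc : 0 < c) (hp : c ≤ margDens ν m p y)
    (hq : c ≤ margDens ν m q y) (h_den : |margDens ν m p y - margDens ν m q y| ≤ k)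
    (h_num : |margDens ν (m + 1) p (y + 1) - margDens ν (m + 1) q (y + 1)| ≤ k) :
    |margRes ν m p y - margRes ν m q y| ≤ m * (2 * k / c ^ 2) := by
  have h_ratio := abs_div_sub_div_le hc hp hq
    (by rw [abs_of_pos (margDens_pos (Nat.succ_le_succ hy) q)]
        exact margDens_le_one (Nat.succ_le_succ hy) q)
    (margDens_le_one hy q) h_num h_den
  have h_weight : ((y : ℝ) + 1) / (m + 1) ≤ 1 :=
    div_le_one_of_le₀ (by exact_mod_cast Nat.succ_le_succ hy) (by positivity)
  rw [margRes_eq_sub_mul_div hy, margRes_eq_sub_mul_div hy, sub_sub_sub_cancel_left, ← mul_sub,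
    abs_mul, abs_of_nonneg (by positivity), abs_sub_comm]
  exact mul_le_mul (mul_le_of_le_one_right (Nat.cast_nonneg m) h_weight) h_ratio (abs_nonneg _)
    (Nat.cast_nonneg m)

lemma le_scoreVar_marginal (hm : 1 ≤ m) (hc : 0 < c) (h_dens : c ≤ margDens ν m p 0)
    (h_succ : c ≤ margDens ν (m + 1) p 1) :
    c * (c / 2) ^ 2 ≤ scoreVar m (margDens ν m p) (margRes ν m p) := by
  have h_weight : (1 : ℝ) / 2 ≤ m * ((0 + 1) / (m + 1)) := by
    have hm' : (1 : ℝ) ≤ m := by exact_mod_cast hm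
    rw [zero_add, mul_one_div, div_le_div_iff₀ (by norm_num) (by positivity)]
    linarith
  have h_ratio : c ≤ margDens ν (m + 1) p 1 / margDens ν m p 0 := by
    rw [le_div_iff₀ (hc.trans_le h_dens)]
    exact (mul_le_of_le_one_right hc.le (margDens_le_one (Nat.zero_le m) p)).trans h_succ
  have h_res : (c / 2) ^ 2 ≤ margRes ν m p 0 ^ 2 := by
    rw [margRes_eq_sub_mul_div (Nat.zero_le m), Nat.cast_zero, zero_sub, neg_sq, zero_add, zero_add]
    rw [zero_add] at h_weight
    refine pow_le_pow_left₀ (by positivity) ?_ 2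
    calc c / 2 = 1 / 2 * c := by ring
      _ ≤ _ := mul_le_mul h_weight h_ratio hc.le (by positivity)
  refine (mul_le_mul h_dens h_res (by positivity) (hc.le.trans h_dens)).trans
    (single_le_sum (f := fun y => margDens ν m p y * margRes ν m p y ^ 2)
      (fun y hy => mul_nonneg (margDens_pos (mem_range_succ_iff.1 hy) p).le (sq_nonneg _))
      (mem_range.2 (Nat.succ_pos m)))

lemma regularModel_marginal {M : ℕ} {B : ℝ} (hν : Integrable (fun α => |α|) ν) (hc : 0 < c)
    (h_lower : ∀ m y : ℕ, y ≤ m → m ≤ M + 1 → ∀ p : ℝ × ℝ, ‖p‖ ≤ B → c ≤ margDens ν m p y)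
    (hk : (M + 1) * (1 + ∫ α, |α| ∂ν) ≤ k) (hmM : m ≤ M) :
    RegularModel (Metric.closedBall (0 : ℝ × ℝ) B) (M + c⁻¹ * k + M * (2 * k / c ^ 2)) m
      (margDens ν m) (margRes ν m) := by
  have hk_nonneg : 0 ≤ k := le_trans (by positivity) hk
  have hmM' : (m : ℝ) ≤ M := by exact_mod_cast hmM
  have h_log_nonneg : 0 ≤ c⁻¹ * k := by positivity
  have h_score_nonneg : 0 ≤ M * (2 * k / c ^ 2) := by positivity
  have h_dens_le : ∀ m y : ℕ, y ≤ m → m ≤ M + 1 → ∀ p ∈ Metric.closedBall (0 : ℝ × ℝ) B,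
      c ≤ margDens ν m p y := fun m y hy hm p hp =>
    h_lower m y hy hm p (mem_closedBall_zero_iff.1 hp)
  have h_dens_lip : ∀ m y : ℕ, y ≤ m → m ≤ M + 1 → ∀ p q : ℝ × ℝ,
      |margDens ν m p y - margDens ν m q y| ≤ k * dist p q := fun m y hy hm p q => by
    have hm' : (m : ℝ) ≤ M + 1 := by exact_mod_cast hm
    exact (abs_margDens_sub_le hν hy p q).trans
      (mul_le_mul_of_nonneg_right (le_trans (by gcongr) hk) dist_nonneg)
  refine ⟨fun p y hy => margDens_pos hy p, sum_margDens m, sum_margDens_mul_margRes m,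
    fun p _ y hy => ?_, fun p hp q hq y hy => ?_, fun p hp q hq y hy => ?_⟩
  · linarith [abs_margRes_le (ν := ν) hy p]
  · refine (abs_log_sub_log_le hc (h_dens_le m y hy (by lia) p hp)
      (h_dens_le m y hy (by lia) q hq)).trans ?_
    calc c⁻¹ * |margDens ν m p y - margDens ν m q y| ≤ c⁻¹ * (k * dist p q) := by
          gcongr
          exact h_dens_lip m y hy (by lia) p q
      _ = c⁻¹ * k * dist p q := by ring
      _ ≤ _ := mul_le_mul_of_nonneg_right (by linarith) dist_nonneg
  · refine (abs_margRes_sub_le hy hc (h_dens_le m y hy (by lia) p hp)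
      (h_dens_le m y hy (by lia) q hq) (h_dens_lip m y hy (by lia) p q)
      (h_dens_lip _ _ (Nat.succ_le_succ hy) (by lia) p q)).trans ?_
    calc m * (2 * (k * dist p q) / c ^ 2) = m * (2 * k / c ^ 2) * dist p q := by ring
      _ ≤ M * (2 * k / c ^ 2) * dist p q := by gcongr
      _ ≤ _ := mul_le_mul_of_nonneg_right (by linarith) dist_nonneg

lemma exists_regularModel_marginal (hν : Integrable (fun α => |α|) ν) (M : ℕ) (B : ℝ) :
    ∃ K > 0, ∃ c > 0, ∀ m : ℕ, 1 ≤ m → m ≤ M →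
      RegularModel (Metric.closedBall (0 : ℝ × ℝ) B) K m (margDens ν m) (margRes ν m) ∧
        ∀ p ∈ Metric.closedBall (0 : ℝ × ℝ) B,
          c ≤ scoreVar m (margDens ν m p) (margRes ν m p) := by
  obtain ⟨c, hc, h_lower⟩ := exists_forall_le_margDens ν (M + 1) B
  exact ⟨_, by positivity, _, by positivity, fun m hm hmM =>
    ⟨regularModel_marginal hν hc h_lower le_rfl hmM, fun p hp => le_scoreVar_marginal hm hc
      (h_lower m 0 (Nat.zero_le m) (by lia) p (mem_closedBall_zero_iff.1 hp))
      (h_lower (m + 1) 1 (by lia) (by lia) p (mem_closedBall_zero_iff.1 hp))⟩⟩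

end Marginal

/-! ### The linear predictor -/

lemma abs_sqrt_sub_sqrt_le {τ a b : ℝ} (hτ : 0 < τ) (ha : τ ≤ a) (hb : τ ≤ b) :
    |√a - √b| ≤ (√τ)⁻¹ * |a - b| := by
  have h_sqrt_pos : 0 < √τ := Real.sqrt_pos.2 hτ
  have h_factor : a - b = (√a - √b) * (√a + √b) := by
    linear_combination Real.sq_sqrt (hτ.le.trans hb) - Real.sq_sqrt (hτ.le.trans ha)
  rw [h_factor, abs_mul, abs_of_nonneg (by positivity : 0 ≤ √a + √b), inv_mul_eq_div,
    le_div_iff₀ h_sqrt_pos]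
  exact mul_le_mul_of_nonneg_left
    ((Real.sqrt_le_sqrt ha).trans (le_add_of_nonneg_right (Real.sqrt_nonneg b))) (abs_nonneg _)

lemma abs_dotProduct_le {ι : Type*} [Fintype ι] (x β : ι → ℝ) :
    |x ⬝ᵥ β| ≤ Fintype.card ι * ‖x‖ * ‖β‖ := by
  calc |x ⬝ᵥ β| ≤ ∑ i, |x i * β i| := abs_sum_le_sum_abs _ _
    _ ≤ ∑ _i : ι, ‖x‖ * ‖β‖ := sum_le_sum fun i _ => by
        rw [abs_mul]
        exact mul_le_mul (norm_le_pi_norm x i) (norm_le_pi_norm β i) (abs_nonneg _) (norm_nonneg _)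
    _ = Fintype.card ι * ‖x‖ * ‖β‖ := by
        rw [sum_const, card_univ, nsmul_eq_mul, mul_assoc]

section LinPred

variable {r : ℕ}

/-- The pair of the linear predictor `xᵀβ` and the scale `√τ` of the random effect at the parameter
`δ = (β, τ)`, as an argument for `margDens` and `margRes`. -/
def linPred (x : Fin r → ℝ) (δ : (Fin r → ℝ) × ℝ) : ℝ × ℝ := (x ⬝ᵥ δ.1, √δ.2)

variable {x : Fin r → ℝ} {δ δ' : (Fin r → ℝ) × ℝ} {C D τ : ℝ}

lemma continuous_linPred (x : Fin r → ℝ) : Continuous (linPred x) := by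
  unfold linPred
  exact (continuous_const.dotProduct continuous_fst).prodMk continuous_snd.sqrt

lemma norm_linPred_le (hx : ‖x‖ ≤ C) (hδ : ‖δ‖ ≤ D) : ‖linPred x δ‖ ≤ r * C * D + √D := by
  have hC : 0 ≤ C := (norm_nonneg x).trans hx
  have hD : 0 ≤ D := (norm_nonneg δ).trans hδ
  have h_pred : |x ⬝ᵥ δ.1| ≤ r * C * D := by
    refine (abs_dotProduct_le x δ.1).trans ?_
    rw [Fintype.card_fin]
    have := (norm_fst_le δ).trans hδ
    gcongr
  have h_scale : |√δ.2| ≤ √D := by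
    rw [abs_of_nonneg (Real.sqrt_nonneg _)]
    exact Real.sqrt_le_sqrt ((le_abs_self _).trans ((norm_snd_le δ).trans hδ))
  exact max_le (h_pred.trans (le_add_of_nonneg_right (Real.sqrt_nonneg D)))
    (h_scale.trans (le_add_of_nonneg_left (by positivity)))

lemma dist_linPred_le (hx : ‖x‖ ≤ C) :
    dist (linPred x δ) (linPred x δ') ≤ r * C * dist δ δ' + |√δ.2 - √δ'.2| := by
  have hC : 0 ≤ C := (norm_nonneg x).trans hx
  have h_pred : |x ⬝ᵥ δ.1 - x ⬝ᵥ δ'.1| ≤ r * C * dist δ δ' := by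
    rw [← dotProduct_sub]
    refine (abs_dotProduct_le x _).trans ?_
    rw [Fintype.card_fin]
    have h_dist : ‖δ.1 - δ'.1‖ ≤ dist δ δ' := by
      rw [← dist_eq_norm]
      exact le_max_left _ _
    gcongr
  exact max_le (h_pred.trans (le_add_of_nonneg_right (abs_nonneg _)))
    (le_add_of_nonneg_left (by positivity))

lemma dist_linPred_le_mul (hx : ‖x‖ ≤ C) (hτ : 0 < τ) (hδ : τ ≤ δ.2) (hδ' : τ ≤ δ'.2) :
    dist (linPred x δ) (linPred x δ') ≤ (r * C + (√τ)⁻¹) * dist δ δ' := by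
  have h_snd : |δ.2 - δ'.2| ≤ dist δ δ' := le_max_right _ _
  calc dist (linPred x δ) (linPred x δ') ≤ r * C * dist δ δ' + |√δ.2 - √δ'.2| := dist_linPred_le hx
    _ ≤ r * C * dist δ δ' + (√τ)⁻¹ * dist δ δ' := by
        gcongr
        exact (abs_sqrt_sub_sqrt_le hτ hδ hδ').trans (by gcongr)
    _ = _ := by ring

variable {ν : Measure ℝ} [IsProbabilityMeasure ν]

lemma exists_regularModel_linPred (hν : Integrable (fun α => |α|) ν) (M : ℕ) (C : ℝ)
    (β₀ : Fin r → ℝ) {τ₀ : ℝ} (hτ₀ : 0 < τ₀) :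
    ∃ R > 0, ∃ K > 0, ∃ c > 0, ∀ m : ℕ, 1 ≤ m → m ≤ M → ∀ x : Fin r → ℝ, ‖x‖ ≤ C →
      RegularModel (Metric.closedBall (β₀, τ₀) R) K m
        (fun δ => margDens ν m (linPred x δ)) (fun δ => margRes ν m (linPred x δ)) ∧
      ∀ δ ∈ Metric.closedBall (β₀, τ₀) R,
        c ≤ scoreVar m (margDens ν m (linPred x δ)) (margRes ν m (linPred x δ)) := by
  let D : ℝ := ‖(β₀, τ₀)‖ + τ₀ / 2
  let Λ : ℝ := 1 + (r * |C| + (√(τ₀ / 2))⁻¹)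
  obtain ⟨K, hK, c, hc, h_regular⟩ := exists_regularModel_marginal hν M (r * |C| * D + √D)
  have h_maps : ∀ x : Fin r → ℝ, ‖x‖ ≤ C →
      Set.MapsTo (linPred x) (Metric.closedBall (β₀, τ₀) (τ₀ / 2))
        (Metric.closedBall 0 (r * |C| * D + √D)) := fun x hx δ hδ =>
    mem_closedBall_zero_iff.2 (norm_linPred_le (hx.trans (le_abs_self C))
      (norm_le_norm_add_const_of_dist_le hδ))
  refine ⟨τ₀ / 2, half_pos hτ₀, K * Λ, by positivity, c, hc, fun m hm hmM x hx =>
    ⟨(h_regular m hm hmM).1.comp hK.le (le_add_of_nonneg_right (by positivity)) (h_maps x hx)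
      fun δ hδ δ' hδ' => ?_, fun δ hδ => (h_regular m hm hmM).2 _ (h_maps x hx hδ)⟩⟩
  have h_scale : ∀ δ ∈ Metric.closedBall (β₀, τ₀) (τ₀ / 2), τ₀ / 2 ≤ δ.2 := fun δ hδ => by
    have h_dist : |δ.2 - τ₀| ≤ τ₀ / 2 := (le_max_right _ _).trans hδ
    linarith [(abs_le.1 h_dist).1]
  refine (dist_linPred_le_mul (hx.trans (le_abs_self C)) (half_pos hτ₀) (h_scale δ hδ)
    (h_scale δ' hδ')).trans (mul_le_mul_of_nonneg_right ?_ dist_nonneg)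
  exact le_add_of_nonneg_left zero_le_one

/-- At `τ = 0` the scale `√τ` is not Lipschitz, but it is still uniformly continuous. -/
lemma exists_forall_abs_log_margDens_sub_le (hν : Integrable (fun α => |α|) ν) (M : ℕ) (C D : ℝ)
    {ε : ℝ} (hε : 0 < ε) :
    ∃ η > 0, ∀ m y : ℕ, 1 ≤ m → m ≤ M → y ≤ m → ∀ x : Fin r → ℝ, ‖x‖ ≤ C →
      ∀ δ δ' : (Fin r → ℝ) × ℝ, ‖δ‖ ≤ D → ‖δ'‖ ≤ D → dist δ δ' < η →
        |Real.log (margDens ν m (linPred x δ) y) - Real.log (margDens ν m (linPred x δ') y)|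
          ≤ ε := by
  obtain ⟨K, hK, c, -, h_regular⟩ := exists_regularModel_marginal hν M (r * C * D + √D)
  have h_unif : UniformContinuousOn Real.sqrt (Set.Icc (-D) D) :=
    isCompact_Icc.uniformContinuousOn_of_continuous Real.continuous_sqrt.continuousOn
  obtain ⟨ρ, hρ, h_sqrt⟩ := Metric.uniformContinuousOn_iff_le.1 h_unif (ε / (2 * K)) (by positivity)
  refine ⟨min ρ (ε / (2 * K * (r * |C| + 1))), by positivity,
    fun m y hm hmM hy x hx δ δ' hδ hδ' hd => ?_⟩
  have h_mem : ∀ δ : (Fin r → ℝ) × ℝ, ‖δ‖ ≤ D → δ.2 ∈ Set.Icc (-D) D := fun δ hδ =>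
    abs_le.1 ((norm_snd_le δ).trans hδ)
  have h_scale : |√δ.2 - √δ'.2| ≤ ε / (2 * K) := h_sqrt _ (h_mem δ hδ) _ (h_mem δ' hδ')
    ((le_max_right _ _).trans (hd.le.trans (min_le_left _ _)))
  have h_pred : r * C * dist δ δ' ≤ ε / (2 * K) :=
    calc r * C * dist δ δ' ≤ (r * |C| + 1) * (ε / (2 * K * (r * |C| + 1))) := by
          gcongr
          · linarith [mul_le_mul_of_nonneg_left (le_abs_self C) (Nat.cast_nonneg (α := ℝ) r)]
          · exact hd.le.trans (min_le_right _ _)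
      _ = ε / (2 * K) := by field_simp
  refine ((h_regular m hm hmM).1.abs_log_sub_le _
    (mem_closedBall_zero_iff.2 (norm_linPred_le hx hδ)) _
    (mem_closedBall_zero_iff.2 (norm_linPred_le hx hδ')) y hy).trans ?_
  calc K * dist (linPred x δ) (linPred x δ') ≤ K * (ε / (2 * K) + ε / (2 * K)) := by
        gcongr
        exact (dist_linPred_le hx).trans (add_le_add h_pred h_scale)
    _ = ε := by field_simp; ring

end LinPred

/-! ### Independence and bounded martingale differences -/

section SigmaOf

variable {Ω ι : Type*} {β : ι → Type*} [∀ i, MeasurableSpace (β i)] {X : ∀ i, Ω → β i}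
  {S T : Set ι}

/-- The `σ`-algebra generated by the variables `X i` with `i ∈ S`. -/
abbrev sigmaOf (X : ∀ i, Ω → β i) (S : Set ι) : MeasurableSpace Ω :=
  ⨆ i ∈ S, MeasurableSpace.comap (X i) inferInstance

lemma sigmaOf_mono (h : S ⊆ T) : sigmaOf X S ≤ sigmaOf X T := biSup_mono h

lemma measurable_sigmaOf {i : ι} (hi : i ∈ S) : Measurable[sigmaOf X S] (X i) :=
  measurable_iff_comap_le.2
    (le_iSup₂ (f := fun i (_ : i ∈ S) => MeasurableSpace.comap (X i) inferInstance) i hi)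

variable {mΩ : MeasurableSpace Ω} {μ : Measure Ω}

lemma sigmaOf_le (hX : ∀ i, Measurable (X i)) : sigmaOf X S ≤ mΩ :=
  iSup₂_le fun i _ => (hX i).comap_le

lemma indep_sigmaOf (hX : ∀ i, Measurable (X i)) (h_indep : iIndepFun X μ) (hST : Disjoint S T) :
    Indep (sigmaOf X S) (sigmaOf X T) μ :=
  indep_iSup_of_disjoint (fun i => (hX i).comap_le) h_indep hST

lemma indepFun_of_disjoint {γ γ' : Type*} [MeasurableSpace γ] [MeasurableSpace γ'] {f : Ω → γ}
    {g : Ω → γ'} (hX : ∀ i, Measurable (X i)) (h_indep : iIndepFun X μ) (hST : Disjoint S T)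
    (hf : Measurable[sigmaOf X S] f) (hg : Measurable[sigmaOf X T] g) : IndepFun f g μ :=
  indep_of_indep_of_le_left
    (indep_of_indep_of_le_right (indep_sigmaOf hX h_indep hST) hg.comap_le) hf.comap_le

/-- The filtration of the strict past of a sequence: at time `t` the variables `X i` with `i < t`
have been observed. -/
def strictPast {β : ℕ → Type*} [∀ i, MeasurableSpace (β i)] {X : ∀ i, Ω → β i}
    (hX : ∀ i, Measurable (X i)) : Filtration ℕ mΩ where
  seq t := sigmaOf X (Set.Iio t)
  mono' _ _ h := sigmaOf_mono (Set.Iio_subset_Iio h)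
  le' _ := sigmaOf_le hX

end SigmaOf

/-- The increments `d t` of a martingale for the filtration `ℱ`, where `d t` is known at time
`t + 1` and each `d t` is bounded. -/
structure BoundedMartDiff {Ω : Type*} {mΩ : MeasurableSpace Ω} (ℱ : Filtration ℕ mΩ)
    (μ : Measure Ω) (d : ℕ → Ω → ℝ) : Prop where
  measurable_succ : ∀ t, Measurable[ℱ (t + 1)] (d t)
  exists_abs_le : ∀ t, ∃ C, ∀ ω, |d t ω| ≤ C
  condExp_eq_zero : ∀ t, μ[d t | ℱ t] =ᵐ[μ] 0

namespace BoundedMartDiff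

variable {Ω : Type*} {mΩ : MeasurableSpace Ω} {ℱ : Filtration ℕ mΩ} {μ : Measure Ω}
  {d e : ℕ → Ω → ℝ}

lemma measurable (hd : BoundedMartDiff ℱ μ d) (t : ℕ) : Measurable (d t) :=
  (hd.measurable_succ t).mono (ℱ.le _) le_rfl

lemma measurable_of_lt (hd : BoundedMartDiff ℱ μ d) {t N : ℕ} (h : t < N) :
    Measurable[ℱ N] (d t) :=
  (hd.measurable_succ t).mono (ℱ.mono h) le_rfl

lemma exists_abs_sum_le (hd : BoundedMartDiff ℱ μ d) (N : ℕ) :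
    ∃ C, ∀ ω, |∑ t ∈ range N, d t ω| ≤ C := by
  choose C hC using hd.exists_abs_le
  exact ⟨∑ t ∈ range N, C t, fun ω => (abs_sum_le_sum_abs _ _).trans
    (sum_le_sum fun t _ => hC t ω)⟩

lemma const_mul (hd : BoundedMartDiff ℱ μ d) (c : ℝ) :
    BoundedMartDiff ℱ μ (fun t ω => c * d t ω) where
  measurable_succ t := (hd.measurable_succ t).const_mul c
  exists_abs_le t := by
    obtain ⟨C, hC⟩ := hd.exists_abs_le t
    exact ⟨|c| * C, fun ω => (abs_mul _ _).trans_le (by gcongr; exact hC ω)⟩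
  condExp_eq_zero t := by
    filter_upwards [condExp_smul c (d t) (ℱ t), hd.condExp_eq_zero t] with ω h_smul hdω
    exact h_smul.trans (by simp [hdω])

variable [IsProbabilityMeasure μ]

lemma integrable (hd : BoundedMartDiff ℱ μ d) (t : ℕ) : Integrable (d t) μ := by
  obtain ⟨C, hC⟩ := hd.exists_abs_le t
  exact .of_bound (hd.measurable t).aestronglyMeasurable C (.of_forall hC)

lemma sub (hd : BoundedMartDiff ℱ μ d) (he : BoundedMartDiff ℱ μ e) :
    BoundedMartDiff ℱ μ (d - e) where
  measurable_succ t := (hd.measurable_succ t).sub (he.measurable_succ t)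
  exists_abs_le t := by
    obtain ⟨C, hC⟩ := hd.exists_abs_le t
    obtain ⟨C', hC'⟩ := he.exists_abs_le t
    exact ⟨C + C', fun ω => (abs_sub _ _).trans (add_le_add (hC ω) (hC' ω))⟩
  condExp_eq_zero t := by
    filter_upwards [condExp_sub (hd.integrable t) (he.integrable t) (ℱ t), hd.condExp_eq_zero t,
      he.condExp_eq_zero t] with ω h_sub hdω heω
    simp_all

lemma of_mul {ξ G : ℕ → Ω → ℝ} (hξ : ∀ t, Measurable[ℱ (t + 1)] (ξ t))
    (hξ_bdd : ∀ t, ∃ C, ∀ ω, |ξ t ω| ≤ C) (hξ_zero : ∀ t, ∫ ω, ξ t ω ∂μ = 0)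
    (hξ_indep : ∀ t, Indep (MeasurableSpace.comap (ξ t) inferInstance) (ℱ t) μ)
    (hG : ∀ t, Measurable[ℱ t] (G t)) (hG_bdd : ∀ t, ∃ C, ∀ ω, |G t ω| ≤ C) :
    BoundedMartDiff ℱ μ (fun t => ξ t * G t) := by
  have hξ_meas : ∀ t, Measurable (ξ t) := fun t => (hξ t).mono (ℱ.le _) le_rfl
  have h_bdd : ∀ t, ∃ C, ∀ ω, |(ξ t * G t) ω| ≤ C := fun t => by
    obtain ⟨C, hC⟩ := hξ_bdd t
    obtain ⟨D, hD⟩ := hG_bdd t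
    refine ⟨C * D, fun ω => ?_⟩
    rw [Pi.mul_apply, abs_mul]
    exact mul_le_mul (hC ω) (hD ω) (abs_nonneg _) ((abs_nonneg _).trans (hC ω))
  refine ⟨fun t => (hξ t).mul ((hG t).mono (ℱ.mono t.le_succ) le_rfl), h_bdd, fun t => ?_⟩
  obtain ⟨C, hC⟩ := hξ_bdd t
  obtain ⟨D, hD⟩ := h_bdd t
  have h_prod : Integrable (ξ t * G t) μ := .of_bound
    ((hξ_meas t).mul ((hG t).mono (ℱ.le t) le_rfl)).aestronglyMeasurable D (.of_forall hD)
  have h_indep := condExp_indep_eq (hξ_meas t).comap_le (ℱ.le t)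
    (comap_measurable (ξ t)).stronglyMeasurable (hξ_indep t)
  filter_upwards [condExp_mul_of_stronglyMeasurable_right (hG t).stronglyMeasurable h_prod
    (.of_bound (hξ_meas t).aestronglyMeasurable C (.of_forall hC)), h_indep] with ω h_mul h_zero
  rw [h_mul, Pi.mul_apply, h_zero, hξ_zero t, zero_mul, Pi.zero_apply]

lemma integral_smul_eq_zero {E : Type*} [NormedAddCommGroup E] [NormedSpace ℝ E] [CompleteSpace E]
    (hd : BoundedMartDiff ℱ μ d) (t : ℕ) {P : Ω → E} (hP : StronglyMeasurable[ℱ t] P)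
    (hP_bdd : ∃ C, ∀ ω, ‖P ω‖ ≤ C) : ∫ ω, d t ω • P ω ∂μ = 0 := by
  obtain ⟨C, hC⟩ := hP_bdd
  obtain ⟨D, hD⟩ := hd.exists_abs_le t
  have h_int : Integrable (fun ω => d t ω • P ω) μ := by
    refine .of_bound ((hd.measurable t).aestronglyMeasurable.smul
      (hP.mono (ℱ.le t)).aestronglyMeasurable) (D * C) (.of_forall fun ω => ?_)
    rw [norm_smul]
    exact mul_le_mul (hD ω) (hC ω) (norm_nonneg _) ((abs_nonneg _).trans (hD ω))
  have h_pull := condExp_bilin_of_stronglyMeasurable_right (ContinuousLinearMap.lsmul ℝ ℝ) hP h_int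
    (hd.integrable t)
  rw [← integral_condExp (ℱ.le t)]
  refine integral_eq_zero_of_ae ?_
  filter_upwards [h_pull, hd.condExp_eq_zero t] with ω h_pull h_zero
  simp_all

end BoundedMartDiff

/-! ### Azuma's inequality -/

lemma exp_le_cosh_add_mul {k x : ℝ} (hx : |x| ≤ k) :
    Real.exp x ≤ Real.cosh k + Real.sinh k / k * x := by
  obtain rfl | hk := ((abs_nonneg x).trans hx).eq_or_lt
  · simp [abs_nonpos_iff.1 hx]
  obtain ⟨h_lower, h_upper⟩ := abs_le.1 hx
  have h_convex := convexOn_exp.2 (Set.mem_univ (-k)) (Set.mem_univ k)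
    (div_nonneg (by linarith) (by linarith) : 0 ≤ (k - x) / (2 * k))
    (div_nonneg (by linarith) (by linarith) : 0 ≤ (k + x) / (2 * k)) (by field_simp; ring)
  have h_mean : (k - x) / (2 * k) * -k + (k + x) / (2 * k) * k = x := by
    field_simp
    ring
  simp only [smul_eq_mul, h_mean] at h_convex
  refine h_convex.trans_eq ?_
  rw [Real.cosh_eq, Real.sinh_eq]
  field_simp
  ring

namespace BoundedMartDiff

variable {Ω : Type*} {mΩ : MeasurableSpace Ω} {ℱ : Filtration ℕ mΩ} {μ : Measure Ω}
  {d : ℕ → Ω → ℝ}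

lemma exists_exp_mul_sum_le (hd : BoundedMartDiff ℱ μ d) (N : ℕ) (l : ℝ) :
    ∃ C, ∀ ω, ‖Real.exp (l * ∑ t ∈ range N, d t ω)‖ ≤ C := by
  obtain ⟨C, hC⟩ := hd.exists_abs_sum_le N
  refine ⟨Real.exp (|l| * C), fun ω => ?_⟩
  rw [Real.norm_eq_abs, Real.abs_exp, Real.exp_le_exp]
  exact (le_abs_self _).trans ((abs_mul _ _).trans_le (by gcongr; exact hC ω))

variable [IsProbabilityMeasure μ]

lemma integral_mul_exp_le (hd : BoundedMartDiff ℱ μ d) {t : ℕ} {k : ℝ} (hk : ∀ ω, |d t ω| ≤ k)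
    {P : Ω → ℝ} (hP : Measurable[ℱ t] P) (hP_nonneg : ∀ ω, 0 ≤ P ω) (hP_bdd : ∃ C, ∀ ω, ‖P ω‖ ≤ C)
    (l : ℝ) : ∫ ω, P ω * Real.exp (l * d t ω) ∂μ ≤ Real.exp (k ^ 2 * l ^ 2 / 2) * ∫ ω, P ω ∂μ := by
  obtain ⟨C, hC⟩ := hP_bdd
  have hP_meas : Measurable P := hP.mono (ℱ.le t) le_rfl
  have hP_int : Integrable P μ := .of_bound hP_meas.aestronglyMeasurable C (.of_forall hC)
  let s : ℝ := Real.sinh (|l| * k) / (|l| * k) * l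
  have h_pointwise : ∀ ω, P ω * Real.exp (l * d t ω)
      ≤ Real.cosh (|l| * k) * P ω + s * (d t ω * P ω) := fun ω => by
    have h_exp : Real.exp (l * d t ω) ≤ Real.cosh (|l| * k) + s * d t ω := by
      rw [mul_assoc]
      exact exp_le_cosh_add_mul ((abs_mul _ _).trans_le (by gcongr; exact hk ω))
    linarith [mul_le_mul_of_nonneg_left h_exp (hP_nonneg ω)]
  have h_orth : ∫ ω, d t ω * P ω ∂μ = 0 :=
    hd.integral_smul_eq_zero t hP.stronglyMeasurable ⟨C, hC⟩
  have h_int : Integrable (fun ω => d t ω * P ω) μ :=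
    (hd.integrable t).mul_bdd hP_meas.aestronglyMeasurable (.of_forall hC)
  calc ∫ ω, P ω * Real.exp (l * d t ω) ∂μ
      ≤ ∫ ω, Real.cosh (|l| * k) * P ω + s * (d t ω * P ω) ∂μ :=
        integral_mono_of_nonneg (.of_forall fun ω => mul_nonneg (hP_nonneg ω) (Real.exp_pos _).le)
          ((hP_int.const_mul _).add (h_int.const_mul _)) (.of_forall h_pointwise)
    _ = Real.cosh (|l| * k) * ∫ ω, P ω ∂μ := by
        rw [integral_add (hP_int.const_mul _) (h_int.const_mul _), integral_const_mul,
          integral_const_mul, h_orth, mul_zero, add_zero]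
    _ ≤ Real.exp (k ^ 2 * l ^ 2 / 2) * ∫ ω, P ω ∂μ := by
        refine mul_le_mul_of_nonneg_right ?_ (integral_nonneg hP_nonneg)
        refine (Real.cosh_le_exp_half_sq _).trans_eq ?_
        rw [mul_pow, sq_abs, mul_comm (l ^ 2)]

/-- Azuma's inequality. Mathlib's version, through conditional sub-Gaussianity, assumes `Ω` to be
standard Borel. -/
lemma hasSubgaussianMGF_sum (hd : BoundedMartDiff ℱ μ d) {k : NNReal} (hk : ∀ t ω, |d t ω| ≤ k)
    (N : ℕ) : HasSubgaussianMGF (fun ω => ∑ t ∈ range N, d t ω) (N * k ^ 2) μ where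
  integrable_exp_mul l := by
    obtain ⟨C, hC⟩ := hd.exists_exp_mul_sum_le N l
    have h_meas : Measurable fun ω => ∑ t ∈ range N, d t ω :=
      Finset.measurable_fun_sum _ fun t _ => hd.measurable t
    exact .of_bound (h_meas.const_mul l).exp.aestronglyMeasurable C (.of_forall hC)
  mgf_le l := by
    induction N with
    | zero => simp [mgf]
    | succ N ih =>
      have h_past : Measurable[ℱ N] fun ω => Real.exp (l * ∑ t ∈ range N, d t ω) :=
        Real.measurable_exp.comp (.const_mul (Finset.measurable_fun_sum _ fun t ht =>
          hd.measurable_of_lt (mem_range.1 ht)) l)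
      have h_step := hd.integral_mul_exp_le (hk N) h_past (fun ω => (Real.exp_pos _).le)
        (hd.exists_exp_mul_sum_le N l) l
      simp only [mgf, sum_range_succ, mul_add, Real.exp_add] at ih ⊢
      refine (h_step.trans (mul_le_mul_of_nonneg_left ih (Real.exp_pos _).le)).trans_eq ?_
      rw [← Real.exp_add]
      push_cast
      ring_nf

end BoundedMartDiff

lemma measureReal_le_abs_le_of_hasSubgaussianMGF {Ω : Type*} {mΩ : MeasurableSpace Ω}
    {μ : Measure Ω} [IsFiniteMeasure μ] {Z : Ω → ℝ} {v : NNReal} (h : HasSubgaussianMGF Z v μ)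
    {q : ℝ} (hq : 0 ≤ q) :
    μ.real {ω | q ≤ |Z ω|} ≤ 2 * Real.exp (-q ^ 2 / (2 * v)) := by
  have h_union : {ω | q ≤ |Z ω|} = {ω | q ≤ Z ω} ∪ {ω | q ≤ (-Z) ω} := by
    ext ω
    simp [le_abs]
  rw [h_union, two_mul]
  exact (measureReal_union_le _ _).trans (add_le_add (h.measure_ge_le hq) (h.neg.measure_ge_le hq))

/-! ### McLeish's bound on the characteristic function of a martingale -/

lemma norm_prod_sub_prod_le {ι 𝕜 : Type*} [NormedField 𝕜] {s : Finset ι} {a b : ι → 𝕜}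
    (ha : ∀ i ∈ s, ‖a i‖ ≤ 1) (hb : ∀ i ∈ s, ‖b i‖ ≤ 1) :
    ‖∏ i ∈ s, a i - ∏ i ∈ s, b i‖ ≤ ∑ i ∈ s, ‖a i - b i‖ := by
  induction s using Finset.cons_induction with
  | empty => simp
  | cons i s hi ih =>
    rw [forall_mem_cons] at ha hb
    have h_telescope : a i * ∏ j ∈ s, a j - b i * ∏ j ∈ s, b j
        = (a i - b i) * ∏ j ∈ s, a j + b i * (∏ j ∈ s, a j - ∏ j ∈ s, b j) := by ring
    rw [prod_cons, prod_cons, sum_cons, h_telescope]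
    refine (norm_add_le _ _).trans (add_le_add ?_ ?_)
    · rw [norm_mul, norm_prod]
      exact mul_le_of_le_one_right (norm_nonneg _)
        (prod_le_one (fun _ _ => norm_nonneg _) ha.2)
    · rw [norm_mul]
      exact (mul_le_of_le_one_left (norm_nonneg _) hb.1).trans (ih ha.2 hb.2)

lemma norm_one_add_mul_I_le (x : ℝ) : ‖1 + x * Complex.I‖ ≤ Real.exp (x ^ 2 / 2) := by
  have h_sq : ‖1 + x * Complex.I‖ ^ 2 = x ^ 2 + 1 := by
    rw [← Complex.normSq_eq_norm_sq, Complex.normSq_apply]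
    simp only [Complex.add_re, Complex.one_re, Complex.re_ofReal_mul, Complex.I_re,
      Complex.add_im, Complex.one_im, Complex.im_ofReal_mul, Complex.I_im]
    ring
  refine le_of_sq_le_sq ?_ (Real.exp_pos _).le
  rw [h_sq, ← Real.exp_nat_mul, Nat.cast_two, mul_div_cancel₀ _ two_ne_zero]
  exact Real.add_one_le_exp _

lemma norm_prod_one_add_mul_I_le {ι : Type*} (s : Finset ι) (x : ι → ℝ) :
    ‖∏ i ∈ s, (1 + x i * Complex.I)‖ ≤ Real.exp ((∑ i ∈ s, x i ^ 2) / 2) := by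
  rw [norm_prod, sum_div, Real.exp_sum]
  exact prod_le_prod (fun _ _ => norm_nonneg _) fun i _ => norm_one_add_mul_I_le _

lemma norm_exp_sub_one_add_add_sq_le {z : ℂ} (hz : ‖z‖ ≤ 1) :
    ‖Complex.exp z - (1 + z + z ^ 2 / 2)‖ ≤ ‖z‖ ^ 3 := by
  have h_bound := Complex.exp_bound hz (n := 3) (by norm_num)
  norm_num [sum_range_succ, Nat.factorial] at h_bound
  exact h_bound.trans (by linarith [pow_nonneg (norm_nonneg z) 3])

lemma norm_exp_mul_I_sub_le {x : ℝ} (hx : |x| ≤ 1) :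
    ‖Complex.exp (x * Complex.I) - (1 + x * Complex.I) * (Real.exp (-(x ^ 2 / 2)) : ℝ)‖
      ≤ 2 * |x| ^ 3 := by
  have hx_sq : x ^ 2 ≤ 1 := (sq_le_one_iff_abs_le_one x).2 hx
  have h_cubic : ‖Complex.exp (x * Complex.I) - (1 + x * Complex.I + (x * Complex.I) ^ 2 / 2)‖
      ≤ |x| ^ 3 := by
    simpa using norm_exp_sub_one_add_add_sq_le (z := x * Complex.I) (by simpa using hx)
  have h_quad : |Real.exp (-(x ^ 2 / 2)) - 1 - -(x ^ 2 / 2)| ≤ (-(x ^ 2 / 2)) ^ 2 :=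
    Real.abs_exp_sub_one_sub_id_le (by rw [abs_neg, abs_of_nonneg (by positivity)]; linarith)
  have h_factor : ‖1 + x * Complex.I‖ ≤ 2 :=
    (norm_add_le _ _).trans (by simp only [norm_one, norm_mul, Complex.norm_real,
      Complex.norm_I, Real.norm_eq_abs]; linarith)
  have h_split : Complex.exp (x * Complex.I) - (1 + x * Complex.I) * (Real.exp (-(x ^ 2 / 2)) : ℝ)
      = (Complex.exp (x * Complex.I) - (1 + x * Complex.I + (x * Complex.I) ^ 2 / 2))
        - (1 + x * Complex.I) * ((Real.exp (-(x ^ 2 / 2)) - 1 - -(x ^ 2 / 2) : ℝ) : ℂ)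
        + (x : ℂ) ^ 3 * Complex.I / 2 := by
    push_cast
    linear_combination ((x : ℂ) ^ 2 / 2) * Complex.I_sq
  have h_pow : (-(x ^ 2 / 2)) ^ 2 ≤ |x| ^ 3 / 4 := by
    have h_four : |x| ^ 4 ≤ |x| ^ 3 := pow_le_pow_of_le_one (abs_nonneg x) hx (by norm_num)
    rw [← sq_abs x]
    linarith
  rw [h_split]
  calc _ ≤ |x| ^ 3 + 2 * (|x| ^ 3 / 4) + |x| ^ 3 / 2 := by
        refine (norm_add_le _ _).trans (add_le_add ((norm_sub_le _ _).trans
          (add_le_add h_cubic ?_)) (by simp))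
        rw [norm_mul, Complex.norm_real]
        exact mul_le_mul h_factor (h_quad.trans h_pow) (norm_nonneg _) zero_le_two
    _ = 2 * |x| ^ 3 := by ring

lemma abs_exp_neg_sub_exp_neg_le {a b : ℝ} (ha : 0 ≤ a) (hb : 0 ≤ b) :
    |Real.exp (-a) - Real.exp (-b)| ≤ |a - b| := by
  wlog hab : a ≤ b generalizing a b
  · rw [abs_sub_comm, abs_sub_comm a]
    exact this hb ha (le_of_not_ge hab)
  have h_exp : Real.exp (-b) = Real.exp (-a) * Real.exp (-(b - a)) := by
    rw [← Real.exp_add]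
    congr 1
    ring
  rw [abs_of_nonneg (sub_nonneg.2 (Real.exp_le_exp.2 (neg_le_neg hab))),
    abs_of_nonpos (sub_nonpos.2 hab)]
  nlinarith [Real.add_one_le_exp (-(b - a)), Real.exp_le_one_iff.2 (neg_nonpos.2 ha),
    Real.exp_pos (-a)]

lemma norm_exp_sum_mul_I_sub_le {ι : Type*} {s : Finset ι} {x : ι → ℝ} {k v : ℝ} (hk : k ≤ 1)
    (hx : ∀ i ∈ s, |x i| ≤ k) (hv : 0 ≤ v) :
    ‖Complex.exp ((∑ i ∈ s, x i : ℝ) * Complex.I)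
        - (∏ i ∈ s, (1 + x i * Complex.I)) * (Real.exp (-(v / 2)) : ℝ)‖
      ≤ #s * (2 * k ^ 3) + Real.exp ((∑ i ∈ s, x i ^ 2) / 2) * |∑ i ∈ s, x i ^ 2 - v| := by
  have h_prod : ‖∏ i ∈ s, Complex.exp (x i * Complex.I)
      - ∏ i ∈ s, ((1 + x i * Complex.I) * (Real.exp (-(x i ^ 2 / 2)) : ℝ))‖
      ≤ #s * (2 * k ^ 3) := by
    refine (norm_prod_sub_prod_le (fun i _ => (Complex.norm_exp_ofReal_mul_I _).le)
      fun i _ => ?_).trans ((sum_le_card_nsmul _ _ (2 * k ^ 3) fun i hi => ?_).trans_eq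
        (nsmul_eq_mul _ _))
    · rw [norm_mul, Complex.norm_real, Real.norm_of_nonneg (Real.exp_pos _).le, Real.exp_neg]
      exact mul_inv_le_one_of_le₀ (norm_one_add_mul_I_le _) (Real.exp_pos _).le
    · exact (norm_exp_mul_I_sub_le ((hx i hi).trans hk)).trans (by gcongr; exact hx i hi)
  have h_exp : |Real.exp (-((∑ i ∈ s, x i ^ 2) / 2)) - Real.exp (-(v / 2))|
      ≤ |∑ i ∈ s, x i ^ 2 - v| := by
    refine (abs_exp_neg_sub_exp_neg_le (by positivity) (by positivity)).trans ?_
    rw [← sub_div, abs_div, abs_two]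
    exact half_le_self (abs_nonneg _)
  have h_split : Complex.exp ((∑ i ∈ s, x i : ℝ) * Complex.I)
        - (∏ i ∈ s, (1 + x i * Complex.I)) * (Real.exp (-(v / 2)) : ℝ)
      = (∏ i ∈ s, Complex.exp (x i * Complex.I)
          - ∏ i ∈ s, ((1 + x i * Complex.I) * (Real.exp (-(x i ^ 2 / 2)) : ℝ)))
        + (∏ i ∈ s, (1 + x i * Complex.I))
          * ((Real.exp (-((∑ i ∈ s, x i ^ 2) / 2)) - Real.exp (-(v / 2)) : ℝ) : ℂ) := by
    rw [prod_mul_distrib, ← Complex.exp_sum, ← sum_mul, ← Complex.ofReal_prod, ← Real.exp_sum,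
      sum_neg_distrib, sum_div]
    push_cast
    ring
  rw [h_split]
  refine (norm_add_le _ _).trans (add_le_add h_prod ?_)
  rw [norm_mul, Complex.norm_real]
  exact mul_le_mul (norm_prod_one_add_mul_I_le _ _) h_exp (norm_nonneg _) (Real.exp_pos _).le

namespace BoundedMartDiff

variable {Ω : Type*} {mΩ : MeasurableSpace Ω} {ℱ : Filtration ℕ mΩ} {μ : Measure Ω}
  {d : ℕ → Ω → ℝ}

lemma exists_norm_prod_le (hd : BoundedMartDiff ℱ μ d) (N : ℕ) :
    ∃ C, ∀ ω, ‖∏ t ∈ range N, (1 + d t ω * Complex.I)‖ ≤ C := by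
  choose C hC using hd.exists_abs_le
  refine ⟨∏ t ∈ range N, (1 + C t), fun ω => ?_⟩
  rw [norm_prod]
  refine prod_le_prod (fun _ _ => norm_nonneg _) fun t _ => (norm_add_le _ _).trans ?_
  simpa using hC t ω

lemma measurable_prod (hd : BoundedMartDiff ℱ μ d) (N : ℕ) :
    Measurable[ℱ N] fun ω => ∏ t ∈ range N, (1 + d t ω * Complex.I) :=
  Finset.measurable_fun_prod _ fun _ ht => .const_add (.mul_const
    (Complex.measurable_ofReal.comp (hd.measurable_of_lt (mem_range.1 ht))) _) _

variable [IsProbabilityMeasure μ]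

lemma integrable_prod (hd : BoundedMartDiff ℱ μ d) (N : ℕ) :
    Integrable (fun ω => ∏ t ∈ range N, (1 + d t ω * Complex.I)) μ := by
  obtain ⟨C, hC⟩ := hd.exists_norm_prod_le N
  exact .of_bound ((hd.measurable_prod N).mono (ℱ.le N) le_rfl).aestronglyMeasurable C
    (.of_forall hC)

lemma integral_prod_eq_one (hd : BoundedMartDiff ℱ μ d) (N : ℕ) :
    ∫ ω, ∏ t ∈ range N, (1 + d t ω * Complex.I) ∂μ = 1 := by
  induction N with
  | zero => simp
  | succ N ih =>
    let P : Ω → ℂ := fun ω => Complex.I * ∏ t ∈ range N, (1 + d t ω * Complex.I)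
    have h_orth : ∫ ω, d N ω • P ω ∂μ = 0 := by
      obtain ⟨C, hC⟩ := hd.exists_norm_prod_le N
      refine hd.integral_smul_eq_zero N ((hd.measurable_prod N).const_mul _).stronglyMeasurable
        ⟨C, fun ω => ?_⟩
      rw [norm_mul, Complex.norm_I, one_mul]
      exact hC ω
    have h_succ : ∀ ω, d N ω • P ω = ∏ t ∈ range (N + 1), (1 + d t ω * Complex.I)
        - ∏ t ∈ range N, (1 + d t ω * Complex.I) := fun ω => by
      rw [prod_range_succ, Complex.real_smul]
      ring
    simp only [h_succ] at h_orth
    rwa [integral_sub (hd.integrable_prod _) (hd.integrable_prod _), ih, sub_eq_zero] at h_orth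

lemma norm_integral_exp_sum_sub_le (hd : BoundedMartDiff ℱ μ d) {k v : ℝ} (hk : k ≤ 1)
    (hd_le : ∀ t ω, |d t ω| ≤ k) (hv : 0 ≤ v) (N : ℕ) :
    ‖∫ ω, Complex.exp ((∑ t ∈ range N, d t ω : ℝ) * Complex.I) ∂μ - (Real.exp (-(v / 2)) : ℝ)‖
      ≤ N * (2 * k ^ 3)
        + Real.exp (N * k ^ 2 / 2) * ∫ ω, |∑ t ∈ range N, d t ω ^ 2 - v| ∂μ := by
  have h_sq_le : ∀ ω, ∑ t ∈ range N, d t ω ^ 2 ≤ N * k ^ 2 := fun ω => by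
    refine (sum_le_card_nsmul _ _ (k ^ 2) fun t _ => ?_).trans_eq (by simp)
    exact sq_le_sq' (neg_le_of_abs_le (hd_le t ω)) (le_of_abs_le (hd_le t ω))
  have h_sum_meas : Measurable fun ω => ∑ t ∈ range N, d t ω :=
    Finset.measurable_fun_sum _ fun t _ => hd.measurable t
  have h_sq_meas : Measurable fun ω => ∑ t ∈ range N, d t ω ^ 2 :=
    Finset.measurable_fun_sum _ fun t _ => (hd.measurable t).pow_const 2
  have h_exp_int : Integrable
      (fun ω => Complex.exp ((∑ t ∈ range N, d t ω : ℝ) * Complex.I)) μ :=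
    .of_bound (Complex.measurable_exp.comp ((Complex.measurable_ofReal.comp
      h_sum_meas).mul_const _)).aestronglyMeasurable 1
      (.of_forall fun ω => (Complex.norm_exp_ofReal_mul_I _).le)
  have h_dev_int : Integrable (fun ω => |∑ t ∈ range N, d t ω ^ 2 - v|) μ := by
    refine .of_bound (h_sq_meas.sub_const v).abs.aestronglyMeasurable (N * k ^ 2 + v)
      (.of_forall fun ω => ?_)
    rw [Real.norm_eq_abs, abs_abs]
    refine (abs_sub _ _).trans ?_
    rw [abs_of_nonneg hv, abs_of_nonneg (by positivity)]
    exact add_le_add_left (h_sq_le ω) v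
  calc _ = ‖∫ ω, (Complex.exp ((∑ t ∈ range N, d t ω : ℝ) * Complex.I)
          - (∏ t ∈ range N, (1 + d t ω * Complex.I)) * (Real.exp (-(v / 2)) : ℝ)) ∂μ‖ := by
        rw [integral_sub h_exp_int ((hd.integrable_prod N).mul_const _), integral_mul_const,
          hd.integral_prod_eq_one, one_mul]
    _ ≤ ∫ ω, (N * (2 * k ^ 3)
          + Real.exp (N * k ^ 2 / 2) * |∑ t ∈ range N, d t ω ^ 2 - v|) ∂μ := by
        refine norm_integral_le_of_norm_le ((integrable_const _).add (h_dev_int.const_mul _))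
          (.of_forall fun ω => (norm_exp_sum_mul_I_sub_le hk (fun t _ => hd_le t ω) hv).trans ?_)
        rw [card_range]
        gcongr
        exact h_sq_le ω
    _ = _ := by
        rw [integral_add (integrable_const _) (h_dev_int.const_mul _), integral_const,
          integral_const_mul, probReal_univ, one_smul]

end BoundedMartDiff

/-! ### The variance of a sum of variables with finite range of dependence -/

section Variance

variable {Ω : Type*} {mΩ : MeasurableSpace Ω} {μ : Measure Ω} [IsProbabilityMeasure μ]

lemma variance_le_sq_of_abs_le {Z : Ω → ℝ} {K : ℝ} (hZ : Measurable Z) (hK : ∀ ω, |Z ω| ≤ K) :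
    Var[Z; μ] ≤ K ^ 2 :=
  (variance_le_sq_of_bounded (.of_forall fun ω => abs_le.1 (hK ω)) hZ.aemeasurable).trans_eq
    (by ring)

lemma covariance_le_half_add_variance {Z Z' : Ω → ℝ} (hZ : MemLp Z 2 μ) (hZ' : MemLp Z' 2 μ) :
    cov[Z, Z'; μ] ≤ (Var[Z; μ] + Var[Z'; μ]) / 2 := by
  linarith [variance_sub hZ hZ', variance_nonneg (Z - Z') μ]

lemma variance_sum_le_of_indepFun {ζ : ℕ → Ω → ℝ} {w : ℕ} {K : ℝ} (hζ : ∀ t, Measurable (ζ t))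
    (hK : ∀ t ω, |ζ t ω| ≤ K) (h_indep : ∀ s t, s + w < t → IndepFun (ζ s) (ζ t) μ) (N : ℕ) :
    Var[fun ω => ∑ t ∈ range N, ζ t ω; μ] ≤ N * ((2 * w + 1) * K ^ 2) := by
  have h_memLp : ∀ t, MemLp (ζ t) 2 μ := fun t =>
    .of_bound (hζ t).aestronglyMeasurable K (.of_forall (hK t))
  have h_cov : ∀ s t, cov[ζ s, ζ t; μ] ≤ if t ∈ Icc (s - w) (s + w) then K ^ 2 else 0 :=
      fun s t => by
    split_ifs with h
    · have hs := variance_le_sq_of_abs_le (μ := μ) (hζ s) (hK s)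
      have ht := variance_le_sq_of_abs_le (μ := μ) (hζ t) (hK t)
      linarith [covariance_le_half_add_variance (h_memLp s) (h_memLp t)]
    · rw [mem_Icc, not_and_or] at h
      obtain h | h : t + w < s ∨ s + w < t := by omega
      · exact ((h_indep t s h).symm.covariance_eq_zero (h_memLp s) (h_memLp t)).le
      · exact ((h_indep s t h).covariance_eq_zero (h_memLp s) (h_memLp t)).le
  rw [variance_fun_sum' fun t _ => h_memLp t]
  refine (sum_le_card_nsmul _ _ ((2 * w + 1) * K ^ 2) fun s _ => ?_).trans_eq (by simp)
  refine (sum_le_sum fun t _ => h_cov s t).trans ?_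
  rw [← sum_filter, sum_const, nsmul_eq_mul]
  have h_card : #{t ∈ range N | t ∈ Icc (s - w) (s + w)} ≤ 2 * w + 1 :=
    (card_le_card fun t ht => (mem_filter.1 ht).2).trans (by rw [Nat.card_Icc]; omega)
  gcongr
  exact_mod_cast h_card

end Variance

/-! ### The observations as an independent sequence -/

lemma iIndepFun_of_eq_const_of_notMem {Ω ι : Type*} {β : ι → Type*} {mΩ : MeasurableSpace Ω}
    [∀ i, MeasurableSpace (β i)] {μ : Measure Ω} [IsProbabilityMeasure μ] {X : ∀ i, Ω → β i}
    {J : Set ι} (c : ∀ i, β i) (hJ : iIndepFun (fun j : J => X j) μ)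
    (hc : ∀ i ∉ J, ∀ ω, X i ω = c i) : iIndepFun X μ := by
  classical
  rw [iIndepFun_iff_measure_inter_preimage_eq_mul] at hJ ⊢
  intro S A hA
  by_cases h_miss : ∃ i ∈ S, i ∉ J ∧ c i ∉ A i
  · obtain ⟨i, hiS, hiJ, hi⟩ := h_miss
    have h_empty : X i ⁻¹' A i = ∅ := Set.eq_empty_of_forall_notMem fun ω hω =>
      hi (hc i hiJ ω ▸ hω)
    have h_zero : μ (X i ⁻¹' A i) = 0 := by rw [h_empty, measure_empty]
    rw [prod_eq_zero hiS h_zero]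
    exact measure_mono_null (Set.iInter₂_subset i hiS) h_zero
  · push Not at h_miss
    have h_univ : ∀ i ∈ S, i ∉ J → X i ⁻¹' A i = Set.univ := fun i hiS hiJ =>
      Set.eq_univ_of_forall fun ω => by
        rw [Set.mem_preimage, hc i hiJ ω]
        exact h_miss i hiS hiJ
    have h_inter : ⋂ i ∈ S, X i ⁻¹' A i = ⋂ j ∈ S.subtype (· ∈ J), X j ⁻¹' A j := by
      ext ω
      simp only [Set.mem_iInter, mem_subtype]
      refine ⟨fun h j hj => h j hj, fun h i hiS => ?_⟩
      by_cases hiJ : i ∈ J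
      · exact h ⟨i, hiJ⟩ hiS
      · exact h_univ i hiS hiJ ▸ Set.mem_univ ω
    rw [h_inter, hJ (S.subtype (· ∈ J)) (sets := fun j => A j)
      fun j hj => hA j (mem_subtype.1 hj),
      prod_subtype_eq_prod_filter (fun i => μ (X i ⁻¹' A i)), prod_filter]
    refine prod_congr rfl fun i hiS => ?_
    split_ifs with hiJ
    · rfl
    · rw [h_univ i hiS hiJ, measure_univ]

/-- The law on `ℕ` with masses `p y` for `y ≤ m`. -/
def finLaw (m : ℕ) (p : ℕ → ℝ) : Measure ℕ :=
  ∑ y ∈ range (m + 1), ENNReal.ofReal (p y) • Measure.dirac y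

section FinLaw

variable {m : ℕ} {p : ℕ → ℝ}

lemma finLaw_singleton (m : ℕ) (p : ℕ → ℝ) (k : ℕ) :
    finLaw m p {k} = if k ≤ m then ENNReal.ofReal (p k) else 0 := by
  rw [finLaw, Measure.finsetSum_apply]
  simp only [Measure.smul_apply, smul_eq_mul, measurableSet_singleton, Measure.dirac_apply',
    Set.indicator_apply, Set.mem_singleton_iff, Pi.one_apply, mul_ite, mul_one, mul_zero]
  rw [sum_ite_eq']
  simp

lemma ae_finLaw_le (m : ℕ) (p : ℕ → ℝ) : ∀ᵐ y ∂(finLaw m p), y ≤ m := by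
  rw [ae_iff, ← Set.biUnion_of_singleton {y | ¬ y ≤ m},
    measure_biUnion_null_iff (Set.to_countable _)]
  exact fun k hk => (finLaw_singleton m p k).trans (if_neg hk)

lemma isProbabilityMeasure_finLaw (hp : ∀ y ≤ m, 0 ≤ p y)
    (hp_sum : ∑ y ∈ range (m + 1), p y = 1) : IsProbabilityMeasure (finLaw m p) := by
  constructor
  rw [finLaw, Measure.finsetSum_apply]
  simp only [Measure.smul_apply, measure_univ, smul_eq_mul, mul_one]
  rw [← ENNReal.ofReal_sum_of_nonneg fun y hy => hp y (mem_range_succ_iff.1 hy), hp_sum,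
    ENNReal.ofReal_one]

lemma integral_finLaw (hp : ∀ y ≤ m, 0 ≤ p y) (φ : ℕ → ℝ) :
    ∫ y, φ y ∂(finLaw m p) = ∑ y ∈ range (m + 1), p y * φ y := by
  rw [finLaw, integral_finsetSum_measure fun y _ =>
    (integrable_dirac (by simp)).smul_measure ENNReal.ofReal_ne_top]
  refine sum_congr rfl fun y hy => ?_
  rw [integral_smul_measure, integral_dirac,
    ENNReal.toReal_ofReal (hp y (mem_range_succ_iff.1 hy)), smul_eq_mul]

end FinLaw

section ProductLaw

variable {Ω ι : Type*} {mΩ : MeasurableSpace Ω} {μ : Measure Ω}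

lemma map_eq_of_map_eq_pi [Fintype ι] {β : ι → Type*} [∀ i, MeasurableSpace (β i)]
    {V : ∀ i, Ω → β i} (hV : ∀ i, Measurable (V i)) {ρ : ∀ i, Measure (β i)}
    [∀ i, IsProbabilityMeasure (ρ i)] (h : μ.map (fun ω i => V i ω) = Measure.pi ρ) (i : ι) :
    μ.map (V i) = ρ i := by
  rw [← (measurePreserving_eval ρ i).map_eq, ← h,
    Measure.map_map (measurable_pi_apply i) (measurable_pi_iff.2 hV)]
  rfl

variable [IsProbabilityMeasure μ] {m : ι → ℕ} {p : ι → ℕ → ℝ} {Y : ι → Ω → ℕ}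

lemma map_eq_pi_finLaw [Fintype ι] (hY : ∀ i, Measurable (Y i))
    (hp : ∀ i, ∀ y ≤ m i, 0 ≤ p i y) (hp_sum : ∀ i, ∑ y ∈ range (m i + 1), p i y = 1)
    (h_law : ∀ k : ι → ℕ, (∀ i, k i ≤ m i) →
      μ {ω | ∀ i, Y i ω = k i} = ∏ i, ENNReal.ofReal (p i (k i))) :
    μ.map (fun ω i => Y i ω) = Measure.pi fun i => finLaw (m i) (p i) := by
  have : ∀ i, IsProbabilityMeasure (finLaw (m i) (p i)) :=
    fun i => isProbabilityMeasure_finLaw (hp i) (hp_sum i)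
  have hY' : Measurable fun ω i => Y i ω := measurable_pi_iff.2 hY
  have := Measure.isProbabilityMeasure_map (μ := μ) hY'.aemeasurable
  have h_singleton : ∀ k, Measure.pi (fun i => finLaw (m i) (p i)) {k}
      ≤ μ.map (fun ω i => Y i ω) {k} := fun k => by
    rw [Measure.pi_singleton]
    by_cases hk : ∀ i, k i ≤ m i
    · rw [Measure.map_apply hY' (measurableSet_singleton _)]
      refine (prod_congr rfl fun i _ => ?_).trans_le
        ((h_law k hk).symm.trans_le (measure_mono fun ω hω => funext hω))
      rw [finLaw_singleton, if_pos (hk i)]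
    · obtain ⟨i, hi⟩ := not_forall.1 hk
      rw [prod_eq_zero (mem_univ i) ((finLaw_singleton _ _ _).trans (if_neg hi))]
      exact zero_le
  refine (Measure.eq_of_le_of_isProbabilityMeasure (Measure.le_iff.2 fun s hs => ?_)).symm
  rw [← Measure.tsum_indicator_apply_singleton _ s hs,
    ← Measure.tsum_indicator_apply_singleton _ s hs]
  exact ENNReal.tsum_le_tsum fun k => Set.indicator_le_indicator (h_singleton k)

/-- Counts with product law may be modified on a null set and extended by `0` outside `s`, so that
they are bounded and independent everywhere. -/
lemma exists_iIndepFun_ae_eq (s : Finset ι) (hY : ∀ i ∈ s, Measurable (Y i))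
    (hp : ∀ i ∈ s, ∀ y ≤ m i, 0 ≤ p i y)
    (hp_sum : ∀ i ∈ s, ∑ y ∈ range (m i + 1), p i y = 1)
    (h_law : ∀ k : ι → ℕ, (∀ i ∈ s, k i ≤ m i) →
      μ {ω | ∀ i ∈ s, Y i ω = k i} = ∏ i ∈ s, ENNReal.ofReal (p i (k i))) :
    ∃ X : ι → Ω → ℕ, (∀ i, Measurable (X i)) ∧ iIndepFun X μ ∧ (∀ i ω, X i ω ≤ m i) ∧
      (∀ᵐ ω ∂μ, ∀ i ∈ s, X i ω = Y i ω) ∧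
      ∀ i ∈ s, ∀ φ : ℕ → ℝ, ∫ ω, φ (X i ω) ∂μ = ∑ y ∈ range (m i + 1), p i y * φ y := by
  classical
  have : ∀ i : s, IsProbabilityMeasure (finLaw (m i) (p i)) :=
    fun i => isProbabilityMeasure_finLaw (hp i i.2) (hp_sum i i.2)
  have hY' : ∀ i : s, Measurable (Y i) := fun i => hY i i.2
  have h_map : μ.map (fun ω (i : s) => Y i ω) = Measure.pi fun i : s => finLaw (m i) (p i) := by
    refine map_eq_pi_finLaw hY' (fun i => hp i i.2) (fun i => hp_sum i i.2) fun k hk => ?_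
    have h_ext := h_law (fun i => if hi : i ∈ s then k ⟨i, hi⟩ else 0) fun i hi => by
      rw [dif_pos hi]
      exact hk ⟨i, hi⟩
    rw [← prod_coe_sort] at h_ext
    simpa +contextual [Subtype.forall] using h_ext
  have h_marginal := map_eq_of_map_eq_pi hY' h_map
  have h_indep : iIndepFun (fun i : s => Y i) μ := by
    rw [iIndepFun_iff_map_fun_eq_pi_map fun i => (hY' i).aemeasurable, funext h_marginal, h_map]
  have h_le : ∀ᵐ ω ∂μ, ∀ i ∈ s, Y i ω ≤ m i := (Finset.eventually_all s).2 fun i hi =>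
    ae_of_ae_map (hY i hi).aemeasurable (h_marginal ⟨i, hi⟩ ▸ ae_finLaw_le (m i) (p i))
  let X : ι → Ω → ℕ := fun i ω => if i ∈ s then min (Y i ω) (m i) else 0
  have hX_of_mem : ∀ i : s, X i = fun ω => min (Y i ω) (m i) := fun i => by simp [X]
  have hX_eq : ∀ᵐ ω ∂μ, ∀ i ∈ s, X i ω = Y i ω := by
    filter_upwards [h_le] with ω hω i hi
    exact (congrFun (hX_of_mem ⟨i, hi⟩) ω).trans (min_eq_left (hω i hi))
  refine ⟨X, fun i => ?_, ?_, fun i ω => ?_, hX_eq, fun i hi φ => ?_⟩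
  · by_cases hi : i ∈ s
    · exact hX_of_mem ⟨i, hi⟩ ▸ (hY i hi).min measurable_const
    · simp only [X, if_neg hi, measurable_const]
  · refine iIndepFun_of_eq_const_of_notMem (J := s) 0 ?_ fun i hi ω => if_neg hi
    exact funext hX_of_mem ▸ h_indep.comp (fun i y => min y (m i)) fun i =>
      measurable_of_countable _
  · dsimp only [X]
    split_ifs
    exacts [min_le_right _ _, Nat.zero_le _]
  · rw [← integral_finLaw (hp i hi), ← h_marginal ⟨i, hi⟩,
      integral_map (hY i hi).aemeasurable (measurable_of_countable φ).aestronglyMeasurable]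
    refine integral_congr_ae ?_
    filter_upwards [hX_eq] with ω hω
    rw [hω i hi]

lemma ae_le_of_measure_eq_prod (s : Finset ι) (hY : ∀ i ∈ s, Measurable (Y i))
    (hp : ∀ i ∈ s, ∀ y ≤ m i, 0 ≤ p i y)
    (hp_sum : ∀ i ∈ s, ∑ y ∈ range (m i + 1), p i y = 1)
    (h_law : ∀ k : ι → ℕ, (∀ i ∈ s, k i ≤ m i) →
      μ {ω | ∀ i ∈ s, Y i ω = k i} = ∏ i ∈ s, ENNReal.ofReal (p i (k i))) :
    ∀ᵐ ω ∂μ, ∀ i ∈ s, Y i ω ≤ m i := by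
  obtain ⟨X, -, -, h_le, h_eq, -⟩ := exists_iIndepFun_ae_eq s hY hp hp_sum h_law
  filter_upwards [h_eq] with ω hω i hi
  exact hω i hi ▸ h_le i ω

end ProductLaw

lemma lintegral_prod_binDens {ι : Type*} [Fintype ι] (ν : Measure ℝ) [IsProbabilityMeasure ν]
    {m k : ι → ℕ} (hk : ∀ i, k i ≤ m i) (p : ι → ℝ × ℝ) :
    ∫⁻ α, ENNReal.ofReal (∏ i, binDens (m i) (k i) ((p i).1 + (p i).2 * α i))
        ∂(Measure.pi fun _ : ι => ν)
      = ∏ i, ENNReal.ofReal (margDens ν (m i) (p i) (k i)) := by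
  rw [← ofReal_integral_eq_lintegral_ofReal
    (.fintype_prod (f := fun i a => binDens (m i) (k i) ((p i).1 + (p i).2 * a))
      fun i => integrable_binDens (hk i) (p i))
    (.of_forall fun α => prod_nonneg fun i _ => (binDens_pos _ _ _).le),
    integral_fintype_prod_eq_prod fun i a => binDens (m i) (k i) ((p i).1 + (p i).2 * a)]
  exact ENNReal.ofReal_prod_of_nonneg fun i _ => (margDens_pos (hk i) (p i)).le

/-! ### Chaining -/

/-- Finite nets `T k` of the ball of radius `R` around `x₀` at the scales `R / 2 ^ k`, each
containing the centre, with entropy growing like `d * k`. -/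
structure DyadicNets {E : Type*} [PseudoMetricSpace E] (x₀ : E) (R C : ℝ) (d : ℕ)
    (T : ℕ → Finset E) : Prop where
  center_mem : ∀ k, x₀ ∈ T k
  mem_closedBall : ∀ k, ∀ p ∈ T k, p ∈ Metric.closedBall x₀ R
  exists_dist_le : ∀ k, ∀ x ∈ Metric.closedBall x₀ R, ∃ p ∈ T k, dist x p ≤ R / 2 ^ k
  card_le : ∀ k, (#(T k) : ℝ) ≤ C * (2 ^ k) ^ d

lemma exists_dyadicNets_real (a : ℝ) {R : ℝ} (hR : 0 < R) :
    ∃ T, DyadicNets a R 3 1 T := by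
  refine ⟨fun k => (Icc (-(2 ^ k : ℤ)) (2 ^ k)).image fun z : ℤ => a + R / 2 ^ k * z,
    fun k => mem_image.2 ⟨0, by simp, by simp⟩, fun k p hp => ?_, fun k x hx => ?_, fun k => ?_⟩
  · obtain ⟨z, hz, rfl⟩ := mem_image.1 hp
    have h_abs : |(z : ℝ)| ≤ 2 ^ k := by exact_mod_cast abs_le.2 (mem_Icc.1 hz)
    rw [Metric.mem_closedBall, Real.dist_eq, add_sub_cancel_left, abs_mul,
      abs_of_pos (by positivity), div_mul_eq_mul_div, div_le_iff₀ (by positivity)]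
    gcongr
  · have h_scale : 0 < R / 2 ^ k := by positivity
    set z : ℤ := ⌊(x - a) / (R / 2 ^ k)⌋
    rw [Metric.mem_closedBall, Real.dist_eq, abs_le] at hx
    have h_mul : 2 ^ k * (R / 2 ^ k) = R := by field_simp
    have h_lower : -(2 ^ k : ℝ) ≤ (x - a) / (R / 2 ^ k) := by
      rw [le_div_iff₀ h_scale]; linarith
    have h_upper : (x - a) / (R / 2 ^ k) ≤ 2 ^ k := by
      rw [div_le_iff₀ h_scale]; linarith
    have h_fract : x - (a + R / 2 ^ k * z) = R / 2 ^ k * Int.fract ((x - a) / (R / 2 ^ k)) := by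
      rw [Int.fract, mul_sub, mul_div_cancel₀ _ h_scale.ne', sub_add_eq_sub_sub]
    refine ⟨_, mem_image.2 ⟨z, mem_Icc.2 ⟨Int.le_floor.2 (by exact_mod_cast h_lower), ?_⟩, rfl⟩, ?_⟩
    · exact Int.floor_le_iff.2 (h_upper.trans_lt (by push_cast; exact lt_add_one _))
    · rw [Real.dist_eq, h_fract, abs_of_nonneg (mul_nonneg h_scale.le (Int.fract_nonneg _))]
      exact mul_le_of_le_one_right h_scale.le (Int.fract_lt_one _).le
  · have h_card : #(Icc (-(2 ^ k : ℤ)) (2 ^ k)) ≤ 3 * 2 ^ k := by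
      rw [Int.card_Icc, Int.toNat_le]
      push_cast
      linarith [one_le_pow₀ (M₀ := ℤ) (a := 2) (n := k) (by norm_num)]
    rw [pow_one]
    exact_mod_cast card_image_le.trans h_card

lemma DyadicNets.pi {ι : Type*} [Fintype ι] [DecidableEq ι] {E : ι → Type*}
    [∀ i, PseudoMetricSpace (E i)] {x₀ : ∀ i, E i} {R C : ℝ} {d : ℕ} {T : ∀ i, ℕ → Finset (E i)}
    (hR : 0 ≤ R) (hT : ∀ i, DyadicNets (x₀ i) R C d (T i)) :
    DyadicNets x₀ R (C ^ Fintype.card ι) (d * Fintype.card ι)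
      (fun k => Fintype.piFinset fun i => T i k) where
  center_mem k := Fintype.mem_piFinset.2 fun i => (hT i).center_mem k
  mem_closedBall k p hp := by
    rw [closedBall_pi _ hR]
    exact fun i _ => (hT i).mem_closedBall k _ (Fintype.mem_piFinset.1 hp i)
  exists_dist_le k x hx := by
    rw [closedBall_pi _ hR] at hx
    choose p hp hxp using fun i => (hT i).exists_dist_le k (x i) (hx i trivial)
    exact ⟨p, Fintype.mem_piFinset.2 hp, (dist_pi_le_iff (by positivity)).2 hxp⟩
  card_le k := by
    rw [Fintype.card_piFinset, Nat.cast_prod, pow_mul, ← mul_pow, ← card_univ]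
    rw [← prod_const]
    exact prod_le_prod (fun i _ => Nat.cast_nonneg _) fun i _ => (hT i).card_le k

lemma DyadicNets.prod {E F : Type*} [PseudoMetricSpace E] [PseudoMetricSpace F] {x₀ : E} {y₀ : F}
    {R C C' : ℝ} {d d' : ℕ} {T : ℕ → Finset E} {S : ℕ → Finset F}
    (hT : DyadicNets x₀ R C d T) (hS : DyadicNets y₀ R C' d' S) :
    DyadicNets (x₀, y₀) R (C * C') (d + d') (fun k => T k ×ˢ S k) where
  center_mem k := mk_mem_product (hT.center_mem k) (hS.center_mem k)
  mem_closedBall k p hp := by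
    rw [← closedBall_prod_same]
    exact ⟨hT.mem_closedBall k _ (mem_product.1 hp).1, hS.mem_closedBall k _ (mem_product.1 hp).2⟩
  exists_dist_le k x hx := by
    rw [← closedBall_prod_same] at hx
    obtain ⟨p, hp, hxp⟩ := hT.exists_dist_le k x.1 hx.1
    obtain ⟨q, hq, hxq⟩ := hS.exists_dist_le k x.2 hx.2
    exact ⟨(p, q), mk_mem_product hp hq, max_le hxp hxq⟩
  card_le k := by
    rw [card_product, Nat.cast_mul, pow_add, mul_mul_mul_comm]
    exact mul_le_mul (hT.card_le k) (hS.card_le k) (Nat.cast_nonneg _)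
      ((Nat.cast_nonneg _).trans (hT.card_le k))

lemma exists_dyadicNets_pi_prod {ι : Type*} [Fintype ι] (δ₀ : (ι → ℝ) × ℝ) {R : ℝ} (hR : 0 < R) :
    ∃ C d T, DyadicNets δ₀ R C d T := by
  classical
  choose T hT using fun i => exists_dyadicNets_real (δ₀.1 i) hR
  obtain ⟨S, hS⟩ := exists_dyadicNets_real δ₀.2 hR
  exact ⟨_, _, _, (DyadicNets.pi hR.le hT).prod hS⟩

lemma measure_exists_exists_le {Ω E : Type*} {mΩ : MeasurableSpace Ω} {μ : Measure Ω}
    {s t : Finset E} {A : E → E → Set Ω} {c : ℝ}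
    (hA : ∀ p ∈ s, ∀ p' ∈ t, μ (A p p') ≤ ENNReal.ofReal c) :
    μ {ω | ∃ p ∈ s, ∃ p' ∈ t, ω ∈ A p p'} ≤ ENNReal.ofReal (#s * #t * c) := by
  calc μ {ω | ∃ p ∈ s, ∃ p' ∈ t, ω ∈ A p p'} = μ (⋃ p ∈ s, ⋃ p' ∈ t, A p p') := by
        congr 1; ext ω; simp
    _ ≤ ∑ _p ∈ s, ∑ _p' ∈ t, ENNReal.ofReal c :=
        (measure_biUnion_finset_le _ _).trans <| sum_le_sum fun _ hp =>
          (measure_biUnion_finset_le _ _).trans <| sum_le_sum fun _ hp' => hA _ hp _ hp'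
    _ = ENNReal.ofReal (#s * #t * c) := by
        rw [ENNReal.ofReal_mul (by positivity), ENNReal.ofReal_mul (by positivity)]
        simp [mul_assoc]

section Chaining

variable {E : Type*} [PseudoMetricSpace E] {x₀ : E} {R C : ℝ} {d : ℕ} {T : ℕ → Finset E}

/-- The chain starts at the centre and then follows the roundings of `x` to finer and finer nets. -/
lemma DyadicNets.exists_chain (hT : DyadicNets x₀ R C d T) (k₀ : ℕ) {x : E}
    (hx : dist x x₀ ≤ R / 2 ^ k₀) :
    ∃ P : ℕ → E, P 0 = x₀ ∧ (∀ k, P k ∈ T (k + k₀)) ∧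
      (∀ k, dist (P k) (P (k + 1)) ≤ 2 * R / 2 ^ (k + k₀)) ∧ Tendsto P atTop (𝓝 x) := by
  have hR : 0 ≤ R := nonneg_of_mul_nonneg_left
    (by simpa [div_eq_mul_inv] using dist_nonneg.trans hx) (by positivity : (0 : ℝ) < (2 ^ k₀)⁻¹)
  have hxB : x ∈ Metric.closedBall x₀ R :=
    hx.trans (div_le_self hR (one_le_pow₀ one_le_two))
  choose π hπ hxπ using fun k => hT.exists_dist_le k x hxB
  let P : ℕ → E := fun k => if k = 0 then x₀ else π (k + k₀)
  have hP_mem : ∀ k, P k ∈ T (k + k₀) := fun k => by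
    dsimp only [P]
    split_ifs
    exacts [hT.center_mem _, hπ _]
  have hP_dist : ∀ k, dist x (P k) ≤ R / 2 ^ (k + k₀) := fun k => by
    dsimp only [P]
    split_ifs with hk
    exacts [by simpa [hk] using hx, hxπ _]
  refine ⟨P, if_pos rfl, hP_mem, fun k => ?_, ?_⟩
  · calc dist (P k) (P (k + 1)) ≤ R / 2 ^ (k + k₀) + R / 2 ^ (k + 1 + k₀) :=
          (dist_triangle_left _ _ x).trans (add_le_add (hP_dist k) (hP_dist (k + 1)))
      _ ≤ R / 2 ^ (k + k₀) + R / 2 ^ (k + k₀) := by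
        gcongr
        exacts [one_le_two, Nat.le_succ k]
      _ = 2 * R / 2 ^ (k + k₀) := by ring
  · rw [tendsto_iff_dist_tendsto_zero]
    refine squeeze_zero (fun _ => dist_nonneg) (fun k => dist_comm x (P k) ▸ hP_dist k) ?_
    exact (tendsto_add_atTop_iff_nat k₀).2 <| tendsto_const_nhds.div_atTop <|
      tendsto_pow_atTop_atTop_of_one_lt one_lt_two

lemma DyadicNets.dist_le_tsum {F : Type*} [PseudoMetricSpace F] (hT : DyadicNets x₀ R C d T)
    {z : E → F} (hz : ContinuousOn z (Metric.closedBall x₀ R)) {q : ℕ → ℝ} (hq : Summable q)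
    {k₀ : ℕ} (h_link : ∀ k, ∀ p ∈ T (k + k₀), ∀ p' ∈ T (k + k₀ + 1),
      dist p p' ≤ 2 * R / 2 ^ (k + k₀) → dist (z p) (z p') ≤ q k)
    {x : E} (hxB : x ∈ Metric.closedBall x₀ R) (hx : dist x x₀ ≤ R / 2 ^ k₀) :
    dist (z x₀) (z x) ≤ ∑' k, q k := by
  obtain ⟨P, hP_zero, hP_mem, hP_dist, hP_tendsto⟩ := hT.exists_chain k₀ hx
  have hP_within : Tendsto P atTop (𝓝[Metric.closedBall x₀ R] x) :=
    tendsto_nhdsWithin_iff.2 ⟨hP_tendsto, .of_forall fun k => hT.mem_closedBall _ _ (hP_mem k)⟩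
  have h_step : ∀ k, dist (z (P k)) (z (P k.succ)) ≤ q k := fun k =>
    h_link k _ (hP_mem k) _ (by simpa [add_right_comm] using hP_mem (k + 1)) (hP_dist k)
  rw [← hP_zero]
  exact dist_le_tsum_of_dist_le_of_tendsto₀ q h_step hq ((hz x hxB).tendsto.comp hP_within)

/-- A bound for the probability that some link of level `k` is longer than `2 ^ (-k / 2)`. -/
def chainBound (C : ℝ) (d : ℕ) (a : ℝ) (k : ℕ) : ℝ :=
  C * (2 ^ k) ^ d * (C * (2 ^ (k + 1)) ^ d) * (2 * Real.exp (-(a * 2 ^ k)))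

lemma summable_chainBound (C : ℝ) (d : ℕ) {a : ℝ} (ha : 0 < a) : Summable (chainBound C d a) := by
  have h_summable : Summable fun k : ℕ =>
      ((2 ^ k : ℕ) : ℝ) ^ (2 * d) * Real.exp (-a * (2 ^ k : ℕ)) :=
    (Real.summable_pow_mul_exp_neg_nat_mul (2 * d) ha).comp_injective
      (Nat.pow_right_injective le_rfl)
  refine (h_summable.mul_left (2 * C ^ 2 * 2 ^ d)).congr fun k => ?_
  rw [chainBound]
  push_cast
  ring_nf

variable {Ω : Type*} {mΩ : MeasurableSpace Ω} {μ : Measure Ω} {Z : E → Ω → ℝ} {K : ℝ}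

lemma DyadicNets.measure_exists_link_le [IsFiniteMeasure μ] (hT : DyadicNets x₀ R C d T)
    (hR : 0 < R) (hK : 0 < K)
    (h_tail : ∀ x ∈ Metric.closedBall x₀ R, ∀ x' ∈ Metric.closedBall x₀ R, ∀ ρ q : ℝ, 0 < ρ →
      dist x x' ≤ ρ → 0 < q →
      μ.real {ω | q ≤ |Z x ω - Z x' ω|} ≤ 2 * Real.exp (-(q ^ 2 / (2 * (K * ρ) ^ 2)))) (k : ℕ) :
    μ {ω | ∃ p ∈ T k, ∃ p' ∈ T (k + 1), dist p p' ≤ 2 * R / 2 ^ k ∧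
        √(1 / 2) ^ k ≤ |Z p ω - Z p' ω|}
      ≤ ENNReal.ofReal (chainBound C d (1 / (8 * (K * R) ^ 2)) k) := by
  have h_exponent : (√(1 / 2) ^ k) ^ 2 / (2 * (K * (2 * R / 2 ^ k)) ^ 2)
      = 1 / (8 * (K * R) ^ 2) * 2 ^ k := by
    rw [← pow_mul, mul_comm, pow_mul, Real.sq_sqrt (by norm_num), one_div, inv_pow]
    field_simp
    norm_num
  refine (measure_exists_exists_le (s := T k) (t := T (k + 1))
    (A := fun p p' => {ω | dist p p' ≤ 2 * R / 2 ^ k ∧ √(1 / 2) ^ k ≤ |Z p ω - Z p' ω|})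
    (c := 2 * Real.exp (-(1 / (8 * (K * R) ^ 2) * 2 ^ k)))
    fun p hp p' hp' => ?_).trans (ENNReal.ofReal_le_ofReal ?_)
  · by_cases h_dist : dist p p' ≤ 2 * R / 2 ^ k
    · simp only [h_dist, true_and]
      refine (ENNReal.le_ofReal_iff_toReal_le (measure_ne_top _ _) (by positivity)).2 ?_
      rw [← h_exponent]
      exact h_tail p (hT.mem_closedBall k p hp) p' (hT.mem_closedBall _ p' hp') _ _
        (by positivity) h_dist (by positivity)
    · simp [h_dist]
  · exact mul_le_mul_of_nonneg_right (mul_le_mul (hT.card_le k) (hT.card_le (k + 1))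
      (Nat.cast_nonneg _) ((Nat.cast_nonneg _).trans (hT.card_le k))) (by positivity)

/-- The modulus `ε` depends on the process only through its subgaussian constant `K`. -/
lemma DyadicNets.exists_measureReal_oscillation_le (hT : DyadicNets x₀ R C d T) (hR : 0 < R)
    (hK : 0 < K) {η : ℝ} (hη : 0 < η) :
    ∃ ε > 0, ε ≤ R ∧ ∀ (μ : Measure Ω) [IsFiniteMeasure μ] (Z : E → Ω → ℝ),
      (∀ ω, ContinuousOn (fun x => Z x ω) (Metric.closedBall x₀ R)) →
      (∀ x ∈ Metric.closedBall x₀ R, ∀ x' ∈ Metric.closedBall x₀ R, ∀ ρ q : ℝ, 0 < ρ →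
        dist x x' ≤ ρ → 0 < q →
        μ.real {ω | q ≤ |Z x ω - Z x' ω|} ≤ 2 * Real.exp (-(q ^ 2 / (2 * (K * ρ) ^ 2)))) →
      μ.real {ω | ∃ x, dist x x₀ ≤ ε ∧ η < |Z x ω - Z x₀ ω|} ≤ η := by
  set q : ℕ → ℝ := fun k => √(1 / 2) ^ k
  set b : ℕ → ℝ := chainBound C d (1 / (8 * (K * R) ^ 2))
  have hq : Summable q := summable_geometric_of_lt_one (by positivity)
    ((Real.sqrt_lt' one_pos).2 (by norm_num))
  have hb_summable : Summable b := summable_chainBound C d (by positivity)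
  have hb_nonneg : ∀ k, 0 ≤ b k := fun k => mul_nonneg (mul_nonneg
    ((Nat.cast_nonneg _).trans (hT.card_le k)) ((Nat.cast_nonneg _).trans (hT.card_le (k + 1))))
    (by positivity)
  obtain ⟨k₀, hq_tail, hb_tail⟩ := (((tendsto_sum_nat_add q).eventually (gt_mem_nhds hη)).and
    ((tendsto_sum_nat_add b).eventually (gt_mem_nhds hη))).exists
  have h_scale_le : R / 2 ^ k₀ ≤ R := div_le_self hR.le (one_le_pow₀ one_le_two)
  refine ⟨R / 2 ^ k₀, by positivity, h_scale_le, fun μ _ Z hZ h_tail => ?_⟩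
  let bad : ℕ → Set Ω := fun k => {ω | ∃ p ∈ T k, ∃ p' ∈ T (k + 1),
    dist p p' ≤ 2 * R / 2 ^ k ∧ q k ≤ |Z p ω - Z p' ω|}
  have h_subset : {ω | ∃ x, dist x x₀ ≤ R / 2 ^ k₀ ∧ η < |Z x ω - Z x₀ ω|}
      ⊆ ⋃ k, bad (k + k₀) := by
    rintro ω ⟨x, hx, h_gt⟩
    by_contra h_good
    simp only [bad, Set.mem_iUnion, Set.mem_ofPred_eq, not_exists, not_and, not_le] at h_good
    refine (h_gt.trans_le ?_).not_ge hq_tail.le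
    rw [← Real.dist_eq, dist_comm]
    exact hT.dist_le_tsum (hZ ω) ((summable_nat_add_iff k₀).2 hq)
      (fun k p hp p' hp' h => (h_good k p hp p' hp' h).le) (hx.trans h_scale_le) hx
  refine ENNReal.toReal_le_of_le_ofReal hη.le ?_
  calc _ ≤ ∑' k, μ (bad (k + k₀)) := (measure_mono h_subset).trans (measure_iUnion_le _)
    _ ≤ ∑' k, ENNReal.ofReal (b (k + k₀)) :=
        ENNReal.tsum_le_tsum fun k => hT.measure_exists_link_le hR hK h_tail (k + k₀)
    _ = ENNReal.ofReal (∑' k, b (k + k₀)) := (ENNReal.ofReal_tsum_of_nonneg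
        (fun k => hb_nonneg _) ((summable_nat_add_iff k₀).2 hb_summable)).symm
    _ ≤ ENNReal.ofReal η := ENNReal.ofReal_le_ofReal hb_tail.le

end Chaining

/-! ### Lagged sums -/

/-- The sum of the products of the terms of `ξ` at distance `a`, for indices below `N`. Sequences
carry the padding value `ξ 0 = 0`, so that the truncated subtraction drops the terms `t ≤ a`. -/
def lagSum (N a : ℕ) (ξ : ℕ → ℝ) : ℝ := ∑ t ∈ range N, ξ t * ξ (t - a)

section LagSum

variable {ξ b : ℕ → ℝ} {N : ℕ}

lemma sum_mul_tsub (b : ℕ → ℝ) (hξ : ξ 0 = 0) (N a : ℕ) :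
    ∑ t ∈ range N, b t * ξ (t - a) = ∑ t ∈ range (N - a), b (t + a) * ξ t := by
  have h_zero : ∀ t ∈ range N, t ∉ Ico a N → b t * ξ (t - a) = 0 := fun t ht hta => by
    rw [mem_Ico, not_and_or, not_le] at hta
    rw [Nat.sub_eq_zero_of_le (hta.resolve_right (not_not.2 (mem_range.1 ht))).le, hξ, mul_zero]
  rw [← sum_subset (fun t ht => mem_range.2 (mem_Ico.1 ht).2) h_zero, sum_Ico_eq_sum_range]
  simp only [add_comm a, Nat.add_sub_cancel]

lemma sum_Icc_eq_lagSum (hξ : ξ 0 = 0) (n a : ℕ) :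
    ∑ t ∈ Icc (a + 1) n, ξ t * ξ (t - a) = lagSum (n + 1) a ξ := by
  refine sum_subset (fun t ht => mem_range_succ_iff.2 (mem_Icc.1 ht).2) fun t ht hta => ?_
  rw [mem_Icc, not_and_or, not_le] at hta
  rw [Nat.sub_eq_zero_of_le (Nat.lt_succ_iff.1
    (hta.resolve_right (not_not.2 (mem_range_succ_iff.1 ht)))), hξ, mul_zero]

/-- If `b t` is the mean of `ξ t`, then the first sum on the right is a martingale. -/
lemma lagSum_eq_sum_sub_mul_add (hξ : ξ 0 = 0) (hb : b 0 = 0) (hb_ge : ∀ t, N ≤ t → b t = 0)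
    (a : ℕ) :
    lagSum N a ξ
      = ∑ t ∈ range N, (ξ t - b t) * (ξ (t - a) + b (t + a)) + lagSum N a b := by
  have h_shift : ∀ g : ℕ → ℝ, g 0 = 0 →
      ∑ t ∈ range N, b t * g (t - a) = ∑ t ∈ range N, b (t + a) * g t := fun g hg => by
    rw [sum_mul_tsub b hg]
    refine sum_subset (range_mono (Nat.sub_le N a)) fun t _ ht => ?_
    rw [hb_ge _ (Nat.sub_le_iff_le_add.1 (not_lt.1 (mt mem_range.2 ht))), zero_mul]
  have h_expand : ∀ t, (ξ t - b t) * (ξ (t - a) + b (t + a))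
      = ξ t * ξ (t - a) + b (t + a) * ξ t - b t * ξ (t - a) - b (t + a) * b t := fun t => by ring
  simp only [lagSum, h_expand, sum_sub_distrib, sum_add_distrib, h_shift ξ hξ, h_shift b hb]
  ring

lemma abs_lagSum_le (hb : b 0 = 0) (N a : ℕ) : |lagSum N a b| ≤ ∑ t ∈ range N, b t ^ 2 := by
  have h_shift : ∑ t ∈ range N, b (t - a) ^ 2 ≤ ∑ t ∈ range N, b t ^ 2 := by
    have h := sum_mul_tsub (ξ := fun t => b t ^ 2) 1 (by simp [hb]) N a
    simp only [Pi.one_apply, one_mul] at h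
    exact h.trans_le (sum_le_sum_of_subset_of_nonneg (range_mono (Nat.sub_le N a))
      fun t _ _ => sq_nonneg (b t))
  calc |lagSum N a b| ≤ ∑ t ∈ range N, |b t * b (t - a)| := abs_sum_le_sum_abs _ _
    _ ≤ ∑ t ∈ range N, (b t ^ 2 + b (t - a) ^ 2) / 2 := sum_le_sum fun t _ => abs_le.2
        ⟨by linarith [sq_nonneg (b t + b (t - a))], by linarith [sq_nonneg (b t - b (t - a))]⟩
    _ ≤ ∑ t ∈ range N, b t ^ 2 := by
        rw [← sum_div, sum_add_distrib]
        linarith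

end LagSum

/-- The combination `∑_a θ_a ξ_{t-a}` of the terms preceding `t`, over the lags `a = 1, …, L`. -/
def lagComb {L : ℕ} (θ : Fin L → ℝ) (ξ : ℕ → ℝ) (t : ℕ) : ℝ := ∑ a : Fin L, θ a * ξ (t - (a + 1))

lemma sum_mul_lagComb {L : ℕ} (θ : Fin L → ℝ) (ξ : ℕ → ℝ) (N : ℕ) :
    ∑ t ∈ range N, ξ t * lagComb θ ξ t = ∑ a : Fin L, θ a * lagSum N (a + 1) ξ := by
  simp only [lagComb, lagSum, mul_sum]
  rw [sum_comm]
  exact sum_congr rfl fun a _ => sum_congr rfl fun t _ => by ring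

lemma abs_lagComb_le {L : ℕ} {θ : Fin L → ℝ} {ξ : ℕ → ℝ} {D K : ℝ} (hD : ∀ a, |θ a| ≤ D)
    (hK : ∀ t, |ξ t| ≤ K) (t : ℕ) : |lagComb θ ξ t| ≤ L * (D * K) := by
  calc |lagComb θ ξ t| ≤ ∑ a : Fin L, |θ a * ξ (t - (a + 1))| := abs_sum_le_sum_abs _ _
    _ ≤ ∑ _a : Fin L, D * K := sum_le_sum fun a _ => by
        rw [abs_mul]
        exact mul_le_mul (hD a) (hK _) (abs_nonneg _) ((abs_nonneg _).trans (hD a))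
    _ = L * (D * K) := by rw [sum_const, card_univ, Fintype.card_fin, nsmul_eq_mul]

/-! ### The central limit theorem for lagged sums -/

lemma integral_abs_sub_integral_le_sqrt_variance {Ω : Type*} {mΩ : MeasurableSpace Ω}
    {μ : Measure Ω} [IsProbabilityMeasure μ] {Z : Ω → ℝ} (hZ : MemLp Z 2 μ) :
    ∫ ω, |Z ω - μ[Z]| ∂μ ≤ √Var[Z; μ] := by
  have h_memLp : MemLp (fun ω => |Z ω - μ[Z]|) 2 μ := (hZ.sub (memLp_const _)).abs
  refine Real.le_sqrt_of_sq_le ?_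
  rw [variance_eq_integral hZ.aemeasurable]
  have h_var := variance_nonneg (fun ω => |Z ω - μ[Z]|) μ
  rw [variance_eq_sub h_memLp] at h_var
  simpa only [Pi.pow_apply, sq_abs] using sub_nonneg.1 h_var

/-- Independent centred variables bounded by `K`, with the padding value `0` of `lagSum` at the
index `0`. -/
structure BoundedNoise {Ω : Type*} {mΩ : MeasurableSpace Ω} (μ : Measure Ω) (K : ℝ)
    (ξ : ℕ → Ω → ℝ) : Prop where
  measurable : ∀ t, Measurable (ξ t)
  indep : iIndepFun ξ μ
  zero_eq : ∀ ω, ξ 0 ω = 0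
  abs_le : ∀ t ω, |ξ t ω| ≤ K
  integral_eq_zero : ∀ t, ∫ ω, ξ t ω ∂μ = 0

namespace BoundedNoise

variable {Ω : Type*} {mΩ : MeasurableSpace Ω} {μ : Measure Ω} {K : ℝ} {ξ : ℕ → Ω → ℝ} {L : ℕ}

lemma measurable_lagComb (hξ : BoundedNoise μ K ξ) (θ : Fin L → ℝ) {S : Set ℕ} {t : ℕ}
    (hS : ∀ a : Fin L, t ≠ 0 → t - (a + 1) ∈ S) :
    Measurable[sigmaOf ξ S] (fun ω => lagComb θ (ξ · ω) t) := by
  refine Finset.measurable_sum _ fun a _ => Measurable.const_mul ?_ _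
  rcases eq_or_ne t 0 with rfl | ht
  · simp only [Nat.zero_sub, hξ.zero_eq, measurable_const]
  · exact measurable_sigmaOf (X := ξ) (hS a ht)

variable [IsProbabilityMeasure μ]

lemma memLp (hξ : BoundedNoise μ K ξ) (t : ℕ) : MemLp (ξ t) 2 μ :=
  .of_bound (hξ.measurable t).aestronglyMeasurable K (.of_forall (hξ.abs_le t))

lemma boundedMartDiff (hξ : BoundedNoise μ K ξ) (θ : Fin L → ℝ) :
    BoundedMartDiff (strictPast hξ.measurable) μ
      (fun t ω => ξ t ω * lagComb θ (ξ · ω) t) := by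
  obtain ⟨D, hD⟩ := (Set.finite_range fun a => |θ a|).bddAbove
  exact .of_mul (fun t => measurable_sigmaOf (Set.mem_Iio.2 t.lt_succ_self))
    (fun t => ⟨K, hξ.abs_le t⟩) hξ.integral_eq_zero
    (fun t => indep_of_indep_of_le_left (indep_sigmaOf (S := {t}) hξ.measurable hξ.indep
      (by simp)) (measurable_sigmaOf (X := ξ) (Set.mem_singleton t)).comap_le)
    (fun t => hξ.measurable_lagComb θ fun a ht => Set.mem_Iio.2 (by lia))
    (fun t => ⟨L * (D * K), fun ω => abs_lagComb_le (fun a => hD (Set.mem_range_self a))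
      (hξ.abs_le · ω) t⟩)

lemma integral_lagComb_sq (hξ : BoundedNoise μ K ξ) (θ : Fin L → ℝ) (t : ℕ) :
    ∫ ω, lagComb θ (ξ · ω) t ^ 2 ∂μ = ∑ a : Fin L, θ a ^ 2 * Var[ξ (t - (a + 1)); μ] := by
  have h_memLp : ∀ a : Fin L, MemLp (fun ω => θ a * ξ (t - (a + 1)) ω) 2 μ := fun a =>
    (hξ.memLp _).const_mul (θ a)
  have h_indep : Set.Pairwise (univ : Finset (Fin L)) fun a b =>
      IndepFun (fun ω => θ a * ξ (t - (a + 1)) ω) (fun ω => θ b * ξ (t - (b + 1)) ω) μ := by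
    intro a _ b _ hab
    rcases eq_or_ne (t - (a + 1)) (t - (b + 1)) with h_eq | h_ne
    · have h_zero : t - (a + 1) = 0 := by
        have := Fin.val_ne_of_ne hab
        lia
      simp only [h_zero, hξ.zero_eq, mul_zero]
      exact indepFun_const_left 0 _
    · exact (hξ.indep.indepFun h_ne).comp (measurable_const_mul _) (measurable_const_mul _)
  have h_mean : ∫ ω, lagComb θ (ξ · ω) t ∂μ = 0 := by
    simp only [lagComb]
    rw [integral_finsetSum _ fun a _ => (h_memLp a).integrable one_le_two]
    simp only [integral_const_mul, hξ.integral_eq_zero, mul_zero, sum_const_zero]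
  have h_sum : (fun ω => lagComb θ (ξ · ω) t) = ∑ a : Fin L, fun ω => θ a * ξ (t - (a + 1)) ω := by
    ext ω
    rw [Finset.sum_apply, lagComb]
  rw [← variance_of_integral_eq_zero
    (h_sum ▸ (memLp_finsetSum' _ fun a _ => h_memLp a).aemeasurable) h_mean, h_sum,
    IndepFun.variance_sum (fun a _ => h_memLp a) h_indep]
  simp only [variance_const_mul]

lemma integral_mul_lagComb_sq (hξ : BoundedNoise μ K ξ) (θ : Fin L → ℝ) (t : ℕ) :
    ∫ ω, (ξ t ω * lagComb θ (ξ · ω) t) ^ 2 ∂μ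
      = ∑ a : Fin L, θ a ^ 2 * (Var[ξ t; μ] * Var[ξ (t - (a + 1)); μ]) := by
  have h_indep : IndepFun (ξ t) (fun ω => lagComb θ (ξ · ω) t) μ :=
    indepFun_of_disjoint (S := {t}) (T := Set.Iio t) hξ.measurable hξ.indep (by simp)
      (measurable_sigmaOf (Set.mem_singleton t))
      (hξ.measurable_lagComb θ fun a ht => Set.mem_Iio.2 (by lia))
  have h_prod := (h_indep.comp (measurable_id.pow_const 2)
    (measurable_id.pow_const 2)).integral_fun_mul_eq_mul_integral
      ((hξ.measurable t).pow_const 2).aestronglyMeasurable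
      (((hξ.measurable_lagComb θ fun _ _ => Set.mem_univ _).mono
        (sigmaOf_le hξ.measurable) le_rfl).pow_const 2).aestronglyMeasurable
  simp only [Function.comp_apply, id] at h_prod
  simp only [mul_pow, h_prod, hξ.integral_lagComb_sq θ t,
    ← variance_of_integral_eq_zero (hξ.measurable t).aemeasurable (hξ.integral_eq_zero t), mul_sum]
  exact sum_congr rfl fun a _ => by ring

lemma integral_sum_mul_lagComb_sq (hξ : BoundedNoise μ K ξ) (θ : Fin L → ℝ) (N : ℕ) :
    ∫ ω, ∑ t ∈ range N, (ξ t ω * lagComb θ (ξ · ω) t) ^ 2 ∂μ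
      = ∑ a : Fin L, θ a ^ 2 * lagSum N (a + 1) (fun t => Var[ξ t; μ]) := by
  have hd := hξ.boundedMartDiff θ
  rw [integral_finsetSum _ fun t _ => ?_]
  · simp only [hξ.integral_mul_lagComb_sq, lagSum, mul_sum]
    exact sum_comm
  · obtain ⟨C, hC⟩ := hd.exists_abs_le t
    exact (MemLp.of_bound (hd.measurable t).aestronglyMeasurable C (.of_forall hC)).integrable_sq

/-- The squared increments at distance more than `L` are independent. -/
lemma variance_sum_mul_lagComb_sq_le (hξ : BoundedNoise μ K ξ) {θ : Fin L → ℝ} {k : ℝ}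
    (hk : ∀ t ω, |ξ t ω * lagComb θ (ξ · ω) t| ≤ k) (N : ℕ) :
    Var[fun ω => ∑ t ∈ range N, (ξ t ω * lagComb θ (ξ · ω) t) ^ 2; μ]
      ≤ N * ((2 * L + 1) * (k ^ 2) ^ 2) := by
  have h_meas : ∀ t, Measurable[sigmaOf ξ (Set.Icc (t - L) t)]
      (fun ω => (ξ t ω * lagComb θ (ξ · ω) t) ^ 2) := fun t =>
    ((measurable_sigmaOf (X := ξ) (Set.mem_Icc.2 ⟨Nat.sub_le t L, le_rfl⟩)).mul
      (hξ.measurable_lagComb (S := Set.Icc (t - L) t) θ fun a _ =>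
        Set.mem_Icc.2 (by lia))).pow_const 2
  refine variance_sum_le_of_indepFun (fun t => (h_meas t).mono (sigmaOf_le hξ.measurable) le_rfl)
    (fun t ω => ?_) (fun s t hst => ?_) N
  · rw [abs_pow]
    exact pow_le_pow_left₀ (abs_nonneg _) (hk t ω) 2
  · exact indepFun_of_disjoint hξ.measurable hξ.indep
      (Set.disjoint_left.2 fun i hi hi' => by
        have := Set.mem_Icc.1 hi
        have := Set.mem_Icc.1 hi'
        lia) (h_meas s) (h_meas t)

lemma integral_abs_sum_mul_lagComb_sq_sub_le (hξ : BoundedNoise μ K ξ) {θ : Fin L → ℝ} {k : ℝ}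
    (hk : ∀ t ω, |ξ t ω * lagComb θ (ξ · ω) t| ≤ k) (N : ℕ) :
    ∫ ω, |∑ t ∈ range N, (ξ t ω * lagComb θ (ξ · ω) t) ^ 2
        - ∑ a : Fin L, θ a ^ 2 * lagSum N (a + 1) (fun t => Var[ξ t; μ])| ∂μ
      ≤ √N * (√(2 * L + 1) * k ^ 2) := by
  have hd := hξ.boundedMartDiff θ
  have h_memLp : MemLp (fun ω => ∑ t ∈ range N, (ξ t ω * lagComb θ (ξ · ω) t) ^ 2) 2 μ := by
    refine memLp_finsetSum _ fun t _ => .of_bound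
      ((hd.measurable t).pow_const 2).aestronglyMeasurable (k ^ 2) (.of_forall fun ω => ?_)
    rw [Real.norm_eq_abs, abs_pow]
    exact pow_le_pow_left₀ (abs_nonneg _) (hk t ω) 2
  rw [← hξ.integral_sum_mul_lagComb_sq]
  refine (integral_abs_sub_integral_le_sqrt_variance h_memLp).trans <|
    (Real.sqrt_le_sqrt (hξ.variance_sum_mul_lagComb_sq_le hk N)).trans_eq ?_
  rw [Real.sqrt_mul (Nat.cast_nonneg N), Real.sqrt_mul (by positivity), Real.sqrt_sq (sq_nonneg k)]

/-- A Berry–Esseen type bound: the constant `k` bounds the increments `ξ_t ∑_a θ_a ξ_{t-a}`. -/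
lemma norm_integral_exp_lagSum_sub_le (hξ : BoundedNoise μ K ξ) {θ : Fin L → ℝ} {k : ℝ}
    (hk : ∀ t ω, |ξ t ω * lagComb θ (ξ · ω) t| ≤ k) {N : ℕ} (hN : 0 < N) (hkN : k ≤ √N) :
    ‖∫ ω, Complex.exp
          ((∑ a : Fin L, θ a * ((√N)⁻¹ * lagSum N (a + 1) (ξ · ω)) : ℝ) * Complex.I) ∂μ
        - (Real.exp (-((∑ a : Fin L, θ a ^ 2
          * ((N : ℝ)⁻¹ * lagSum N (a + 1) (fun t => Var[ξ t; μ]))) / 2)) : ℝ)‖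
      ≤ (2 * k ^ 3 + Real.exp (k ^ 2 / 2) * (√(2 * L + 1) * k ^ 2)) / √N := by
  have hN' : (0 : ℝ) < √N := Real.sqrt_pos.2 (by exact_mod_cast hN)
  have h_sq : √(N : ℝ) ^ 2 = N := Real.sq_sqrt (Nat.cast_nonneg N)
  have h_inv_sq : (√(N : ℝ))⁻¹ ^ 2 = (N : ℝ)⁻¹ := by rw [inv_pow, h_sq]
  have h_sum : ∀ ω, ∑ a : Fin L, θ a * ((√N)⁻¹ * lagSum N (a + 1) (ξ · ω))
      = (√N)⁻¹ * ∑ t ∈ range N, ξ t ω * lagComb θ (ξ · ω) t := fun ω => by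
    rw [sum_mul_lagComb, mul_sum]
    exact sum_congr rfl fun a _ => mul_left_comm _ _ _
  have h_var : ∑ a : Fin L, θ a ^ 2 * ((N : ℝ)⁻¹ * lagSum N (a + 1) (fun t => Var[ξ t; μ]))
      = (N : ℝ)⁻¹ * ∑ a : Fin L, θ a ^ 2 * lagSum N (a + 1) (fun t => Var[ξ t; μ]) := by
    rw [mul_sum]
    exact sum_congr rfl fun a _ => mul_left_comm _ _ _
  have h_var_nonneg :
      0 ≤ (N : ℝ)⁻¹ * ∑ a : Fin L, θ a ^ 2 * lagSum N (a + 1) (fun t => Var[ξ t; μ]) :=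
    mul_nonneg (by positivity) (sum_nonneg fun a _ => mul_nonneg (sq_nonneg _)
      (sum_nonneg fun t _ => mul_nonneg (variance_nonneg _ _) (variance_nonneg _ _)))
  have h_clt := ((hξ.boundedMartDiff θ).const_mul (√N)⁻¹).norm_integral_exp_sum_sub_le
    ((inv_mul_le_one₀ hN').2 hkN) (fun t ω => by
      rw [abs_mul, abs_of_pos (inv_pos.2 hN')]
      exact mul_le_mul_of_nonneg_left (hk t ω) (by positivity)) h_var_nonneg N
  simp only [mul_pow (√(N : ℝ))⁻¹, h_inv_sq, ← mul_sum, ← mul_sub, abs_mul, integral_const_mul]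
    at h_clt
  simp only [h_sum, h_var]
  refine h_clt.trans ?_
  calc _ ≤ N * (2 * ((√(N : ℝ))⁻¹ ^ 3 * k ^ 3))
        + Real.exp (N * ((N : ℝ)⁻¹ * k ^ 2) / 2)
          * (|(N : ℝ)⁻¹| * (√N * (√(2 * L + 1) * k ^ 2))) := by
        gcongr
        exact hξ.integral_abs_sum_mul_lagComb_sq_sub_le hk N
    _ = _ := by
        rw [abs_of_pos (by positivity), mul_inv_cancel_left₀ (by positivity), ← h_inv_sq]
        nth_rewrite 1 [← h_sq]
        field_simp

end BoundedNoise

/-! ### Scores and the Kullback–Leibler divergence -/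

lemma mul_log_sub_log_le {p q : ℝ} (hp : 0 < p) (hq : 0 < q) :
    q * (Real.log p - Real.log q) ≤ p - q - (√p - √q) ^ 2 := by
  have hq' : 0 < √q := Real.sqrt_pos.2 hq
  have h_log : Real.log p - Real.log q ≤ 2 * (√p / √q - 1) := by
    have h := Real.log_le_sub_one_of_pos (div_pos (Real.sqrt_pos.2 hp) hq')
    rw [Real.log_div (Real.sqrt_pos.2 hp).ne' hq'.ne', Real.log_sqrt hp.le,
      Real.log_sqrt hq.le] at h
    linarith
  have h_mul : q * (√p / √q) = √q * √p := by
    rw [mul_div_assoc', mul_comm q, mul_div_assoc, Real.div_sqrt, mul_comm]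
  nlinarith [mul_le_mul_of_nonneg_left h_log hq.le, Real.sq_sqrt hp.le, Real.sq_sqrt hq.le]

lemma abs_sub_le_add_mul_abs_log_sub_log {p q : ℝ} (hp : 0 < p) (hq : 0 < q) :
    |p - q| ≤ (p + q) * |Real.log p - Real.log q| := by
  have h_one_sided : ∀ {a b : ℝ}, 0 < a → 0 < b → a - b ≤ (a + b) * |Real.log a - Real.log b| := by
    intro a b ha hb
    have h := Real.log_le_sub_one_of_pos (div_pos hb ha)
    rw [Real.log_div hb.ne' ha.ne'] at h
    have h_mul : a * (b / a) = b := mul_div_cancel₀ b ha.ne'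
    nlinarith [le_abs_self (Real.log a - Real.log b), abs_nonneg (Real.log a - Real.log b)]
  refine abs_le.2 ⟨?_, h_one_sided hp hq⟩
  have h := h_one_sided hq hp
  rw [add_comm, abs_sub_comm] at h
  linarith

lemma scoreVar_nonneg {m : ℕ} {f u : ℕ → ℝ} (hf : ∀ y ≤ m, 0 ≤ f y) : 0 ≤ scoreVar m f u :=
  sum_nonneg fun y hy => mul_nonneg (hf y (mem_range_succ_iff.1 hy)) (sq_nonneg _)

namespace RegularModel

variable {P : Type*} [PseudoMetricSpace P] {B : Set P} {K : ℝ} {m : ℕ} {f u : P → ℕ → ℝ}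
  {δ δ' : P}

/-- The mean of the score `u δ` under another parameter is controlled by the Hellinger distance of
the two laws, hence by their Kullback–Leibler divergence. -/
lemma sq_sum_density_mul_score_le (h : RegularModel B K m f u) (hδ : δ ∈ B) (δ₀ : P) :
    (∑ y ∈ range (m + 1), f δ₀ y * u δ y) ^ 2
      ≤ 4 * K ^ 2 * ∑ y ∈ range (m + 1), f δ₀ y * (Real.log (f δ₀ y) - Real.log (f δ y)) := by
  have h_pos : ∀ δ, ∀ y ∈ range (m + 1), 0 < f δ y := fun δ y hy =>
    h.density_pos δ y (mem_range_succ_iff.1 hy)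
  have h_mean : ∑ y ∈ range (m + 1), f δ₀ y * u δ y
      = ∑ y ∈ range (m + 1), (√(f δ y) - √(f δ₀ y)) * -((√(f δ y) + √(f δ₀ y)) * u δ y) := by
    rw [← sub_zero (∑ y ∈ range (m + 1), f δ₀ y * u δ y), ← h.sum_density_mul_score δ,
      ← sum_sub_distrib]
    refine sum_congr rfl fun y hy => ?_
    nth_rewrite 1 [← Real.sq_sqrt (h_pos δ y hy).le, ← Real.sq_sqrt (h_pos δ₀ y hy).le]
    ring
  have h_hellinger : ∑ y ∈ range (m + 1), (√(f δ y) - √(f δ₀ y)) ^ 2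
      ≤ ∑ y ∈ range (m + 1), f δ₀ y * (Real.log (f δ₀ y) - Real.log (f δ y)) := by
    have h_sum := sum_le_sum fun y hy => mul_log_sub_log_le (h_pos δ y hy) (h_pos δ₀ y hy)
    simp only [sum_sub_distrib, h.sum_density, mul_sub] at h_sum ⊢
    linarith
  have h_weight : ∑ y ∈ range (m + 1), (-((√(f δ y) + √(f δ₀ y)) * u δ y)) ^ 2 ≤ 4 * K ^ 2 := by
    calc _ ≤ ∑ y ∈ range (m + 1), 2 * (f δ y + f δ₀ y) * K ^ 2 := sum_le_sum fun y hy => by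
          rw [neg_sq, mul_pow]
          refine mul_le_mul ?_ (sq_le_sq.2 ?_) (sq_nonneg _) ?_
          · nlinarith [sq_nonneg (√(f δ y) - √(f δ₀ y)), Real.sq_sqrt (h_pos δ y hy).le,
              Real.sq_sqrt (h_pos δ₀ y hy).le]
          · exact (h.abs_score_le δ hδ y (mem_range_succ_iff.1 hy)).trans (le_abs_self K)
          · linarith [h_pos δ y hy, h_pos δ₀ y hy]
      _ = 4 * K ^ 2 := by
          rw [← sum_mul, ← mul_sum, sum_add_distrib, h.sum_density, h.sum_density]
          norm_num
  rw [h_mean, mul_comm (4 * K ^ 2)]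
  exact (sum_mul_sq_le_sq_mul_sq _ _ _).trans
    (mul_le_mul h_hellinger h_weight (sum_nonneg fun _ _ => sq_nonneg _)
      ((sum_nonneg fun _ _ => sq_nonneg _).trans h_hellinger))

lemma scoreVar_le (h : RegularModel B K m f u) (hδ : δ ∈ B) : scoreVar m (f δ) (u δ) ≤ K ^ 2 := by
  calc scoreVar m (f δ) (u δ) ≤ ∑ y ∈ range (m + 1), f δ y * K ^ 2 := sum_le_sum fun y hy => by
        have hy := mem_range_succ_iff.1 hy
        rw [← sq_abs]
        exact mul_le_mul_of_nonneg_left (pow_le_pow_left₀ (abs_nonneg _)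
          (h.abs_score_le δ hδ y hy) 2) (h.density_pos δ y hy).le
    _ = K ^ 2 := by rw [← sum_mul, h.sum_density, one_mul]

lemma abs_scoreVar_sub_le (h : RegularModel B K m f u) (hδ : δ ∈ B) (hδ' : δ' ∈ B) :
    |scoreVar m (f δ) (u δ) - scoreVar m (f δ') (u δ')|
      ≤ 2 * (K ^ 3 + K ^ 2) * dist δ δ' := by
  have h_term : ∀ y ∈ range (m + 1), |f δ y * u δ y ^ 2 - f δ' y * u δ' y ^ 2|
      ≤ (f δ y + f δ' y) * (K * dist δ δ' * K ^ 2) + f δ' y * (2 * K * (K * dist δ δ')) := by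
    intro y hy
    have hy := mem_range_succ_iff.1 hy
    have hu := h.abs_score_le δ hδ y hy
    have hu' := h.abs_score_le δ' hδ' y hy
    have hK : 0 ≤ K := (abs_nonneg _).trans hu
    have hf := (h.density_pos δ y hy).le
    have hf' := (h.density_pos δ' y hy).le
    have h_dens := (abs_sub_le_add_mul_abs_log_sub_log (h.density_pos δ y hy)
      (h.density_pos δ' y hy)).trans
        (mul_le_mul_of_nonneg_left (h.abs_log_sub_le δ hδ δ' hδ' y hy) (add_nonneg hf hf'))
    have h_split : f δ y * u δ y ^ 2 - f δ' y * u δ' y ^ 2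
        = (f δ y - f δ' y) * u δ y ^ 2 + f δ' y * ((u δ y + u δ' y) * (u δ y - u δ' y)) := by ring
    have h_add : |u δ y + u δ' y| ≤ 2 * K := (abs_add_le _ _).trans (by linarith)
    rw [h_split, ← mul_assoc (f δ y + f δ' y)]
    refine (abs_add_le _ _).trans ?_
    rw [abs_mul, abs_mul, abs_mul, abs_pow, abs_of_nonneg hf']
    gcongr
    exact h.abs_score_sub_le δ hδ δ' hδ' y hy
  rw [scoreVar, scoreVar, ← sum_sub_distrib]
  refine (abs_sum_le_sum_abs _ _).trans ((sum_le_sum h_term).trans_eq ?_)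
  rw [sum_add_distrib, ← sum_mul, ← sum_mul, sum_add_distrib, h.sum_density, h.sum_density]
  ring

end RegularModel

/-! ### The null model and its martingale fields -/

/-- The modulus `ε` does not depend on the martingales or on their length. -/
lemma exists_measureReal_sum_oscillation_le {Ω : Type*} [MeasurableSpace Ω] {ι : Type*} [Fintype ι]
    (δ₀ : (ι → ℝ) × ℝ) {R k η : ℝ} (hR : 0 < R) (hk : 0 < k) (hη : 0 < η) :
    ∃ ε > 0, ε ≤ R ∧ ∀ (μ : Measure Ω) [IsProbabilityMeasure μ] (ℱ : Filtration ℕ ‹_›) (N : ℕ)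
      (d : (ι → ℝ) × ℝ → ℕ → Ω → ℝ), 0 < N →
      (∀ δ ∈ Metric.closedBall δ₀ R, BoundedMartDiff ℱ μ (d δ)) →
      (∀ δ ∈ Metric.closedBall δ₀ R, ∀ δ' ∈ Metric.closedBall δ₀ R, ∀ t ω,
        |d δ t ω - d δ' t ω| ≤ k * dist δ δ') →
      μ.real {ω | ∃ δ, dist δ δ₀ ≤ ε ∧ η < |(√N)⁻¹ * ∑ t ∈ range N, d δ t ω
        - (√N)⁻¹ * ∑ t ∈ range N, d δ₀ t ω|} ≤ η := by
  obtain ⟨C, d, T, hT⟩ := exists_dyadicNets_pi_prod δ₀ hR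
  obtain ⟨ε, hε, hεR, h_osc⟩ := hT.exists_measureReal_oscillation_le (Ω := Ω) hR hk hη
  refine ⟨ε, hε, hεR, fun μ _ ℱ N d hN hd h_lip => h_osc μ _ (fun ω => ?_) ?_⟩
  · refine continuousOn_const.mul (continuousOn_finsetSum _ fun t _ => ?_)
    exact (LipschitzOnWith.of_dist_le_mul (K := ⟨k, hk.le⟩)
      fun δ hδ δ' hδ' => h_lip δ hδ δ' hδ' t ω).continuousOn
  intro δ hδ δ' hδ' ρ q hρ h_dist hq
  have hN' : 0 < √(N : ℝ) := Real.sqrt_pos.2 (by exact_mod_cast hN)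
  have h_coe : ((k * ρ).toNNReal : ℝ) = k * ρ := Real.coe_toNNReal _ (by positivity)
  have h_azuma := measureReal_le_abs_le_of_hasSubgaussianMGF
    (((hd δ hδ).sub (hd δ' hδ')).hasSubgaussianMGF_sum (k := (k * ρ).toNNReal)
      (fun t ω => ((h_lip δ hδ δ' hδ' t ω).trans
        (mul_le_mul_of_nonneg_left h_dist hk.le)).trans_eq h_coe.symm) N)
    (q := √N * q) (by positivity)
  convert h_azuma using 3
  · ext ω
    simp only [Pi.sub_apply, sum_sub_distrib]
    rw [← mul_sub, abs_mul, abs_of_pos (inv_pos.2 hN'), inv_mul_eq_div, le_div_iff₀ hN', mul_comm q]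
  · push_cast
    rw [h_coe, mul_pow √(N : ℝ), Real.sq_sqrt (Nat.cast_nonneg N), neg_div, mul_left_comm 2,
      mul_div_mul_left _ _ (by exact_mod_cast hN.ne')]

/-- Independent observations `X t` in `{0, …, m t}` with masses `f t δ₀`, for models `f t` with
scores `u t` that are regular on `B`. The sample consists of the indices `0 < t < N`; the other
indices are padding, with vanishing scores. -/
structure NullModel {Ω P : Type*} {mΩ : MeasurableSpace Ω} [PseudoMetricSpace P] (μ : Measure Ω)
    (B : Set P) (δ₀ : P) (K c : ℝ) (N : ℕ) (m : ℕ → ℕ) (f u : ℕ → P → ℕ → ℝ)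
    (X : ℕ → Ω → ℕ) : Prop where
  measurable : ∀ t, Measurable (X t)
  indep : iIndepFun X μ
  le : ∀ t ω, X t ω ≤ m t
  regular : ∀ t, RegularModel B K (m t) (f t) (u t)
  integral_comp : ∀ t (φ : ℕ → ℝ), ∫ ω, φ (X t ω) ∂μ = ∑ y ∈ range (m t + 1), f t δ₀ y * φ y
  score_eq_zero : ∀ t ∉ Set.Ioo 0 N, ∀ δ y, u t δ y = 0
  le_scoreVar : ∀ t ∈ Set.Ioo 0 N, ∀ δ ∈ B, c ≤ scoreVar (m t) (f t δ) (u t δ)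

/-- The statistic `v t (X t)` of observation `t`, minus its mean. -/
def centred {Ω : Type*} [MeasurableSpace Ω] (μ : Measure Ω) (X : ℕ → Ω → ℕ) (v : ℕ → ℕ → ℝ)
    (t : ℕ) (ω : Ω) : ℝ :=
  v t (X t ω) - ∫ ω', v t (X t ω') ∂μ

/-- The increments of the martingale part of the lag-`a` sum of the statistics `v t (X t)`, as
given by `lagSum_eq_sum_sub_mul_add`. -/
def lagDiff {Ω : Type*} [MeasurableSpace Ω] (μ : Measure Ω) (X : ℕ → Ω → ℕ) (v : ℕ → ℕ → ℝ)
    (a t : ℕ) (ω : Ω) : ℝ :=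
  centred μ X v t ω * (v (t - a) (X (t - a) ω) + ∫ ω', v (t + a) (X (t + a) ω') ∂μ)

/-- The lag-`a` autocovariance of the residuals at `δ`, up to the factor `√N`. -/
def lagCov {Ω P : Type*} (N : ℕ) (u : ℕ → P → ℕ → ℝ) (X : ℕ → Ω → ℕ) (a : ℕ) (δ : P)
    (ω : Ω) : ℝ :=
  (√N)⁻¹ * lagSum N a fun t => u t δ (X t ω)

/-- The estimate at `δ` of the variance of `lagCov`. -/
def lagVar {P : Type*} (N : ℕ) (m : ℕ → ℕ) (f u : ℕ → P → ℕ → ℝ) (a : ℕ) (δ : P) : ℝ :=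
  (N : ℝ)⁻¹ * lagSum N a fun t => scoreVar (m t) (f t δ) (u t δ)

namespace NullModel

variable {Ω P : Type*} {mΩ : MeasurableSpace Ω} [PseudoMetricSpace P] {μ : Measure Ω}
  {B : Set P} {δ₀ δ δ' : P} {K c : ℝ} {N : ℕ} {m : ℕ → ℕ} {f u : ℕ → P → ℕ → ℝ} {X : ℕ → Ω → ℕ}

lemma exists_abs_comp_le (hX : NullModel μ B δ₀ K c N m f u X) (t : ℕ) (φ : ℕ → ℝ) :
    ∃ C, ∀ ω, |φ (X t ω)| ≤ C :=
  ⟨∑ y ∈ range (m t + 1), |φ y|, fun ω =>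
    single_le_sum (f := fun y => |φ y|) (fun _ _ => abs_nonneg _)
      (mem_range_succ_iff.2 (hX.le t ω))⟩

lemma abs_score_le (hX : NullModel μ B δ₀ K c N m f u X) (hδ : δ ∈ B) (t : ℕ) (ω : Ω) :
    |u t δ (X t ω)| ≤ K := (hX.regular t).abs_score_le δ hδ _ (hX.le t ω)

lemma zero_le_bound (hX : NullModel μ B δ₀ K c N m f u X) (hδ : δ ∈ B) : 0 ≤ K :=
  (abs_nonneg _).trans ((hX.regular 0).abs_score_le δ hδ 0 (Nat.zero_le _))

lemma integral_score_eq_zero (hX : NullModel μ B δ₀ K c N m f u X) (t : ℕ) :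
    ∫ ω, u t δ₀ (X t ω) ∂μ = 0 := by
  rw [hX.integral_comp, (hX.regular t).sum_density_mul_score]

lemma integral_score_eq_zero_of_notMem (hX : NullModel μ B δ₀ K c N m f u X) {t : ℕ}
    (ht : t ∉ Set.Ioo 0 N) (δ : P) : ∫ ω, u t δ (X t ω) ∂μ = 0 := by
  simp only [hX.score_eq_zero t ht, integral_zero]

lemma boundedNoise (hX : NullModel μ B δ₀ K c N m f u X) (hδ₀ : δ₀ ∈ B) :
    BoundedNoise μ K fun t ω => u t δ₀ (X t ω) where
  measurable t := measurable_from_nat.comp (hX.measurable t)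
  indep := hX.indep.comp (fun t => u t δ₀) fun _ => measurable_from_nat
  zero_eq ω := hX.score_eq_zero 0 (by simp) _ _
  abs_le := hX.abs_score_le hδ₀
  integral_eq_zero := hX.integral_score_eq_zero

/-- The likelihood excess of `δ` over `δ₀` has mean minus the Kullback–Leibler divergence, so for a
nonnegative excess its fluctuation controls the divergence, hence the means of the scores. -/
lemma sum_sq_integral_score_le (hX : NullModel μ B δ₀ K c N m f u X) (hδ : δ ∈ B) {ω : Ω}
    (h_lik : ∑ t ∈ range N, Real.log (f t δ₀ (X t ω))
      ≤ ∑ t ∈ range N, Real.log (f t δ (X t ω))) :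
    ∑ t ∈ range N, (∫ ω, u t δ (X t ω) ∂μ) ^ 2
      ≤ 4 * K ^ 2 * (∑ t ∈ range N, centred μ X (fun t y => Real.log (f t δ y)) t ω
        - ∑ t ∈ range N, centred μ X (fun t y => Real.log (f t δ₀ y)) t ω) := by
  have h_sq : ∀ t, (∫ ω, u t δ (X t ω) ∂μ) ^ 2 ≤ 4 * K ^ 2 *
      (∫ ω, Real.log (f t δ₀ (X t ω)) ∂μ - ∫ ω, Real.log (f t δ (X t ω)) ∂μ) := fun t => by
    rw [hX.integral_comp t, hX.integral_comp t fun y => Real.log (f t δ₀ y),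
      hX.integral_comp t fun y => Real.log (f t δ y), ← sum_sub_distrib]
    simp only [← mul_sub]
    exact (hX.regular t).sq_sum_density_mul_score_le hδ δ₀
  refine (sum_le_sum fun t _ => h_sq t).trans ?_
  rw [← mul_sum]
  refine mul_le_mul_of_nonneg_left ?_ (by positivity)
  simp only [centred, sum_sub_distrib]
  linarith

lemma abs_lagCov_sub_le (hX : NullModel μ B δ₀ K c N m f u X) (hδ : δ ∈ B) {ω : Ω}
    (h_lik : ∑ t ∈ range N, Real.log (f t δ₀ (X t ω))
      ≤ ∑ t ∈ range N, Real.log (f t δ (X t ω))) (a : ℕ) :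
    |lagCov N u X a δ ω - lagCov N u X a δ₀ ω|
      ≤ |(√N)⁻¹ * ∑ t ∈ range N, lagDiff μ X (fun t => u t δ) a t ω
          - (√N)⁻¹ * ∑ t ∈ range N, lagDiff μ X (fun t => u t δ₀) a t ω|
        + 4 * K ^ 2 * |(√N)⁻¹ * ∑ t ∈ range N, centred μ X (fun t y => Real.log (f t δ y)) t ω
          - (√N)⁻¹ * ∑ t ∈ range N, centred μ X (fun t y => Real.log (f t δ₀ y)) t ω| := by
  have h_decomp : ∀ δ, lagSum N a (fun t => u t δ (X t ω))
      = ∑ t ∈ range N, lagDiff μ X (fun t => u t δ) a t ω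
        + lagSum N a (fun t => ∫ ω, u t δ (X t ω) ∂μ) := fun δ =>
    lagSum_eq_sum_sub_mul_add (ξ := fun t => u t δ (X t ω)) (hX.score_eq_zero 0 (by simp) _ _)
      (hX.integral_score_eq_zero_of_notMem (by simp) δ)
      (fun t ht => hX.integral_score_eq_zero_of_notMem (fun h => h.2.not_ge ht) δ) a
  have h_bias := (abs_lagSum_le (b := fun t => ∫ ω, u t δ (X t ω) ∂μ)
    (hX.integral_score_eq_zero_of_notMem (by simp) δ) N a).trans
      (hX.sum_sq_integral_score_le hδ h_lik)
  have h_zero : lagSum N a (fun t => ∫ ω, u t δ₀ (X t ω) ∂μ) = 0 := by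
    simp only [lagSum, hX.integral_score_eq_zero, zero_mul, sum_const_zero]
  have hN : 0 ≤ (√(N : ℝ))⁻¹ := by positivity
  rw [lagCov, lagCov, h_decomp, h_decomp, h_zero, add_zero, mul_add, add_sub_right_comm]
  refine (abs_add_le _ _).trans (add_le_add_right ?_ _)
  rw [← mul_sub, abs_mul, abs_mul, abs_of_nonneg hN, mul_left_comm]
  exact mul_le_mul_of_nonneg_left (h_bias.trans (mul_le_mul_of_nonneg_left (le_abs_self _)
    (by positivity))) hN

variable [IsProbabilityMeasure μ]

lemma integrable_comp (hX : NullModel μ B δ₀ K c N m f u X) (t : ℕ) (φ : ℕ → ℝ) :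
    Integrable (fun ω => φ (X t ω)) μ := by
  obtain ⟨C, hC⟩ := hX.exists_abs_comp_le t φ
  exact .of_bound (measurable_from_nat.comp (hX.measurable t)).aestronglyMeasurable C
    (.of_forall hC)

lemma abs_integral_comp_le (hX : NullModel μ B δ₀ K c N m f u X) {t : ℕ} {φ : ℕ → ℝ} {C : ℝ}
    (hφ : ∀ y ≤ m t, |φ y| ≤ C) : |∫ ω, φ (X t ω) ∂μ| ≤ C :=
  (norm_integral_le_of_norm_le_const (μ := μ) (f := fun ω => φ (X t ω)) (.of_forall fun ω =>
    hφ _ (hX.le t ω))).trans_eq (by rw [probReal_univ, mul_one])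

lemma abs_integral_comp_sub_le (hX : NullModel μ B δ₀ K c N m f u X) {t : ℕ} {φ ψ : ℕ → ℝ} {C : ℝ}
    (h : ∀ y ≤ m t, |φ y - ψ y| ≤ C) : |∫ ω, φ (X t ω) ∂μ - ∫ ω, ψ (X t ω) ∂μ| ≤ C := by
  rw [← integral_sub (hX.integrable_comp t φ) (hX.integrable_comp t ψ)]
  exact hX.abs_integral_comp_le (φ := fun y => φ y - ψ y) h

lemma variance_score (hX : NullModel μ B δ₀ K c N m f u X) (t : ℕ) :
    Var[fun ω => u t δ₀ (X t ω); μ] = scoreVar (m t) (f t δ₀) (u t δ₀) := by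
  rw [variance_of_integral_eq_zero (hX.integrable_comp t (u t δ₀)).aemeasurable
    (hX.integral_score_eq_zero t)]
  exact hX.integral_comp t fun y => u t δ₀ y ^ 2

lemma boundedMartDiff_centred_mul (hX : NullModel μ B δ₀ K c N m f u X) (v : ℕ → ℕ → ℝ)
    {G : ℕ → Ω → ℝ} (hG : ∀ t, Measurable[sigmaOf X (Set.Iio t)] (G t))
    (hG_bdd : ∀ t, ∃ C, ∀ ω, |G t ω| ≤ C) :
    BoundedMartDiff (strictPast hX.measurable) μ (fun t ω => centred μ X v t ω * G t ω) := by
  have h_meas : ∀ S : Set ℕ, ∀ t ∈ S, Measurable[sigmaOf X S] (centred μ X v t) :=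
    fun S t ht => (measurable_from_nat.comp (measurable_sigmaOf (X := X) ht)).sub_const _
  refine .of_mul (fun t => h_meas _ t (Set.mem_Iio.2 t.lt_succ_self))
    (fun t => hX.exists_abs_comp_le t fun y => v t y - ∫ ω, v t (X t ω) ∂μ) (fun t => ?_)
    (fun t => ?_) hG hG_bdd
  · simp only [centred]
    rw [integral_sub (hX.integrable_comp t (v t)) (integrable_const _), integral_const,
      probReal_univ, one_smul, sub_self]
  · exact indep_of_indep_of_le_left (indep_sigmaOf (S := {t}) hX.measurable hX.indep (by simp))
      (h_meas {t} t rfl).comap_le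

lemma boundedMartDiff_centred (hX : NullModel μ B δ₀ K c N m f u X) (v : ℕ → ℕ → ℝ) :
    BoundedMartDiff (strictPast hX.measurable) μ (centred μ X v) := by
  simpa only [mul_one] using hX.boundedMartDiff_centred_mul v (G := fun _ _ => 1)
    (fun _ => measurable_const) fun _ => ⟨1, fun _ => by simp⟩

lemma boundedMartDiff_lagDiff (hX : NullModel μ B δ₀ K c N m f u X) {v : ℕ → ℕ → ℝ}
    (hv : ∀ y, v 0 y = 0) {a : ℕ} (ha : 0 < a) :
    BoundedMartDiff (strictPast hX.measurable) μ (lagDiff μ X v a) := by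
  refine hX.boundedMartDiff_centred_mul v (fun t => Measurable.add_const ?_ _) fun t =>
    hX.exists_abs_comp_le (t - a) fun y => v (t - a) y + ∫ ω, v (t + a) (X (t + a) ω) ∂μ
  rcases Nat.eq_zero_or_pos t with rfl | ht
  · simp only [Nat.zero_sub, hv, measurable_const]
  · exact measurable_from_nat.comp
      (measurable_sigmaOf (X := X) (Set.mem_Iio.2 (Nat.sub_lt ht ha)))

lemma abs_centred_sub_le (hX : NullModel μ B δ₀ K c N m f u X) {v w : ℕ → ℕ → ℝ} {t : ℕ} {C : ℝ}
    (h : ∀ y ≤ m t, |v t y - w t y| ≤ C) (ω : Ω) :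
    |centred μ X v t ω - centred μ X w t ω| ≤ 2 * C := by
  rw [centred, centred, sub_sub_sub_comm, two_mul]
  exact (abs_sub _ _).trans (add_le_add (h _ (hX.le t ω)) (hX.abs_integral_comp_sub_le h))

lemma abs_lagDiff_score_sub_le (hX : NullModel μ B δ₀ K c N m f u X) (hδ : δ ∈ B) (hδ' : δ' ∈ B)
    (a t : ℕ) (ω : Ω) :
    |lagDiff μ X (fun t => u t δ) a t ω - lagDiff μ X (fun t => u t δ') a t ω|
      ≤ 8 * K ^ 2 * dist δ δ' := by
  have h_lip : ∀ t, ∀ y ≤ m t, |u t δ y - u t δ' y| ≤ K * dist δ δ' := fun t =>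
    (hX.regular t).abs_score_sub_le δ hδ δ' hδ'
  have h_bdd : ∀ δ ∈ B, ∀ t, |∫ ω, u t δ (X t ω) ∂μ| ≤ K := fun δ hδ t =>
    hX.abs_integral_comp_le ((hX.regular t).abs_score_le δ hδ)
  have hK := hX.zero_le_bound hδ
  set p := centred μ X (fun t => u t δ) t ω
  set p' := centred μ X (fun t => u t δ') t ω with hp'
  set q := u (t - a) δ (X (t - a) ω) + ∫ ω', u (t + a) δ (X (t + a) ω') ∂μ
  set q' := u (t - a) δ' (X (t - a) ω) + ∫ ω', u (t + a) δ' (X (t + a) ω') ∂μ with hq'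
  have h_pp : |p - p'| ≤ 2 * (K * dist δ δ') := hX.abs_centred_sub_le (h_lip t) ω
  have h_qq : |q - q'| ≤ 2 * (K * dist δ δ') := by
    rw [hq', add_sub_add_comm, two_mul]
    exact (abs_add_le _ _).trans
      (add_le_add (h_lip _ _ (hX.le _ ω)) (hX.abs_integral_comp_sub_le (h_lip _)))
  have h_q : |q| ≤ 2 * K := by
    rw [two_mul]
    exact (abs_add_le _ _).trans (add_le_add (hX.abs_score_le hδ _ ω) (h_bdd δ hδ _))
  have h_p' : |p'| ≤ 2 * K := by
    rw [hp', centred, two_mul]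
    exact (abs_sub _ _).trans (add_le_add (hX.abs_score_le hδ' _ ω) (h_bdd δ' hδ' _))
  have h_split : p * q - p' * q' = (p - p') * q + p' * (q - q') := by ring
  calc |p * q - p' * q'| ≤ |p - p'| * |q| + |p'| * |q - q'| := by
        rw [h_split, ← abs_mul, ← abs_mul]
        exact abs_add_le _ _
    _ ≤ 2 * (K * dist δ δ') * (2 * K) + 2 * K * (2 * (K * dist δ δ')) := by gcongr
    _ = 8 * K ^ 2 * dist δ δ' := by ring

end NullModel

namespace NullModel

section Lag

variable {Ω P : Type*} {mΩ : MeasurableSpace Ω} [PseudoMetricSpace P] {μ : Measure Ω}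
  {B : Set P} {δ₀ δ δ' : P} {K c : ℝ} {N a : ℕ} {m : ℕ → ℕ} {f u : ℕ → P → ℕ → ℝ} {X : ℕ → Ω → ℕ}

lemma half_sq_le_lagVar (hX : NullModel μ B δ₀ K c N m f u X) (hc : 0 ≤ c) (hN : 2 * a + 2 ≤ N)
    (hδ : δ ∈ B) : c ^ 2 / 2 ≤ lagVar N m f u a δ := by
  have h_term : ∀ t ∈ Ioo a N, c ^ 2 ≤ scoreVar (m t) (f t δ) (u t δ)
      * scoreVar (m (t - a)) (f (t - a) δ) (u (t - a) δ) := fun t ht => by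
    obtain ⟨h_gt, h_lt⟩ := mem_Ioo.1 ht
    rw [sq]
    have h_var := hX.le_scoreVar t ⟨by lia, h_lt⟩ δ hδ
    exact mul_le_mul h_var (hX.le_scoreVar (t - a) ⟨by lia, by lia⟩ δ hδ) hc (hc.trans h_var)
  have h_nonneg : ∀ t, 0 ≤ scoreVar (m t) (f t δ) (u t δ) := fun t =>
    scoreVar_nonneg fun y hy => ((hX.regular t).density_pos δ y hy).le
  have h_card : (N : ℝ) ≤ 2 * #(Ioo a N) := by
    rw [Nat.card_Ioo]
    exact_mod_cast (by lia : N ≤ 2 * (N - a - 1))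
  rw [lagVar, inv_mul_eq_div, le_div_iff₀ (by exact_mod_cast (by lia : 0 < N))]
  calc c ^ 2 / 2 * N ≤ #(Ioo a N) * c ^ 2 := by nlinarith [sq_nonneg c]
    _ ≤ ∑ t ∈ Ioo a N, scoreVar (m t) (f t δ) (u t δ)
          * scoreVar (m (t - a)) (f (t - a) δ) (u (t - a) δ) := by
        rw [← nsmul_eq_mul]
        exact card_nsmul_le_sum _ _ _ h_term
    _ ≤ lagSum N a fun t => scoreVar (m t) (f t δ) (u t δ) :=
        sum_le_sum_of_subset_of_nonneg (fun t ht => mem_range.2 (mem_Ioo.1 ht).2)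
          fun t _ _ => mul_nonneg (h_nonneg _) (h_nonneg _)

lemma abs_lagVar_sub_le (hX : NullModel μ B δ₀ K c N m f u X) (hN : 0 < N) (hδ : δ ∈ B)
    (hδ' : δ' ∈ B) :
    |lagVar N m f u a δ - lagVar N m f u a δ'| ≤ 4 * K ^ 2 * (K ^ 3 + K ^ 2) * dist δ δ' := by
  set s := fun t => scoreVar (m t) (f t δ) (u t δ)
  set s' := fun t => scoreVar (m t) (f t δ') (u t δ')
  have h_abs_le : ∀ t, ∀ δ ∈ B, |scoreVar (m t) (f t δ) (u t δ)| ≤ K ^ 2 := fun t δ hδ => by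
    rw [abs_of_nonneg (scoreVar_nonneg fun y hy => ((hX.regular t).density_pos δ y hy).le)]
    exact (hX.regular t).scoreVar_le hδ
  have h_lip : ∀ t, |s t - s' t| ≤ 2 * (K ^ 3 + K ^ 2) * dist δ δ' := fun t =>
    (hX.regular t).abs_scoreVar_sub_le hδ hδ'
  have h_term : ∀ t, |s t * s (t - a) - s' t * s' (t - a)|
      ≤ 4 * K ^ 2 * (K ^ 3 + K ^ 2) * dist δ δ' := fun t => by
    have h_split : s t * s (t - a) - s' t * s' (t - a)
        = (s t - s' t) * s (t - a) + s' t * (s (t - a) - s' (t - a)) := by ring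
    rw [h_split]
    refine (abs_add_le _ _).trans ?_
    rw [abs_mul, abs_mul]
    calc _ ≤ 2 * (K ^ 3 + K ^ 2) * dist δ δ' * K ^ 2
          + K ^ 2 * (2 * (K ^ 3 + K ^ 2) * dist δ δ') :=
          add_le_add (mul_le_mul (h_lip t) (h_abs_le _ δ hδ) (abs_nonneg _)
              ((abs_nonneg _).trans (h_lip t)))
            (mul_le_mul (h_abs_le t δ' hδ') (h_lip _) (abs_nonneg _) (sq_nonneg K))
      _ = _ := by ring
  have hN' : (0 : ℝ) < N := by exact_mod_cast hN
  rw [lagVar, lagVar, ← mul_sub, abs_mul, abs_of_pos (inv_pos.2 hN'), inv_mul_le_iff₀ hN',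
    lagSum, lagSum, ← sum_sub_distrib]
  refine (abs_sum_le_sum_abs _ _).trans ((sum_le_sum fun t _ => h_term t).trans_eq ?_)
  rw [sum_const, card_range, nsmul_eq_mul]

lemma measurable_score_comp [MeasurableSpace P] (hX : NullModel μ B δ₀ K c N m f u X) {t : ℕ}
    (hu : ∀ y ≤ m t, Measurable fun δ => u t δ y) {d : Ω → P} (hd : Measurable d) :
    Measurable fun ω => u t (d ω) (X t ω) := by
  have h_min : Measurable fun p : P × ℕ => u t p.1 (min p.2 (m t)) :=
    measurable_from_prod_countable_left fun y => hu _ (min_le_right y _)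
  simpa only [Function.comp_def, min_eq_left (hX.le t _)] using
    h_min.comp (hd.prodMk (hX.measurable t))

variable [IsProbabilityMeasure μ]

lemma norm_integral_exp_lagCov_sub_le (hX : NullModel μ B δ₀ K c N m f u X) (hδ₀ : δ₀ ∈ B)
    (hN : 0 < N) {L : ℕ} {θ : Fin L → ℝ} {D k : ℝ} (hD : ∀ a, |θ a| ≤ D)
    (hk : k = K * (L * (D * K))) (hkN : k ≤ √N) :
    ‖∫ ω, Complex.exp
          ((∑ a : Fin L, θ a * lagCov N u X (a + 1) δ₀ ω : ℝ) * Complex.I) ∂μ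
        - (Real.exp (-((∑ a : Fin L, θ a ^ 2 * lagVar N m f u (a + 1) δ₀) / 2)) : ℝ)‖
      ≤ (2 * k ^ 3 + Real.exp (k ^ 2 / 2) * (√(2 * L + 1) * k ^ 2)) / √N := by
  have hξ := hX.boundedNoise hδ₀
  have h_var : ∀ a, lagVar N m f u a δ₀
      = (N : ℝ)⁻¹ * lagSum N a (fun t => Var[fun ω => u t δ₀ (X t ω); μ]) := fun a => by
    simp only [lagVar, hX.variance_score]
  simp only [h_var]
  refine hξ.norm_integral_exp_lagSum_sub_le (fun t ω => ?_) hN hkN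
  rw [hk, abs_mul]
  exact mul_le_mul (hξ.abs_le t ω) (abs_lagComb_le hD (hξ.abs_le · ω) t) (abs_nonneg _)
    (hX.zero_le_bound hδ₀)

end Lag

/-- The modulus `ε` depends neither on the models nor on the sample size. -/
lemma exists_measureReal_lagCov_oscillation_le {Ω ι : Type*} {mΩ : MeasurableSpace Ω} [Fintype ι]
    (μ : Measure Ω) [IsProbabilityMeasure μ] (δ₀ : (ι → ℝ) × ℝ) {R K c η : ℝ} (hR : 0 < R)
    (hK : 0 < K) (hη : 0 < η) :
    ∃ ε > 0, ∀ (N a : ℕ) (m : ℕ → ℕ) (f u : ℕ → (ι → ℝ) × ℝ → ℕ → ℝ) (X : ℕ → Ω → ℕ), 0 < N →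
      0 < a → NullModel μ (Metric.closedBall δ₀ R) δ₀ K c N m f u X →
      μ.real {ω | ∃ δ, dist δ δ₀ ≤ ε ∧
        ∑ t ∈ range N, Real.log (f t δ₀ (X t ω)) ≤ ∑ t ∈ range N, Real.log (f t δ (X t ω)) ∧
        η < |lagCov N u X a δ ω - lagCov N u X a δ₀ ω|} ≤ η := by
  set η' := min (η / 2) (η / 2 / (4 * K ^ 2))
  have hη' : 0 < η' := by positivity
  have h_scale : 4 * K ^ 2 * η' ≤ η / 2 := by
    rw [← le_div_iff₀' (by positivity)]
    exact min_le_right _ _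
  obtain ⟨ε₁, hε₁, hε₁R, h_cov⟩ := exists_measureReal_sum_oscillation_le (Ω := Ω) δ₀ hR
    (k := 8 * K ^ 2) (by positivity) (half_pos hη)
  obtain ⟨ε₂, hε₂, -, h_log⟩ := exists_measureReal_sum_oscillation_le (Ω := Ω) δ₀ hR
    (k := 2 * K) (by positivity) hη'
  refine ⟨min ε₁ ε₂, lt_min hε₁ hε₂, fun N a m f u X hN ha hX => ?_⟩
  have h_cov := h_cov μ _ N (fun δ => lagDiff μ X (fun t => u t δ) a) hN
    (fun δ _ => hX.boundedMartDiff_lagDiff (hX.score_eq_zero 0 (by simp) δ) ha)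
    fun δ hδ δ' hδ' => hX.abs_lagDiff_score_sub_le hδ hδ' a
  have h_log := h_log μ _ N (fun δ => centred μ X fun t y => Real.log (f t δ y)) hN
    (fun δ _ => hX.boundedMartDiff_centred _)
    fun δ hδ δ' hδ' t ω => (hX.abs_centred_sub_le
      ((hX.regular t).abs_log_sub_le δ hδ δ' hδ') ω).trans_eq (mul_assoc _ _ _).symm
  refine (measureReal_mono ?_).trans ((measureReal_union_le _ _).trans
    ((add_le_add h_cov (h_log.trans (min_le_left _ _))).trans_eq (add_halves η)))
  rintro ω ⟨δ, hδ, h_lik, h_gt⟩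
  by_contra! h_small
  simp only [Set.mem_union, Set.mem_ofPred_eq, not_or, not_exists, not_and, not_lt] at h_small
  have hδB : δ ∈ Metric.closedBall δ₀ R := hδ.trans ((min_le_left _ _).trans hε₁R)
  have h_bound := hX.abs_lagCov_sub_le hδB h_lik a
  linarith [h_small.1 δ (hδ.trans (min_le_left _ _)), mul_le_mul_of_nonneg_left
    (h_small.2 δ (hδ.trans (min_le_right _ _))) (by positivity : 0 ≤ 4 * K ^ 2)]

end NullModel

lemma measurable_lagCov {Ω P : Type*} [MeasurableSpace Ω] {N : ℕ} {u : ℕ → P → ℕ → ℝ}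
    {X : ℕ → Ω → ℕ} {d : Ω → P} (h : ∀ t, Measurable fun ω => u t (d ω) (X t ω)) (a : ℕ) :
    Measurable fun ω => lagCov N u X a (d ω) ω :=
  (Finset.measurable_fun_sum _ fun t _ => (h t).mul (h _)).const_mul _

lemma measurable_lagVar {P : Type*} [MeasurableSpace P] {N : ℕ} {m : ℕ → ℕ}
    {f u : ℕ → P → ℕ → ℝ} (hf : ∀ t, ∀ y ≤ m t, Measurable fun δ => f t δ y)
    (hu : ∀ t, ∀ y ≤ m t, Measurable fun δ => u t δ y) (a : ℕ) :
    Measurable fun δ => lagVar N m f u a δ := by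
  have h_var : ∀ t, Measurable fun δ => scoreVar (m t) (f t δ) (u t δ) := fun t =>
    Finset.measurable_fun_sum _ fun y hy => by
      have hy := mem_range_succ_iff.1 hy
      exact (hf t y hy).mul ((hu t y hy).pow_const 2)
  exact (Finset.measurable_fun_sum _ fun t _ => (h_var t).mul (h_var _)).const_mul _

/-! ### The limit of the score statistic -/

lemma tendstoInMeasure_pi {Ω ι κ : Type*} {mΩ : MeasurableSpace Ω} {μ : Measure Ω}
    [IsFiniteMeasure μ] [Fintype κ] {E : κ → Type*} [∀ k, PseudoMetricSpace (E k)] {l : Filter ι}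
    {F : ι → Ω → ∀ k, E k} {g : Ω → ∀ k, E k}
    (hF : ∀ k, TendstoInMeasure μ (fun i ω => F i ω k) l fun ω => g ω k) :
    TendstoInMeasure μ F l g := by
  rw [tendstoInMeasure_iff_measureReal_dist]
  intro ε hε
  have h_sum := tendsto_finsetSum (univ : Finset κ) fun k _ =>
    tendstoInMeasure_iff_measureReal_dist.1 (hF k) ε hε
  rw [sum_const_zero] at h_sum
  refine squeeze_zero (fun i => measureReal_nonneg) (fun i => ?_) h_sum
  refine (measureReal_mono (fun ω hω => ?_) (measure_ne_top _ _)).trans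
    (measureReal_biUnion_finset_le univ fun k => {ω | ε ≤ dist (F i ω k) (g ω k)})
  contrapose! hω
  simp only [Set.mem_iUnion, Set.mem_ofPred_eq, not_exists, not_le] at hω
  exact not_le.2 ((dist_pi_lt_iff hε).2 fun k => hω k (mem_univ k))

lemma tendstoInMeasure_prodMk {Ω ι E E' : Type*} {mΩ : MeasurableSpace Ω} {μ : Measure Ω}
    [IsFiniteMeasure μ] [PseudoMetricSpace E] [PseudoMetricSpace E'] {l : Filter ι}
    {F : ι → Ω → E} {G : ι → Ω → E'} {g : Ω → E} {g' : Ω → E'} (hF : TendstoInMeasure μ F l g)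
    (hG : TendstoInMeasure μ G l g') :
    TendstoInMeasure μ (fun i ω => (F i ω, G i ω)) l fun ω => (g ω, g' ω) := by
  rw [tendstoInMeasure_iff_measureReal_dist] at *
  intro ε hε
  have h_add := (hF ε hε).add (hG ε hε)
  rw [add_zero] at h_add
  refine squeeze_zero (fun i => measureReal_nonneg) (fun i => ?_) h_add
  refine (measureReal_mono (fun ω hω => ?_)).trans (measureReal_union_le _ _)
  rwa [Set.mem_ofPred_eq, Prod.dist_eq, le_max_iff] at hω

/-- Slutsky's theorem for the map `(z, d, w) ↦ ∑ (z + d)² w` with `d → 0` and `w → 1`. -/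
lemma tendsto_integral_sum_add_sq_mul {Ω Ω' ι : Type*} {mΩ : MeasurableSpace Ω}
    {mΩ' : MeasurableSpace Ω'} {μ : Measure Ω} {ν : Measure Ω'} [IsProbabilityMeasure μ]
    [IsProbabilityMeasure ν] {l : Filter ι} [l.IsCountablyGenerated] {L : ℕ}
    {Z : ι → Ω → EuclideanSpace ℝ (Fin L)} {Z' : Ω' → EuclideanSpace ℝ (Fin L)}
    {D W : ι → Ω → Fin L → ℝ} (hZ : TendstoInDistribution Z l Z' (fun _ => μ) ν)
    (hD : TendstoInMeasure μ D l fun _ => 0) (hW : TendstoInMeasure μ W l fun _ => 1)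
    (hD_meas : ∀ i, Measurable (D i)) (hW_meas : ∀ i, Measurable (W i))
    (φ : BoundedContinuousFunction ℝ ℝ) :
    Tendsto (fun i => ∫ ω, φ (∑ a, (Z i ω a + D i ω a) ^ 2 * W i ω a) ∂μ) l
      (𝓝 (∫ ω, φ (∑ a, Z' ω a ^ 2) ∂ν)) := by
  have h_cont : Continuous fun p : EuclideanSpace ℝ (Fin L) × ((Fin L → ℝ) × (Fin L → ℝ)) =>
      ∑ a, (p.1 a + p.2.1 a) ^ 2 * p.2.2 a := by fun_prop
  have h_slutsky := hZ.continuous_comp_prodMk_of_tendstoInMeasure_const h_cont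
    (tendstoInMeasure_prodMk hD hW) fun i => ((hD_meas i).prodMk (hW_meas i)).aemeasurable
  have h_integral := ProbabilityMeasure.tendsto_iff_forall_integral_tendsto.1 h_slutsky.tendsto φ
  simp only [ProbabilityMeasure.coe_mk] at h_integral
  rw [integral_map h_slutsky.aemeasurable_limit φ.continuous.aestronglyMeasurable] at h_integral
  simpa only [integral_map (h_slutsky.forall_aemeasurable _) φ.continuous.aestronglyMeasurable,
    Pi.zero_apply, Pi.one_apply, add_zero, mul_one] using h_integral

section Limit

variable {Ω P : Type*} {mΩ : MeasurableSpace Ω} [PseudoMetricSpace P] {μ : Measure Ω}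
  {B : Set P} {δ₀ : P} {K c : ℝ} {N : ℕ → ℕ} {m : ℕ → ℕ → ℕ} {f u : ℕ → ℕ → P → ℕ → ℝ}
  {X : ℕ → ℕ → Ω → ℕ}

lemma eventually_half_sq_le_lagVar
    (hX : ∀ n, NullModel μ B δ₀ K c (N n) (m n) (f n) (u n) (X n)) (hc : 0 ≤ c)
    (hN : Tendsto N atTop atTop) (a : ℕ) :
    ∀ᶠ n in atTop, ∀ δ ∈ B, c ^ 2 / 2 ≤ lagVar (N n) (m n) (f n) (u n) a δ := by
  filter_upwards [hN.eventually_ge_atTop (2 * a + 2)] with n hn δ hδ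
  exact (hX n).half_sq_le_lagVar hc hn hδ

lemma tendsto_lagVar_div_lagVar
    (hX : ∀ n, NullModel μ B δ₀ K c (N n) (m n) (f n) (u n) (X n)) (hc : 0 < c) (hB : B ∈ 𝓝 δ₀)
    (hN : Tendsto N atTop atTop) (a : ℕ) {d : ℕ → P} (hd : Tendsto d atTop (𝓝 δ₀)) :
    Tendsto (fun n => lagVar (N n) (m n) (f n) (u n) a δ₀
      / lagVar (N n) (m n) (f n) (u n) a (d n)) atTop (𝓝 1) := by
  have h_bound : Tendsto (fun n => 4 * K ^ 2 * (K ^ 3 + K ^ 2) * dist δ₀ (d n) / (c ^ 2 / 2))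
      atTop (𝓝 0) := by
    simpa using (((tendsto_const_nhds (x := δ₀)).dist hd).const_mul
      (4 * K ^ 2 * (K ^ 3 + K ^ 2))).div_const (c ^ 2 / 2)
  rw [tendsto_iff_norm_sub_tendsto_zero]
  refine squeeze_zero' (.of_forall fun _ => norm_nonneg _) ?_ h_bound
  filter_upwards [eventually_half_sq_le_lagVar hX hc.le hN a, hd.eventually hB,
    hN.eventually_gt_atTop 0] with n h_lower h_mem hn
  have h_pos := (by positivity : 0 < c ^ 2 / 2).trans_le (h_lower _ h_mem)
  rw [div_sub_one h_pos.ne', norm_div, Real.norm_of_nonneg h_pos.le]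
  have h_lip := (hX n).abs_lagVar_sub_le (a := a) hn (mem_of_mem_nhds hB)
    (show d n ∈ B from h_mem)
  exact div_le_div₀ ((abs_nonneg _).trans h_lip) h_lip (by positivity) (h_lower _ h_mem)

variable [IsProbabilityMeasure μ]

lemma tendsto_charFun_lagCov_div_sqrt_lagVar
    (hX : ∀ n, NullModel μ B δ₀ K c (N n) (m n) (f n) (u n) (X n)) (hc : 0 < c) (hδ₀ : δ₀ ∈ B)
    (hN : Tendsto N atTop atTop) {L : ℕ} (θ : Fin L → ℝ) :
    Tendsto (fun n => ∫ ω, Complex.exp ((∑ a : Fin L, θ a * (lagCov (N n) (u n) (X n) (a + 1) δ₀ ω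
      / √(lagVar (N n) (m n) (f n) (u n) (a + 1) δ₀)) : ℝ) * Complex.I) ∂μ)
      atTop (𝓝 (Real.exp (-((∑ a, θ a ^ 2) / 2)) : ℝ)) := by
  set D := ‖θ‖ / √(c ^ 2 / 2)
  set k := K * (L * (D * K)) with hk
  have h_sqrt : Tendsto (fun n => √(N n : ℝ)) atTop atTop :=
    Real.tendsto_sqrt_atTop.comp (tendsto_natCast_atTop_atTop.comp hN)
  rw [tendsto_iff_norm_sub_tendsto_zero]
  refine squeeze_zero' (.of_forall fun _ => norm_nonneg _) ?_ (h_sqrt.const_div_atTop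
    (2 * k ^ 3 + Real.exp (k ^ 2 / 2) * (√(2 * L + 1) * k ^ 2)))
  filter_upwards [h_sqrt.eventually_ge_atTop k, hN.eventually_gt_atTop 0, eventually_all.2
    fun a : Fin L => eventually_half_sq_le_lagVar hX hc.le hN (a + 1)] with n hkn hn h_lower
  have h_lower : ∀ a : Fin L, c ^ 2 / 2 ≤ lagVar (N n) (m n) (f n) (u n) (a + 1) δ₀ := fun a =>
    h_lower a δ₀ hδ₀
  have h_pos : ∀ a : Fin L, 0 < lagVar (N n) (m n) (f n) (u n) (a + 1) δ₀ := fun a =>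
    (by positivity : 0 < c ^ 2 / 2).trans_le (h_lower a)
  have h_clt := (hX n).norm_integral_exp_lagCov_sub_le hδ₀ hn
    (θ := fun a => θ a / √(lagVar (N n) (m n) (f n) (u n) (a + 1) δ₀)) (D := D) (fun a => by
      rw [abs_div, abs_of_nonneg (Real.sqrt_nonneg _)]
      exact div_le_div₀ (norm_nonneg _) (norm_le_pi_norm θ a) (by positivity)
        (Real.sqrt_le_sqrt (h_lower a))) hk hkn
  have h_var : ∀ a : Fin L, (θ a / √(lagVar (N n) (m n) (f n) (u n) (a + 1) δ₀)) ^ 2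
      * lagVar (N n) (m n) (f n) (u n) (a + 1) δ₀ = θ a ^ 2 := fun a => by
    rw [div_pow, Real.sq_sqrt (h_pos a).le, div_mul_cancel₀ _ (h_pos a).ne']
  simpa only [h_var, div_mul_eq_mul_div, ← mul_div_assoc] using h_clt

lemma tendstoInDistribution_lagCov_div_sqrt_lagVar
    (hX : ∀ n, NullModel μ B δ₀ K c (N n) (m n) (f n) (u n) (X n)) (hc : 0 < c) (hδ₀ : δ₀ ∈ B)
    (hN : Tendsto N atTop atTop) (L : ℕ) :
    TendstoInDistribution
      (fun n ω => WithLp.toLp 2 fun a : Fin L =>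
        lagCov (N n) (u n) (X n) (a + 1) δ₀ ω / √(lagVar (N n) (m n) (f n) (u n) (a + 1) δ₀))
      atTop (WithLp.toLp 2) (fun _ => μ) (Measure.pi fun _ : Fin L => gaussianReal 0 1) := by
  have h_meas : ∀ n, Measurable fun ω => WithLp.toLp 2 fun a : Fin L =>
      lagCov (N n) (u n) (X n) (a + 1) δ₀ ω
        / √(lagVar (N n) (m n) (f n) (u n) (a + 1) δ₀) := fun n =>
    (WithLp.measurable_toLp 2 _).comp (measurable_pi_lambda _ fun a =>
      (measurable_lagCov ((hX n).boundedNoise hδ₀).measurable _).div_const _)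
  refine ⟨fun n => (h_meas n).aemeasurable, (WithLp.measurable_toLp 2 _).aemeasurable,
    ProbabilityMeasure.tendsto_of_tendsto_charFun fun θ => ?_⟩
  simp only [ProbabilityMeasure.coe_mk]
  rw [map_pi_eq_stdGaussian, charFun_stdGaussian]
  convert tendsto_charFun_lagCov_div_sqrt_lagVar hX hc hδ₀ hN θ using 2 with n
  · rw [charFun_apply, integral_map (h_meas n).aemeasurable (by fun_prop)]
    simp only [PiLp.inner_apply, RCLike.inner_apply, conj_trivial, Complex.ofReal_sum]
  · rw [← EuclideanSpace.real_norm_sq_eq, neg_div]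
    push_cast
    rfl

end Limit

section Estimator

variable {Ω ι : Type*} {mΩ : MeasurableSpace Ω} [Fintype ι] {μ : Measure Ω}
  {δ₀ : (ι → ℝ) × ℝ} {R K c : ℝ} {N : ℕ → ℕ} {m : ℕ → ℕ → ℕ}
  {f u : ℕ → ℕ → (ι → ℝ) × ℝ → ℕ → ℝ} {X : ℕ → ℕ → Ω → ℕ} {δhat : ℕ → Ω → (ι → ℝ) × ℝ}

/-- The factors `τ̂²` cancel as soon as the estimate `τ̂` is positive. -/
lemma ae_tendsto_mul_lagVar_div_mul_lagVar (hR : 0 < R) (hc : 0 < c) (hτ : 0 < δ₀.2)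
    (hX : ∀ n, NullModel μ (Metric.closedBall δ₀ R) δ₀ K c (N n) (m n) (f n) (u n) (X n))
    (hN : Tendsto N atTop atTop) (h_cons : ∀ᵐ ω ∂μ, Tendsto (δhat · ω) atTop (𝓝 δ₀)) (a : ℕ) :
    ∀ᵐ ω ∂μ, Tendsto (fun n => (δhat n ω).2 ^ 2 * lagVar (N n) (m n) (f n) (u n) a δ₀
      / ((δhat n ω).2 ^ 2 * lagVar (N n) (m n) (f n) (u n) a (δhat n ω))) atTop (𝓝 1) := by
  filter_upwards [h_cons] with ω hω
  refine (tendsto_lagVar_div_lagVar hX hc (Metric.closedBall_mem_nhds δ₀ hR) hN a hω).congr' ?_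
  filter_upwards [((continuous_snd.tendsto δ₀).comp hω).eventually_const_lt hτ] with n hn
  exact (mul_div_mul_left _ _ (pow_pos hn 2).ne').symm

variable [IsProbabilityMeasure μ]

lemma tendstoInMeasure_lagCov_sub (hR : 0 < R) (hK : 0 < K)
    (hX : ∀ n, NullModel μ (Metric.closedBall δ₀ R) δ₀ K c (N n) (m n) (f n) (u n) (X n))
    (hN : Tendsto N atTop atTop)
    (h_lik : ∀ n, ∀ᵐ ω ∂μ, ∑ t ∈ range (N n), Real.log (f n t δ₀ (X n t ω))
      ≤ ∑ t ∈ range (N n), Real.log (f n t (δhat n ω) (X n t ω)))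
    (h_cons : TendstoInMeasure μ δhat atTop fun _ => δ₀) {a : ℕ} (ha : 0 < a) :
    TendstoInMeasure μ (fun n ω => lagCov (N n) (u n) (X n) a (δhat n ω) ω
      - lagCov (N n) (u n) (X n) a δ₀ ω) atTop fun _ => 0 := by
  rw [tendstoInMeasure_iff_measureReal_norm]
  intro ε hε
  rw [Metric.tendsto_nhds]
  intro η hη
  obtain ⟨ρ, hρ, h_osc⟩ := NullModel.exists_measureReal_lagCov_oscillation_le (c := c) μ δ₀ hR hK
    (lt_min (half_pos hε) (half_pos hη))
  filter_upwards [(tendstoInMeasure_iff_measureReal_dist.1 h_cons ρ hρ).eventually_lt_const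
    (half_pos hη), hN.eventually_gt_atTop 0] with n h_far hn
  rw [Real.dist_eq, sub_zero, abs_of_nonneg measureReal_nonneg]
  refine ((ENNReal.toReal_mono (measure_ne_top _ _) (measure_mono_ae ?_)).trans
    (measureReal_union_le _ _)).trans_lt
    ((add_lt_add_of_le_of_lt ((h_osc (N n) a (m n) (f n) (u n) (X n) hn ha (hX n)).trans
      (min_le_right _ _)) h_far).trans_eq (add_halves η))
  refine (h_lik n).mono fun ω hω (h_large : ε ≤ ‖_ - (0 : ℝ)‖) => ?_
  rw [sub_zero, Real.norm_eq_abs] at h_large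
  refine or_iff_not_imp_right.2 fun h_near => ⟨δhat n ω, (not_le.1 h_near).le, hω, ?_⟩
  exact ((min_le_left _ _).trans_lt (half_lt_self hε)).trans_le h_large

lemma tendstoInMeasure_lagCov_sub_div (hR : 0 < R) (hK : 0 < K) (hc : 0 < c)
    (hX : ∀ n, NullModel μ (Metric.closedBall δ₀ R) δ₀ K c (N n) (m n) (f n) (u n) (X n))
    (hN : Tendsto N atTop atTop)
    (h_lik : ∀ n, ∀ᵐ ω ∂μ, ∑ t ∈ range (N n), Real.log (f n t δ₀ (X n t ω))
      ≤ ∑ t ∈ range (N n), Real.log (f n t (δhat n ω) (X n t ω)))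
    (h_cons : TendstoInMeasure μ δhat atTop fun _ => δ₀) {a : ℕ} (ha : 0 < a) :
    TendstoInMeasure μ (fun n ω => (lagCov (N n) (u n) (X n) a (δhat n ω) ω
      - lagCov (N n) (u n) (X n) a δ₀ ω) / √(lagVar (N n) (m n) (f n) (u n) a δ₀))
      atTop fun _ => 0 := by
  have h_diff := tendstoInMeasure_iff_measureReal_norm.1
    (tendstoInMeasure_lagCov_sub hR hK hX hN h_lik h_cons ha)
  rw [tendstoInMeasure_iff_measureReal_norm]
  intro ε hε
  refine squeeze_zero' (.of_forall fun _ => measureReal_nonneg) ?_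
    (h_diff (ε * √(c ^ 2 / 2)) (by positivity))
  filter_upwards [eventually_half_sq_le_lagVar hX hc.le hN a] with n h_lower
  refine measureReal_mono fun ω hω => ?_
  have h_sqrt := Real.sqrt_le_sqrt (h_lower δ₀ (Metric.mem_closedBall_self hR.le))
  rw [Set.mem_ofPred_eq, sub_zero, norm_div, Real.norm_of_nonneg (Real.sqrt_nonneg _),
    le_div_iff₀ ((by positivity : 0 < √(c ^ 2 / 2)).trans_le h_sqrt)] at hω
  rw [Set.mem_ofPred_eq, sub_zero]
  exact (mul_le_mul_of_nonneg_left h_sqrt hε.le).trans hω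

theorem tendsto_integral_scoreStatistic (hR : 0 < R) (hK : 0 < K) (hc : 0 < c) (hτ : 0 < δ₀.2)
    (hX : ∀ n, NullModel μ (Metric.closedBall δ₀ R) δ₀ K c (N n) (m n) (f n) (u n) (X n))
    (hN : Tendsto N atTop atTop) (hf : ∀ n t, ∀ y ≤ m n t, Measurable fun δ => f n t δ y)
    (hu : ∀ n t, ∀ y ≤ m n t, Measurable fun δ => u n t δ y) (hδ : ∀ n, Measurable (δhat n))
    (h_lik : ∀ n, ∀ᵐ ω ∂μ, ∑ t ∈ range (N n), Real.log (f n t δ₀ (X n t ω))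
      ≤ ∑ t ∈ range (N n), Real.log (f n t (δhat n ω) (X n t ω)))
    (h_cons : ∀ᵐ ω ∂μ, Tendsto (δhat · ω) atTop (𝓝 δ₀)) (L : ℕ)
    (φ : BoundedContinuousFunction ℝ ℝ) :
    Tendsto (fun n => ∫ ω, φ (∑ a : Fin L,
        ((δhat n ω).2 ^ 2 * lagCov (N n) (u n) (X n) (a + 1) (δhat n ω) ω ^ 2)
          / ((δhat n ω).2 ^ 2 * lagVar (N n) (m n) (f n) (u n) (a + 1) (δhat n ω))) ∂μ) atTop
      (𝓝 (∫ z : Fin L → ℝ, φ (∑ a, z a ^ 2) ∂(Measure.pi fun _ : Fin L => gaussianReal 0 1))) := by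
  have hδ₀ : δ₀ ∈ Metric.closedBall δ₀ R := Metric.mem_closedBall_self hR.le
  set V : ℕ → Fin L → ℝ := fun n a => lagVar (N n) (m n) (f n) (u n) (a + 1) δ₀
  set D : ℕ → Ω → Fin L → ℝ := fun n ω a => (lagCov (N n) (u n) (X n) (a + 1) (δhat n ω) ω
    - lagCov (N n) (u n) (X n) (a + 1) δ₀ ω) / √(V n a)
  set W : ℕ → Ω → Fin L → ℝ := fun n ω a => (δhat n ω).2 ^ 2 * V n a
    / ((δhat n ω).2 ^ 2 * lagVar (N n) (m n) (f n) (u n) (a + 1) (δhat n ω))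
  have hD_meas : ∀ n, Measurable (D n) := fun n => measurable_pi_lambda _ fun a =>
    ((measurable_lagCov (fun t => (hX n).measurable_score_comp (hu n t) (hδ n)) _).sub
      (measurable_lagCov ((hX n).boundedNoise hδ₀).measurable _)).div_const _
  have hW_meas : ∀ n, Measurable (W n) := fun n => measurable_pi_lambda _ fun a => by
    have h_sq : Measurable fun ω => (δhat n ω).2 ^ 2 := (measurable_snd.comp (hδ n)).pow_const 2
    exact (h_sq.mul_const _).div
      (h_sq.mul ((measurable_lagVar (hf n) (hu n) (a + 1)).comp (hδ n)))
  have hD_lim : TendstoInMeasure μ D atTop fun _ => 0 := tendstoInMeasure_pi fun a =>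
    tendstoInMeasure_lagCov_sub_div hR hK hc hX hN h_lik
      (tendstoInMeasure_of_tendsto_ae (fun n => (hδ n).aestronglyMeasurable) h_cons) a.1.succ_pos
  have hW_lim : TendstoInMeasure μ W atTop fun _ => 1 := tendstoInMeasure_pi fun a =>
    tendstoInMeasure_of_tendsto_ae (fun n => ((measurable_pi_apply a).comp
      (hW_meas n)).aestronglyMeasurable)
        (ae_tendsto_mul_lagVar_div_mul_lagVar hR hc hτ hX hN h_cons (a + 1))
  refine (tendsto_integral_sum_add_sq_mul (tendstoInDistribution_lagCov_div_sqrt_lagVar hX hc hδ₀ hN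
    L) hD_lim hW_lim hD_meas hW_meas φ).congr' ?_
  filter_upwards [eventually_all.2 fun a : Fin L =>
    eventually_half_sq_le_lagVar hX hc.le hN (a + 1)] with n h_lower
  refine integral_congr_ae (.of_forall fun ω => congrArg φ (sum_congr rfl fun a _ => ?_))
  have hV : 0 < V n a := (by positivity : 0 < c ^ 2 / 2).trans_le (h_lower a δ₀ hδ₀)
  simp only [D, W]
  rw [← add_div, add_sub_cancel, div_pow, Real.sq_sqrt hV.le]
  field_simp

end Estimator

/-! ### Consistency and padding -/

/-- Wald's argument for the consistency of a maximizer. -/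
lemma tendsto_of_forall_le_of_unique_max {P : Type*} [PseudoMetricSpace P] [T2Space P] {Θ : Set P}
    (hΘ : IsCompact Θ) {F : ℕ → P → ℝ} {G : P → ℝ} {δ₀ : P} (hδ₀ : δ₀ ∈ Θ)
    (h_lim : ∀ δ ∈ Θ, Tendsto (fun n => F n δ) atTop (𝓝 (G δ)))
    (h_equicont : ∀ ε > 0, ∃ η > 0, ∀ n, ∀ δ ∈ Θ, ∀ δ' ∈ Θ, dist δ δ' < η → |F n δ - F n δ'| ≤ ε)
    (h_unique : ∀ δ ∈ Θ, δ ≠ δ₀ → G δ < G δ₀) {d : ℕ → P} (hd : ∀ n, d n ∈ Θ)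
    (h_max : ∀ n, F n δ₀ ≤ F n (d n)) : Tendsto d atTop (𝓝 δ₀) := by
  refine hΘ.tendsto_nhds_of_unique_mapClusterPt (.of_forall hd) fun y hy h_cluster => ?_
  by_contra h_ne
  have h_lt := h_unique y hy h_ne
  obtain ⟨ε, h_sum_lt, hε⟩ : ∃ ε, G y + ε + ε + ε < G δ₀ ∧ 0 < ε :=
    ⟨(G δ₀ - G y) / 4, by linarith, by linarith⟩
  obtain ⟨η, hη, h_close⟩ := h_equicont ε hε
  obtain ⟨n, h_near, h_at_δ₀, h_at_y⟩ :=
    ((h_cluster.frequently (Metric.ball_mem_nhds y hη)).and_eventually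
      (((h_lim δ₀ hδ₀).eventually_const_lt (sub_lt_self _ hε)).and
        ((h_lim y hy).eventually_lt_const (lt_add_of_pos_right _ hε)))).exists
  have h_le := (abs_le.1 (h_close n (d n) (hd n) y hy h_near)).2
  linarith [h_max n]

lemma tendsto_of_forall_sum_log_margDens_le {ν : Measure ℝ} [IsProbabilityMeasure ν]
    (hν : Integrable (fun α => |α|) ν) {r M : ℕ} {C : ℝ} {x : ℕ → ℕ → Fin r → ℝ} {m y : ℕ → ℕ → ℕ}
    (hx : ∀ n, ∀ t ∈ Icc 1 n, ‖x n t‖ ≤ C) (hm : ∀ n, ∀ t ∈ Icc 1 n, 1 ≤ m n t ∧ m n t ≤ M)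
    (hy : ∀ n, ∀ t ∈ Icc 1 n, y n t ≤ m n t) {Θ : Set ((Fin r → ℝ) × ℝ)} (hΘ : IsCompact Θ)
    {δ₀ : (Fin r → ℝ) × ℝ} (hδ₀ : δ₀ ∈ Θ) {Q : (Fin r → ℝ) × ℝ → ℝ}
    (h_lim : ∀ δ ∈ Θ, Tendsto (fun n => (∑ t ∈ Icc 1 n,
      Real.log (margDens ν (m n t) (linPred (x n t) δ) (y n t))) / (n : ℝ)) atTop (𝓝 (Q δ)))
    (h_unique : ∀ δ ∈ Θ, δ ≠ δ₀ → Q δ < Q δ₀) {d : ℕ → (Fin r → ℝ) × ℝ} (hd : ∀ n, d n ∈ Θ)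
    (h_max : ∀ n, ∑ t ∈ Icc 1 n, Real.log (margDens ν (m n t) (linPred (x n t) δ₀) (y n t))
      ≤ ∑ t ∈ Icc 1 n, Real.log (margDens ν (m n t) (linPred (x n t) (d n)) (y n t))) :
    Tendsto d atTop (𝓝 δ₀) := by
  refine tendsto_of_forall_le_of_unique_max hΘ hδ₀ h_lim (fun ε hε => ?_) h_unique hd fun n =>
    div_le_div_of_nonneg_right (h_max n) (Nat.cast_nonneg n)
  obtain ⟨D, hD⟩ := hΘ.isBounded.exists_norm_le
  obtain ⟨η, hη, h_close⟩ := exists_forall_abs_log_margDens_sub_le hν M C D hε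
  refine ⟨η, hη, fun n δ hδ δ' hδ' h_dist => ?_⟩
  rw [← sub_div, ← sum_sub_distrib, abs_div, Nat.abs_cast]
  refine div_le_of_le_mul₀ (Nat.cast_nonneg n) hε.le ((abs_sum_le_sum_abs _ _).trans
    ((sum_le_card_nsmul _ _ ε fun t ht => ?_).trans_eq ?_))
  · exact h_close _ _ (hm n t ht).1 (hm n t ht).2 (hy n t ht) _ (hx n t ht) _ _ (hD δ hδ)
      (hD δ' hδ') h_dist
  · rw [Nat.card_Icc, Nat.add_sub_cancel, nsmul_eq_mul, mul_comm]

lemma RegularModel.zero_one_zero {P : Type*} [PseudoMetricSpace P] (B : Set P) {K : ℝ}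
    (hK : 0 ≤ K) : RegularModel B K 0 1 0 where
  density_pos := by simp
  sum_density := by simp
  sum_density_mul_score := by simp
  abs_score_le := by simpa using fun _ _ => hK
  abs_log_sub_le δ _ δ' _ y _ := by simpa using mul_nonneg hK dist_nonneg
  abs_score_sub_le δ _ δ' _ y _ := by simpa using mul_nonneg hK dist_nonneg

lemma lagSum_eq_sum_Icc {ξ ζ : ℕ → ℝ} {n : ℕ} (hξ : ξ 0 = 0) (h_eq : ∀ t ∈ Icc 1 n, ξ t = ζ t)
    (a : ℕ) : lagSum (n + 1) a ξ = ∑ t ∈ Icc (a + 1) n, ζ t * ζ (t - a) := by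
  rw [← sum_Icc_eq_lagSum hξ]
  refine sum_congr rfl fun t ht => ?_
  rw [mem_Icc] at ht
  rw [h_eq t (mem_Icc.2 (by lia)), h_eq (t - a) (mem_Icc.2 (by lia))]

lemma sum_log_piecewise {P : Type*} {n : ℕ} {f : ℕ → P → ℕ → ℝ} {y z : ℕ → ℕ}
    (h_eq : ∀ t ∈ Icc 1 n, z t = y t) (δ : P) :
    ∑ t ∈ range (n + 1), Real.log ((Icc 1 n).piecewise f 1 t δ (z t))
      = ∑ t ∈ Icc 1 n, Real.log (f t δ (y t)) := by
  have h_zero : Real.log ((Icc 1 n).piecewise f 1 0 δ (z 0)) = 0 := by simp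
  rw [range_eq_Ico, sum_eq_sum_Ico_succ_bot n.succ_pos, h_zero, zero_add]
  exact sum_congr rfl fun t ht => by rw [piecewise_eq_of_mem _ _ _ ht, h_eq t ht]

lemma measurable_piecewise_apply {P : Type*} [MeasurableSpace P] {n : ℕ} {m : ℕ → ℕ}
    {g g' : ℕ → P → ℕ → ℝ} (hg : ∀ t ∈ Icc 1 n, ∀ y ≤ m t, Measurable fun δ => g t δ y)
    (hg' : ∀ t y, Measurable fun δ => g' t δ y) (t y : ℕ) (hy : y ≤ (Icc 1 n).piecewise m 0 t) :
    Measurable fun δ => (Icc 1 n).piecewise g g' t δ y := by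
  by_cases ht : t ∈ Icc 1 n
  · rw [piecewise_eq_of_mem _ _ _ ht] at hy
    simpa only [piecewise_eq_of_mem _ _ _ ht] using hg t ht y hy
  · simpa only [piecewise_eq_of_notMem _ _ _ ht] using hg' t y

/-- Outside the observation times, the padded model has no trials. -/
lemma exists_nullModel_piecewise {Ω P : Type*} {mΩ : MeasurableSpace Ω} [PseudoMetricSpace P]
    {μ : Measure Ω} [IsProbabilityMeasure μ] {B : Set P} {δ₀ : P} {K c : ℝ} {n : ℕ} {m : ℕ → ℕ}
    {f u : ℕ → P → ℕ → ℝ} {Y : ℕ → Ω → ℕ} (hK : 0 ≤ K)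
    (h_reg : ∀ t ∈ Icc 1 n, RegularModel B K (m t) (f t) (u t))
    (h_var : ∀ t ∈ Icc 1 n, ∀ δ ∈ B, c ≤ scoreVar (m t) (f t δ) (u t δ))
    (hY : ∀ t ∈ Icc 1 n, Measurable (Y t))
    (h_law : ∀ k : ℕ → ℕ, (∀ t ∈ Icc 1 n, k t ≤ m t) →
      μ {ω | ∀ t ∈ Icc 1 n, Y t ω = k t} = ∏ t ∈ Icc 1 n, ENNReal.ofReal (f t δ₀ (k t))) :
    ∃ X, NullModel μ B δ₀ K c (n + 1) ((Icc 1 n).piecewise m 0) ((Icc 1 n).piecewise f 1)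
        ((Icc 1 n).piecewise u 0) X ∧ ∀ᵐ ω ∂μ, ∀ t ∈ Icc 1 n, X t ω = Y t ω := by
  have hm : ∀ t ∈ Icc 1 n, (Icc 1 n).piecewise m 0 t = m t := fun t =>
    piecewise_eq_of_mem _ _ _
  obtain ⟨X, hX, h_indep, h_le, h_ae, h_int⟩ := exists_iIndepFun_ae_eq (Icc 1 n)
    (m := (Icc 1 n).piecewise m 0) hY
    (fun t ht y hy => ((h_reg t ht).density_pos δ₀ y (hm t ht ▸ hy)).le)
    (fun t ht => hm t ht ▸ (h_reg t ht).sum_density δ₀)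
    fun k hk => h_law k fun t ht => hm t ht ▸ hk t ht
  have h_Ioo : ∀ t, t ∈ Set.Ioo 0 (n + 1) ↔ t ∈ Icc 1 n := fun t => by
    rw [Set.mem_Ioo, mem_Icc, Nat.lt_succ_iff, Nat.succ_le_iff]
  refine ⟨X, ⟨hX, h_indep, h_le, fun t => ?_, fun t φ => ?_, fun t ht δ y => ?_,
    fun t ht δ hδ => ?_⟩, h_ae⟩
  · by_cases ht : t ∈ Icc 1 n
    · simpa only [piecewise_eq_of_mem _ _ _ ht] using h_reg t ht
    · simpa only [piecewise_eq_of_notMem _ _ _ ht] using .zero_one_zero B hK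
  · by_cases ht : t ∈ Icc 1 n
    · simpa only [piecewise_eq_of_mem _ _ _ ht] using h_int t ht φ
    · have hX_zero : ∀ ω, X t ω = 0 := fun ω => by
        simpa only [piecewise_eq_of_notMem _ _ _ ht, Pi.zero_apply, Nat.le_zero] using h_le t ω
      simp [piecewise_eq_of_notMem _ _ _ ht, hX_zero]
  · rw [piecewise_eq_of_notMem _ _ _ fun h => ht ((h_Ioo t).2 h)]
    rfl
  · simpa only [piecewise_eq_of_mem _ _ _ ((h_Ioo t).1 ht)] using h_var t ((h_Ioo t).1 ht) δ hδ

/-- The statistic `Q̂_ψ(L)` of the observations `y 1, …, y n`, with the parameter estimate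
`δ = (β, τ)`. -/
def scoreStatistic {E : Type*} (n L : ℕ) (m : ℕ → ℕ) (f u : ℕ → E × ℝ → ℕ → ℝ) (y : ℕ → ℕ)
    (δ : E × ℝ) : ℝ :=
  ∑ a ∈ Icc 1 L, (δ.2 * ∑ t ∈ Icc (a + 1) n, u t δ (y t) * u (t - a) δ (y (t - a))) ^ 2
    / (δ.2 ^ 2 * ∑ t ∈ Icc (a + 1) n, scoreVar (m t) (f t δ) (u t δ)
      * scoreVar (m (t - a)) (f (t - a) δ) (u (t - a) δ))

lemma scoreStatistic_eq_sum_lagCov {Ω E : Type*} {n : ℕ} {m : ℕ → ℕ} {f u : ℕ → E × ℝ → ℕ → ℝ}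
    {X : ℕ → Ω → ℕ} {y : ℕ → ℕ} {ω : Ω} (h_eq : ∀ t ∈ Icc 1 n, X t ω = y t) (L : ℕ) (δ : E × ℝ) :
    scoreStatistic n L m f u y δ = ∑ a : Fin L,
      (δ.2 ^ 2 * lagCov (n + 1) ((Icc 1 n).piecewise u 0) X (a + 1) δ ω ^ 2)
        / (δ.2 ^ 2 * lagVar (n + 1) ((Icc 1 n).piecewise m 0) ((Icc 1 n).piecewise f 1)
          ((Icc 1 n).piecewise u 0) (a + 1) δ) := by
  rw [scoreStatistic, ← Ico_add_one_right_eq_Icc, sum_Ico_eq_sum_range, Nat.add_sub_cancel,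
    ← Fin.sum_univ_eq_sum_range]
  refine sum_congr rfl fun a _ => ?_
  rw [lagCov, lagVar, add_comm 1 (a : ℕ),
    lagSum_eq_sum_Icc (n := n) (ζ := fun t => u t δ (y t)) (by simp) fun t ht => by
      rw [piecewise_eq_of_mem _ _ _ ht, h_eq t ht],
    lagSum_eq_sum_Icc (n := n) (ζ := fun t => scoreVar (m t) (f t δ) (u t δ))
      (by simp [scoreVar]) fun t ht => by simp only [piecewise_eq_of_mem _ _ _ ht],
    mul_pow, mul_pow, inv_pow, Real.sq_sqrt (Nat.cast_nonneg _), mul_left_comm,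
    mul_left_comm (δ.2 ^ 2) _ (∑ t ∈ Icc (a.1 + 1 + 1) n, _),
    mul_div_mul_left (c := ((n + 1 : ℕ) : ℝ)⁻¹) _ _ (by positivity)]

theorem tendsto_integral_scoreStatistic_of_measure_eq_prod {Ω ι : Type*} {mΩ : MeasurableSpace Ω}
    [Fintype ι] {μ : Measure Ω} [IsProbabilityMeasure μ] {δ₀ : (ι → ℝ) × ℝ} {R K c : ℝ}
    {m : ℕ → ℕ → ℕ} {f u : ℕ → ℕ → (ι → ℝ) × ℝ → ℕ → ℝ} {Y : ℕ → ℕ → Ω → ℕ}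
    {δhat : ℕ → Ω → (ι → ℝ) × ℝ} (hR : 0 < R) (hK : 0 < K) (hc : 0 < c) (hτ : 0 < δ₀.2)
    (h_reg : ∀ n, ∀ t ∈ Icc 1 n, RegularModel (Metric.closedBall δ₀ R) K (m n t) (f n t) (u n t))
    (h_var : ∀ n, ∀ t ∈ Icc 1 n, ∀ δ ∈ Metric.closedBall δ₀ R,
      c ≤ scoreVar (m n t) (f n t δ) (u n t δ))
    (hY : ∀ n, ∀ t ∈ Icc 1 n, Measurable (Y n t))
    (h_law : ∀ n, ∀ k : ℕ → ℕ, (∀ t ∈ Icc 1 n, k t ≤ m n t) →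
      μ {ω | ∀ t ∈ Icc 1 n, Y n t ω = k t} = ∏ t ∈ Icc 1 n, ENNReal.ofReal (f n t δ₀ (k t)))
    (hf : ∀ n, ∀ t ∈ Icc 1 n, ∀ y ≤ m n t, Measurable fun δ => f n t δ y)
    (hu : ∀ n, ∀ t ∈ Icc 1 n, ∀ y ≤ m n t, Measurable fun δ => u n t δ y)
    (hδ : ∀ n, Measurable (δhat n))
    (h_lik : ∀ n, ∀ᵐ ω ∂μ, ∑ t ∈ Icc 1 n, Real.log (f n t δ₀ (Y n t ω))
      ≤ ∑ t ∈ Icc 1 n, Real.log (f n t (δhat n ω) (Y n t ω)))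
    (h_cons : ∀ᵐ ω ∂μ, Tendsto (δhat · ω) atTop (𝓝 δ₀)) (L : ℕ)
    (φ : BoundedContinuousFunction ℝ ℝ) :
    Tendsto (fun n => ∫ ω, φ (scoreStatistic n L (m n) (f n) (u n) (Y n · ω) (δhat n ω)) ∂μ) atTop
      (𝓝 (∫ z : Fin L → ℝ, φ (∑ a, z a ^ 2) ∂(Measure.pi fun _ : Fin L => gaussianReal 0 1))) := by
  choose X hX hXY using fun n =>
    exists_nullModel_piecewise hK.le (h_reg n) (h_var n) (hY n) (h_law n)
  have h_lik' : ∀ n, ∀ᵐ ω ∂μ,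
      ∑ t ∈ range (n + 1), Real.log ((Icc 1 n).piecewise (f n) 1 t δ₀ (X n t ω))
        ≤ ∑ t ∈ range (n + 1), Real.log ((Icc 1 n).piecewise (f n) 1 t (δhat n ω) (X n t ω)) :=
    fun n => by
      filter_upwards [h_lik n, hXY n] with ω hω h_eq
      rwa [sum_log_piecewise h_eq, sum_log_piecewise h_eq]
  refine (tendsto_integral_scoreStatistic hR hK hc hτ hX (tendsto_add_atTop_nat 1)
    (fun n => measurable_piecewise_apply (hf n) fun _ _ => measurable_const)
    (fun n => measurable_piecewise_apply (hu n) fun _ _ => measurable_const) hδ h_lik' h_cons L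
    φ).congr fun n => integral_congr_ae ?_
  filter_upwards [hXY n] with ω h_eq
  rw [scoreStatistic_eq_sum_lagCov h_eq]

lemma measurable_margDens_linPred {ν : Measure ℝ} [IsProbabilityMeasure ν]
    (hν : Integrable (fun α => |α|) ν) {r m y : ℕ} (hy : y ≤ m) (x : Fin r → ℝ) :
    Measurable fun δ => margDens ν m (linPred x δ) y :=
  ((continuous_margDens hν hy).comp (continuous_linPred x)).measurable

lemma measurable_margRes_linPred {ν : Measure ℝ} [IsProbabilityMeasure ν]
    (hν : Integrable (fun α => |α|) ν) {r m y : ℕ} (hy : y ≤ m) (x : Fin r → ℝ) :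
    Measurable fun δ => margRes ν m (linPred x δ) y :=
  ((continuous_margRes hν hy).comp (continuous_linPred x)).measurable

theorem statement1_general {Ω : Type*} {mΩ : MeasurableSpace Ω} {μ : Measure Ω}
    [IsProbabilityMeasure μ] {ν : Measure ℝ} [IsProbabilityMeasure ν]
    (hν : Integrable (fun α => |α|) ν) {r M : ℕ} {C : ℝ} {x : ℕ → ℕ → Fin r → ℝ} {m : ℕ → ℕ → ℕ}
    (hx : ∀ n, ∀ t ∈ Icc 1 n, ‖x n t‖ ≤ C) (hm : ∀ n, ∀ t ∈ Icc 1 n, 1 ≤ m n t ∧ m n t ≤ M)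
    {β₀ : Fin r → ℝ} {τ₀ : ℝ} (hτ₀ : 0 < τ₀) {Y : ℕ → ℕ → Ω → ℕ}
    (hY : ∀ n, ∀ t ∈ Icc 1 n, Measurable (Y n t))
    (h_law : ∀ n, ∀ k : ℕ → ℕ, (∀ t ∈ Icc 1 n, k t ≤ m n t) →
      μ {ω | ∀ t ∈ Icc 1 n, Y n t ω = k t}
        = ∏ t ∈ Icc 1 n, ENNReal.ofReal (margDens ν (m n t) (linPred (x n t) (β₀, τ₀)) (k t)))
    {S Θ : Set ((Fin r → ℝ) × ℝ)} (hS : IsCompact S) (hS_mem : (β₀, τ₀) ∈ S)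
    (hΘ : Θ = {δ ∈ S | 0 ≤ δ.2})
    {δhat : ℕ → Ω → (Fin r → ℝ) × ℝ} (hδ_meas : ∀ n, Measurable (δhat n))
    (hδ_mem : ∀ n ω, δhat n ω ∈ Θ)
    (hδ_max : ∀ n ω, ∀ δ ∈ Θ,
      ∑ t ∈ Icc 1 n, Real.log (margDens ν (m n t) (linPred (x n t) δ) (Y n t ω))
        ≤ ∑ t ∈ Icc 1 n, Real.log (margDens ν (m n t) (linPred (x n t) (δhat n ω)) (Y n t ω)))
    {Q : (Fin r → ℝ) × ℝ → ℝ}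
    (hQ : ∀ᵐ ω ∂μ, ∀ δ ∈ Θ, Tendsto (fun n => (∑ t ∈ Icc 1 n,
      Real.log (margDens ν (m n t) (linPred (x n t) δ) (Y n t ω))) / (n : ℝ)) atTop (𝓝 (Q δ)))
    (hQ_unique : ∀ δ ∈ Θ, δ ≠ (β₀, τ₀) → Q δ < Q (β₀, τ₀)) (L : ℕ)
    (φ : BoundedContinuousFunction ℝ ℝ) :
    Tendsto (fun n => ∫ ω, φ (scoreStatistic n L (m n)
        (fun t δ => margDens ν (m n t) (linPred (x n t) δ))
        (fun t δ => margRes ν (m n t) (linPred (x n t) δ)) (Y n · ω) (δhat n ω)) ∂μ) atTop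
      (𝓝 (∫ z : Fin L → ℝ, φ (∑ a, z a ^ 2) ∂(Measure.pi fun _ : Fin L => gaussianReal 0 1))) := by
  obtain ⟨R, hR, K, hK, c, hc, h_reg⟩ := exists_regularModel_linPred hν M C β₀ hτ₀
  have hδ₀ : (β₀, τ₀) ∈ Θ := hΘ ▸ ⟨hS_mem, hτ₀.le⟩
  have hΘ_compact : IsCompact Θ :=
    hΘ ▸ hS.inter_right (isClosed_le continuous_const continuous_snd)
  have h_reg_obs := fun n t ht => h_reg (m n t) (hm n t ht).1 (hm n t ht).2 (x n t) (hx n t ht)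
  have hY_le : ∀ᵐ ω ∂μ, ∀ n, ∀ t ∈ Icc 1 n, Y n t ω ≤ m n t := ae_all_iff.2 fun n =>
    ae_le_of_measure_eq_prod (p := fun t => margDens ν (m n t) (linPred (x n t) (β₀, τ₀))) (Icc 1 n)
      (hY n) (fun t _ y hy => (margDens_pos hy _).le) (fun t _ => sum_margDens _ _) (h_law n)
  have h_cons : ∀ᵐ ω ∂μ, Tendsto (δhat · ω) atTop (𝓝 (β₀, τ₀)) := by
    filter_upwards [hY_le, hQ] with ω h_le h_lim
    exact tendsto_of_forall_sum_log_margDens_le hν hx hm h_le hΘ_compact hδ₀ h_lim hQ_unique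
      (hδ_mem · ω) fun n => hδ_max n ω _ hδ₀
  exact tendsto_integral_scoreStatistic_of_measure_eq_prod
    (f := fun n t δ => margDens ν (m n t) (linPred (x n t) δ))
    (u := fun n t δ => margRes ν (m n t) (linPred (x n t) δ)) hR hK hc hτ₀
    (fun n t ht => (h_reg_obs n t ht).1) (fun n t ht => (h_reg_obs n t ht).2) hY h_law
    (fun n t _ y hy => measurable_margDens_linPred hν hy _)
    (fun n t _ y hy => measurable_margRes_linPred hν hy _) hδ_meas
    (fun n => .of_forall fun ω => hδ_max n ω _ hδ₀) h_cons L φ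

lemma measure_eq_prod_margDens {Ω : Type*} {mΩ : MeasurableSpace Ω} {μ : Measure Ω} {ν : Measure ℝ}
    [IsProbabilityMeasure ν] {r n : ℕ} {x : ℕ → Fin r → ℝ} {m k : ℕ → ℕ} {Y : ℕ → Ω → ℕ}
    (δ : (Fin r → ℝ) × ℝ) (hk : ∀ t ∈ Icc 1 n, k t ≤ m t)
    (h_law : μ {ω | ∀ t ∈ Icc 1 n, Y t ω = k t} = ∫⁻ α, ENNReal.ofReal (∏ i : Fin n,
      binDens (m (i + 1)) (k (i + 1)) (x (i + 1) ⬝ᵥ δ.1 + √δ.2 * α i)) ∂(Measure.pi fun _ => ν)) :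
    μ {ω | ∀ t ∈ Icc 1 n, Y t ω = k t}
      = ∏ t ∈ Icc 1 n, ENNReal.ofReal (margDens ν (m t) (linPred (x t) δ) (k t)) := by
  have hk' : ∀ i : Fin n, k (i + 1) ≤ m (i + 1) := fun i =>
    hk _ (mem_Icc.2 ⟨Nat.le_add_left _ _, i.isLt⟩)
  rw [h_law]
  refine (lintegral_prod_binDens ν hk' fun i => linPred (x (i + 1)) δ).trans ?_
  rw [Fin.prod_univ_eq_prod_range (fun t => ENNReal.ofReal (margDens ν (m (t + 1))
      (linPred (x (t + 1)) δ) (k (t + 1)))) n, range_eq_Ico,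
    prod_Ico_add' (fun t => ENNReal.ofReal (margDens ν (m t) (linPred (x t) δ) (k t))), zero_add,
    Ico_add_one_right_eq_Icc]

/-- Under the null hypothesis that the latent process exists (`τ₀ > 0`) but is
serially independent, the score statistic for serial dependence
`Q̂_ψ(L) = Σ_{a=1}^L S_{ψ_a}(δ̂⁽¹⁾)² / Ω̂_{aa}` is asymptotically `χ²(L)`: it converges in
distribution to the law of `Z₁² + ⋯ + Z_L²` for independent standard normals.  Here the latent
variables `α̃_{n1}, ..., α̃_{nn}` are i.i.d. standard normal, and given them the observations are
conditionally independent with `Y_{nt} | W_{nt} ~ Binomial(m_t, ḃ(W_{nt}))`,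
`W_{nt} = x_{nt}ᵀβ₀ + √τ₀ α̃_{nt}`; this joint structure is encoded by the displayed
product-density formula for the joint law of `(Y_{n1}, ..., Y_{nn}, α̃_{n1}, ..., α̃_{nn})`.
Regressors satisfy Conditions 2(a) and 3, trials satisfy Condition 1, `δ̂⁽¹⁾_n` is a measurable
maximizer over the compact set `Θ` of the marginal log-likelihood `l₁`, and Condition 4 holds. -/
theorem statement1 {Ω : Type*} [MeasurableSpace Ω] (μ : Measure Ω) [IsProbabilityMeasure μ]
    (r : ℕ) (hr : 0 < r)
    -- Condition 2(a): x_{nt} = h(t/n), h piecewise continuous on [0,1]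
    (h : ℝ → Fin r → ℝ) (E : Finset ℝ)
    (hcont : ContinuousOn h (Set.Icc (0 : ℝ) 1 \ (E : Set ℝ)))
    (hbdd : ∃ C : ℝ, ∀ u ∈ Set.Icc (0 : ℝ) 1, ‖h u‖ ≤ C)
    (x : ℕ → ℕ → Fin r → ℝ)
    (hx : ∀ n t, x n t = h ((t : ℝ) / (n : ℝ)))
    -- Condition 3: full rank of the regressor span for large n
    (hrank : ∀ᶠ n in atTop,
      Submodule.span ℝ {v : Fin r → ℝ | ∃ t ∈ Finset.Icc 1 n, v = x n t} = ⊤)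
    -- Condition 1: numbers of binomial trials
    (M : ℕ) (hM : 1 ≤ M) (m : ℕ → ℕ) (hm : ∀ t, 1 ≤ m t ∧ m t ≤ M)
    (κ : ℕ → ℝ) (hκM : 0 < κ M)
    (hfreq : ∀ j ∈ Finset.Icc 1 M, Tendsto
      (fun n => (((Finset.Icc 1 n).filter fun t => m t = j).card : ℝ) / (n : ℝ))
      atTop (𝓝 (κ j)))
    -- true parameters, with a latent process present: τ₀ > 0
    (β₀ : Fin r → ℝ) (τ₀ : ℝ) (hτ₀ : 0 < τ₀)
    -- latent variables and observations
    (A : ℕ → ℕ → Ω → ℝ) (hAmeas : ∀ n t, Measurable (A n t))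
    (Y : ℕ → ℕ → Ω → ℕ) (hYmeas : ∀ n t, Measurable (Y n t))
    -- the model: α̃ i.i.d. N(0,1) and, given α̃, the Y's independent Binomial(m_t, ḃ(W_t))
    (hmodel : ∀ n : ℕ, ∀ k : ℕ → ℕ, (∀ t ∈ Finset.Icc 1 n, k t ≤ m t) →
      ∀ Sset : Set (Fin n → ℝ), MeasurableSet Sset →
        μ {ω | (∀ t ∈ Finset.Icc 1 n, Y n t ω = k t)
            ∧ (fun i : Fin n => A n ((i : ℕ) + 1) ω) ∈ Sset}
          = ∫⁻ α in Sset, ENNReal.ofReal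
              (∏ i : Fin n, binDens (m ((i : ℕ) + 1)) (k ((i : ℕ) + 1))
                (x n ((i : ℕ) + 1) ⬝ᵥ β₀ + Real.sqrt τ₀ * α i))
              ∂(Measure.pi fun _ : Fin n => gaussianReal 0 1))
    -- the marginal density f(y_t; δ) and the residual u_t(δ), δ = (β, τ)
    (fm : ℕ → ℕ → (Fin r → ℝ) × ℝ → ℕ → ℝ)
    (hfm : ∀ n t δ y, fm n t δ y =
      ∫ α : ℝ, binDens (m t) y (x n t ⬝ᵥ δ.1 + Real.sqrt δ.2 * α) * stdNormalPDF α)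
    (u : ℕ → ℕ → (Fin r → ℝ) × ℝ → ℕ → ℝ)
    (hu : ∀ n t δ y, u n t δ y = (y : ℝ) - (fm n t δ y)⁻¹ *
      ∫ α : ℝ, (m t : ℝ) * bdot (x n t ⬝ᵥ δ.1 + Real.sqrt δ.2 * α)
        * binDens (m t) y (x n t ⬝ᵥ δ.1 + Real.sqrt δ.2 * α) * stdNormalPDF α)
    -- the marginal log-likelihood l₁(δ)
    (l1 : ℕ → (Fin r → ℝ) × ℝ → Ω → ℝ)
    (hl1 : ∀ n δ ω, l1 n δ ω = ∑ t ∈ Finset.Icc 1 n, Real.log (fm n t δ (Y n t ω)))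
    -- the compact parameter space Θ
    (d₁ d₂ : ℝ) (hd₁ : 0 ≤ d₁) (hd₂ : 0 ≤ d₂)
    (Θ : Set ((Fin r → ℝ) × ℝ))
    (hΘ : Θ = {δ : (Fin r → ℝ) × ℝ | ‖δ.1 - β₀‖ ≤ d₁ ∧ 0 ≤ δ.2 ∧ |δ.2 - τ₀| ≤ d₂})
    -- the marginal (GLMM) estimator δ̂⁽¹⁾: a measurable maximizer of l₁ over Θ
    (δhat : ℕ → Ω → (Fin r → ℝ) × ℝ)
    (hδhatMeas : ∀ n, Measurable (δhat n))
    (hδhatMem : ∀ n ω, δhat n ω ∈ Θ)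
    (hδhatMax : ∀ n ω, ∀ δ ∈ Θ, l1 n δ ω ≤ l1 n (δhat n ω) ω)
    -- Condition 4: n⁻¹ l₁(δ) → Q(δ) on Θ, with a unique maximum at δ₀ = (β₀, τ₀)
    (Qlim : (Fin r → ℝ) × ℝ → ℝ)
    (hQlim : ∀ᵐ ω ∂μ, ∀ δ ∈ Θ, Tendsto (fun n => l1 n δ ω / (n : ℝ)) atTop (𝓝 (Qlim δ)))
    (hQuniq : ∀ δ ∈ Θ, δ ≠ (β₀, τ₀) → Qlim δ < Qlim (β₀, τ₀))
    -- the lag-a scores S_{ψ_a}(δ), their estimated variances Ω̂_{aa}, and the statistic Q̂_ψ(L)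
    (L : ℕ) (hL : 1 ≤ L)
    (Sψ : ℕ → ℕ → (Fin r → ℝ) × ℝ → Ω → ℝ)
    (hSψ : ∀ n a δ ω, Sψ n a δ ω = δ.2 * ∑ t ∈ Finset.Icc (a + 1) n,
      u n t δ (Y n t ω) * u n (t - a) δ (Y n (t - a) ω))
    (EU2 : ℕ → ℕ → Ω → ℝ)
    (hEU2 : ∀ n t ω, EU2 n t ω = ∑ y ∈ Finset.range (m t + 1),
      fm n t (δhat n ω) y * (u n t (δhat n ω) y) ^ 2)
    (Ωhat : ℕ → ℕ → Ω → ℝ)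
    (hΩhat : ∀ n a ω, Ωhat n a ω = ((δhat n ω).2) ^ 2 *
      ∑ t ∈ Finset.Icc (a + 1) n, EU2 n t ω * EU2 n (t - a) ω)
    (Qψ : ℕ → Ω → ℝ)
    (hQψ : ∀ n ω, Qψ n ω =
      ∑ a ∈ Finset.Icc 1 L, (Sψ n a (δhat n ω) ω) ^ 2 / Ωhat n a ω) :
    -- conclusion: Q̂_ψ(L) converges in distribution to χ²(L),
    -- the law of Z₁² + ⋯ + Z_L² for independent standard normals
    ∀ f : BoundedContinuousFunction ℝ ℝ,
      Tendsto (fun n => ∫ ω, f (Qψ n ω) ∂μ) atTop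
        (𝓝 (∫ z : Fin L → ℝ, f (∑ a, (z a) ^ 2)
          ∂(Measure.pi fun _ : Fin L => gaussianReal 0 1))) := by
  obtain ⟨C, hC⟩ := hbdd
  have hxC : ∀ n, ∀ t ∈ Icc 1 n, ‖x n t‖ ≤ C := fun n t ht => by
    have htn : (t : ℝ) ≤ n := Nat.cast_le.2 (mem_Icc.1 ht).2
    exact hx n t ▸ hC _ ⟨by positivity, div_le_one_of_le₀ htn n.cast_nonneg⟩
  obtain rfl : fm = fun n t δ => margDens (gaussianReal 0 1) (m t) (linPred (x n t) δ) := by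
    funext n t δ y
    exact (hfm n t δ y).trans (integral_mul_stdNormalPDF _)
  obtain rfl : u = fun n t δ => margRes (gaussianReal 0 1) (m t) (linPred (x n t) δ) := by
    funext n t δ y
    rw [hu, integral_mul_stdNormalPDF]
    rfl
  obtain rfl : l1 = _ := funext₃ hl1
  have h_law := fun n k hk => measure_eq_prod_margDens (β₀, τ₀) hk
    (by simpa using hmodel n k hk Set.univ .univ)
  have h_limit := statement1_general (S := Metric.closedBall β₀ d₁ ×ˢ Metric.closedBall τ₀ d₂)
    ((memLp_id_gaussianReal 1).integrable le_rfl).abs hxC (fun _ t _ => hm t) hτ₀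
    (fun n t _ => hYmeas n t) h_law
    ((isCompact_closedBall _ _).prod (isCompact_closedBall _ _))
    ⟨Metric.mem_closedBall_self hd₁, Metric.mem_closedBall_self hd₂⟩
    (hΘ.trans (by ext; simp [dist_eq_norm]; tauto)) hδhatMeas hδhatMem hδhatMax hQlim hQuniq L
  simpa only [hQψ, hSψ, hΩhat, hEU2, scoreStatistic, scoreVar] using h_limit

end
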